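/- If t > 1 and A ⊆ ℝ³ is H^t-measurable with 0 < H^t(A) < ∞, then there is a Borel set E ⊆ I with dim E ≤ (3−t)/2, such that for every H^t-measurable subset B ⊆ A with H^t(B) > 0 and every θ ∈ I ∖ E, one has H¹(ρ_θ(B)) > 0 (the same exceptional set E works simultaneously for all such B). -/

import Mathlib

open MeasureTheory Metric Set
open scoped ENNReal RealInnerProductSpace

noncomputable section

abbrev E3 : Type := EuclideanSpace ℝ (Fin 3)

/-- Orthogonal projection onto the line spanned by `γ θ`:  `ρ_θ x = ⟨x, γ θ⟩ γ θ`. -/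
def lineProj (γ : ℝ → E3) (θ : ℝ) (x : E3) : E3 := ⟪x, γ θ⟫ • γ θ

/-! ### Trigonometric polynomials on `ℝ³` -/

/-- The plane wave `x ↦ exp (2πi ⟨ω, x⟩)`. -/
def wave (ω x : E3) : ℂ := (Real.fourierChar ⟪ω, x⟫ : ℂ)

lemma continuous_wave (ω : E3) : Continuous (wave ω) := by
  unfold wave
  have := Real.continuous_fourierChar
  fun_prop

lemma norm_wave (ω x : E3) : ‖wave ω x‖ = 1 := Circle.norm_coe _

lemma wave_add (ω η : E3) : wave (ω + η) = wave ω * wave η := by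
  ext x
  simp [wave, inner_add_left, AddChar.map_add_eq_mul]

lemma wave_mul_conj (ω η x : E3) : wave ω x * starRingEnd ℂ (wave η x) = wave (ω - η) x := by
  simp [wave, inner_sub_left, AddChar.map_sub_eq_div, ← Circle.coe_inv_eq_conj, div_eq_mul_inv]

/-- Trigonometric polynomials on `ℝ³` with frequencies in `S`. -/
def trigPoly (S : Set E3) : Submodule ℂ (E3 → ℂ) := Submodule.span ℂ (wave '' S)

lemma trigPoly_mono {S T : Set E3} (h : S ⊆ T) : trigPoly S ≤ trigPoly T :=
  Submodule.span_mono (image_mono h)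

lemma continuous_of_mem_trigPoly {S : Set E3} {f : E3 → ℂ} (hf : f ∈ trigPoly S) :
    Continuous f := by
  induction hf using Submodule.span_induction with
  | mem f hf => obtain ⟨ω, -, rfl⟩ := hf; exact continuous_wave ω
  | zero => exact continuous_zero
  | add f g _ _ hf hg => exact hf.add hg
  | smul c f _ hf => exact hf.const_smul c

lemma exists_bound_of_mem_trigPoly {S : Set E3} {f : E3 → ℂ} (hf : f ∈ trigPoly S) :
    ∃ C, ∀ x, ‖f x‖ ≤ C := by
  induction hf using Submodule.span_induction with
  | mem f hf => obtain ⟨ω, -, rfl⟩ := hf; exact ⟨1, fun x ↦ (norm_wave ω x).le⟩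
  | zero => exact ⟨0, by simp⟩
  | add f g _ _ hf hg =>
    obtain ⟨C, hC⟩ := hf
    obtain ⟨D, hD⟩ := hg
    exact ⟨C + D, fun x ↦ norm_add_le_of_le (hC x) (hD x)⟩
  | smul c f _ hf =>
    obtain ⟨C, hC⟩ := hf
    refine ⟨‖c‖ * C, fun x ↦ ?_⟩
    simpa using mul_le_mul_of_nonneg_left (hC x) (norm_nonneg c)

lemma mul_mem_trigPoly {S T : Set E3} {f g : E3 → ℂ} (hf : f ∈ trigPoly S)
    (hg : g ∈ trigPoly T) : f * g ∈ trigPoly (image2 (· + ·) S T) := by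
  have h := Submodule.mul_mem_mul hf hg
  rw [trigPoly, trigPoly, Submodule.span_mul_span] at h
  refine Submodule.span_mono ?_ h
  rintro _ ⟨_, ⟨ω, hω, rfl⟩, _, ⟨η, hη, rfl⟩, rfl⟩
  exact ⟨ω + η, ⟨ω, hω, η, hη, rfl⟩, wave_add ω η⟩

/-- A measure whose Fourier transform vanishes outside the ball of radius `r`. -/
def BandLimited (m : Measure E3) (r : ℝ) : Prop :=
  ∀ ω : E3, r ≤ ‖ω‖ → ∫ x, wave ω x ∂m = 0

section AlmostOrthogonality

variable {m : Measure E3} [IsFiniteMeasure m]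

lemma integrable_of_continuous_of_bound {E : Type*} [NormedAddCommGroup E]
    [SecondCountableTopology E] {f : E3 → E} (hf : Continuous f) {C : ℝ} (hC : ∀ x, ‖f x‖ ≤ C) :
    Integrable f m :=
  Integrable.of_bound hf.aestronglyMeasurable C (Filter.Eventually.of_forall hC)

lemma integrable_mul_conj {S T : Set E3} {f g : E3 → ℂ} (hf : f ∈ trigPoly S)
    (hg : g ∈ trigPoly T) : Integrable (fun x ↦ f x * starRingEnd ℂ (g x)) m := by
  obtain ⟨C, hC⟩ := exists_bound_of_mem_trigPoly hf
  obtain ⟨D, hD⟩ := exists_bound_of_mem_trigPoly hg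
  have h1 := continuous_of_mem_trigPoly hf
  have h2 := continuous_of_mem_trigPoly hg
  refine integrable_of_continuous_of_bound (C := C * D)
    (h1.mul (Complex.continuous_conj.comp h2)) fun x ↦ ?_
  rw [norm_mul, RCLike.norm_conj]
  exact mul_le_mul (hC x) (hD x) (norm_nonneg _) ((norm_nonneg _).trans (hC x))

lemma BandLimited.integral_mul_conj_eq_zero {r : ℝ} (hm : BandLimited m r) {S T : Set E3}
    (hST : ∀ ω ∈ S, ∀ η ∈ T, r ≤ ‖ω - η‖) {f g : E3 → ℂ} (hf : f ∈ trigPoly S)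
    (hg : g ∈ trigPoly T) : ∫ x, f x * starRingEnd ℂ (g x) ∂m = 0 := by
  induction hf using Submodule.span_induction with
  | mem f hf =>
    obtain ⟨ω, hω, rfl⟩ := hf
    have hω' : wave ω ∈ trigPoly S := Submodule.subset_span ⟨ω, hω, rfl⟩
    induction hg using Submodule.span_induction with
    | mem g hg =>
      obtain ⟨η, hη, rfl⟩ := hg
      simp_rw [wave_mul_conj]
      exact hm _ (hST ω hω η hη)
    | zero => simp
    | add g₁ g₂ h₁ h₂ ih₁ ih₂ =>
      simp_rw [Pi.add_apply, map_add, mul_add]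
      rw [integral_add (integrable_mul_conj hω' h₁) (integrable_mul_conj hω' h₂), ih₁, ih₂,
        add_zero]
    | smul c g _ ih =>
      simp_rw [Pi.smul_apply, smul_eq_mul, map_mul, mul_left_comm _ (starRingEnd ℂ c)]
      rw [integral_const_mul, ih, mul_zero]
  | zero => simp
  | add f₁ f₂ h₁ h₂ ih₁ ih₂ =>
    simp_rw [Pi.add_apply, add_mul]
    rw [integral_add (integrable_mul_conj h₁ hg) (integrable_mul_conj h₂ hg), ih₁, ih₂, add_zero]
  | smul c f _ ih =>
    simp_rw [Pi.smul_apply, smul_eq_mul, mul_assoc]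
    rw [integral_const_mul, ih, mul_zero]

lemma integrable_norm_pow {S : Set E3} {f : E3 → ℂ} (hf : f ∈ trigPoly S) (n : ℕ) :
    Integrable (fun x ↦ ‖f x‖ ^ n) m := by
  obtain ⟨C, hC⟩ := exists_bound_of_mem_trigPoly hf
  refine integrable_of_continuous_of_bound (C := C ^ n)
    ((continuous_of_mem_trigPoly hf).norm.pow n) fun x ↦ ?_
  simpa using pow_le_pow_left₀ (norm_nonneg _) (hC x) n

/-- Almost orthogonality: a sum of trigonometric polynomials, each of which is orthogonal to all
but `P` of the others. -/
lemma BandLimited.integral_norm_sq_sum_le {r : ℝ} (hm : BandLimited m r) {ι : Type*}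
    (s : Finset ι) (G : ι → E3 → ℂ) (S : ι → Set E3) (hG : ∀ i ∈ s, G i ∈ trigPoly (S i))
    (near : ι → ι → Prop) [DecidableRel near] (hsymm : ∀ i j, near i j → near j i) (P : ℕ)
    (hP : ∀ i ∈ s, (s.filter (near i)).card ≤ P)
    (hfar : ∀ i ∈ s, ∀ j ∈ s, ¬ near i j → ∀ ω ∈ S i, ∀ η ∈ S j, r ≤ ‖ω - η‖) :
    ∫ x, ‖∑ i ∈ s, G i x‖ ^ 2 ∂m ≤ P * ∑ i ∈ s, ∫ x, ‖G i x‖ ^ 2 ∂m := by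
  have hintg : ∀ i ∈ s, ∀ j ∈ s, Integrable (fun x ↦ G i x * starRingEnd ℂ (G j x)) m :=
    fun i hi j hj ↦ integrable_mul_conj (hG i hi) (hG j hj)
  have key : ∀ i ∈ s, ∀ j ∈ s, (∫ x, G i x * starRingEnd ℂ (G j x) ∂m).re ≤
      if near i j then ((∫ x, ‖G i x‖ ^ 2 ∂m) + ∫ x, ‖G j x‖ ^ 2 ∂m) / 2 else 0 := by
    intro i hi j hj
    split_ifs with h
    · calc (∫ x, G i x * starRingEnd ℂ (G j x) ∂m).re
          = ∫ x, (G i x * starRingEnd ℂ (G j x)).re ∂m := (integral_re (hintg i hi j hj)).symm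
        _ ≤ ∫ x, (‖G i x‖ ^ 2 + ‖G j x‖ ^ 2) / 2 ∂m := by
          refine integral_mono (hintg i hi j hj).re
            (((integrable_norm_pow (hG i hi) 2).add (integrable_norm_pow (hG j hj) 2)).div_const 2)
            fun x ↦ ?_
          refine (Complex.re_le_norm _).trans ?_
          rw [norm_mul, RCLike.norm_conj]
          nlinarith [sq_nonneg (‖G i x‖ - ‖G j x‖)]
        _ = _ := by
          rw [integral_div, integral_add (integrable_norm_pow (hG i hi) 2)
            (integrable_norm_pow (hG j hj) 2)]
    · rw [hm.integral_mul_conj_eq_zero (hfar i hi j hj h) (hG i hi) (hG j hj), Complex.zero_re]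
  have hexp : ∀ x, ((‖∑ i ∈ s, G i x‖ ^ 2 : ℝ) : ℂ) =
      ∑ i ∈ s, ∑ j ∈ s, G i x * starRingEnd ℂ (G j x) := by
    intro x
    rw [← Finset.sum_mul_sum, ← map_sum, Complex.mul_conj, Complex.normSq_eq_norm_sq]
  have h1 : ∫ x, ‖∑ i ∈ s, G i x‖ ^ 2 ∂m =
      ∑ i ∈ s, ∑ j ∈ s, (∫ x, G i x * starRingEnd ℂ (G j x) ∂m).re := by
    rw [← Complex.ofReal_re (∫ x, ‖∑ i ∈ s, G i x‖ ^ 2 ∂m), ← integral_complex_ofReal]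
    simp_rw [hexp]
    rw [integral_finsetSum _ fun i hi ↦ integrable_finsetSum _ fun j hj ↦ hintg i hi j hj,
      Complex.re_sum]
    refine Finset.sum_congr rfl fun i hi ↦ ?_
    rw [integral_finsetSum _ fun j hj ↦ hintg i hi j hj, Complex.re_sum]
  set N : ι → ℝ := fun i ↦ ∫ x, ‖G i x‖ ^ 2 ∂m with hN
  have hN0 : ∀ i, 0 ≤ N i := fun i ↦ integral_nonneg fun x ↦ by positivity
  have h2 : ∀ i ∈ s, ∑ j ∈ s, (if near i j then N i else 0) ≤ P * N i := by
    intro i hi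
    rw [← Finset.sum_filter, Finset.sum_const, nsmul_eq_mul]
    exact mul_le_mul_of_nonneg_right (by exact_mod_cast hP i hi) (hN0 i)
  have h3 : ∑ i ∈ s, ∑ j ∈ s, (if near i j then N j else 0) ≤ ∑ i ∈ s, P * N i := by
    rw [Finset.sum_comm]
    refine Finset.sum_le_sum fun i hi ↦ (h2 i hi).trans' (le_of_eq ?_)
    refine Finset.sum_congr rfl fun j _ ↦ ?_
    simp only [show near j i ↔ near i j from ⟨hsymm j i, hsymm i j⟩]
  rw [h1, Finset.mul_sum]
  calc _ ≤ ∑ i ∈ s, ∑ j ∈ s, ((if near i j then N i else 0) / 2 +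
        (if near i j then N j else 0) / 2) := by
        refine Finset.sum_le_sum fun i hi ↦ Finset.sum_le_sum fun j hj ↦ (key i hi j hj).trans ?_
        split_ifs
        · exact (add_div _ _ _).le
        · simp
    _ ≤ _ := by
        have h4 := Finset.sum_le_sum h2
        simp_rw [Finset.sum_add_distrib, ← Finset.sum_div]
        linarith

end AlmostOrthogonality

/-! ### Dyadic arcs -/

/-- The indices of the dyadic intervals of generation `j + n` inside the interval of
generation `j` with index `l`. -/
def children (n : ℕ) (l : ℤ) : Finset ℤ := Finset.Ico (l * 2 ^ n) ((l + 1) * 2 ^ n)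

lemma mem_children {n : ℕ} {l l' : ℤ} : l' ∈ children n l ↔ l' / 2 ^ n = l := by
  have h : (0 : ℤ) < 2 ^ n := by positivity
  rw [children, Finset.mem_Ico, Int.ediv_eq_iff_of_pos h, add_mul, one_mul]

lemma card_children (n : ℕ) (l : ℤ) : (children n l).card = 2 ^ n := by
  rw [children, Int.card_Ico, add_mul, one_mul, add_sub_cancel_left]
  exact_mod_cast Int.toNat_natCast (2 ^ n)

lemma children_zero (l : ℤ) : children 0 l = {l} := by
  ext; simp [mem_children]

lemma mem_children_add {a b : ℕ} {l l₁ l₂ : ℤ} (h₁ : l₁ ∈ children a l)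
    (h₂ : l₂ ∈ children b l₁) : l₂ ∈ children (a + b) l := by
  rw [mem_children] at *
  rw [add_comm a b, pow_add, ← Int.ediv_ediv_of_nonneg (by positivity), h₂, h₁]

lemma sum_children_add {M : Type*} [AddCommMonoid M] (a b : ℕ) (l : ℤ) (u : ℤ → M) :
    ∑ l' ∈ children (a + b) l, u l' = ∑ l₁ ∈ children a l, ∑ l₂ ∈ children b l₁, u l₂ := by
  rw [← Finset.sum_fiberwise_of_maps_to (g := fun l' : ℤ ↦ l' / 2 ^ b) (t := children a l)]
  · refine Finset.sum_congr rfl fun l₁ h₁ ↦ Finset.sum_congr ?_ fun _ _ ↦ rfl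
    ext l'
    rw [Finset.mem_filter, mem_children (l' := l') (l := l₁)]
    exact ⟨fun h ↦ h.2, fun h ↦ ⟨mem_children_add h₁ (mem_children.2 h), h⟩⟩
  · intro l' h
    rw [mem_children] at *
    rw [Int.ediv_ediv_of_nonneg (by positivity), ← pow_add, add_comm b a, h]

lemma floor_ediv (j n : ℕ) (θ : ℝ) : ⌊(2 : ℝ) ^ (j + n) * θ⌋ / 2 ^ n = ⌊(2 : ℝ) ^ j * θ⌋ := by
  have h : (0 : ℤ) < 2 ^ n := by positivity
  have h' : (0 : ℝ) < 2 ^ n := by positivity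
  rw [Int.ediv_eq_iff_of_pos h]
  have h1 := Int.floor_le ((2 : ℝ) ^ j * θ)
  have h2 := Int.lt_floor_add_one ((2 : ℝ) ^ j * θ)
  constructor
  · rw [Int.le_floor]
    push_cast
    rw [pow_add]
    nlinarith
  · rw [Int.floor_lt]
    push_cast
    rw [pow_add]
    nlinarith

/-- The sum of the functions `f θ` over the `θ ∈ Θ` in the dyadic interval
`[l / 2 ^ j, (l + 1) / 2 ^ j)`. -/
def arcSum {V : Type*} [AddCommMonoid V] (Θ : Finset ℝ) (f : ℝ → V) (j : ℕ) (l : ℤ) : V :=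
  ∑ θ ∈ Θ with ⌊(2 : ℝ) ^ j * θ⌋ = l, f θ

lemma arcSum_eq_sum_children {V : Type*} [AddCommMonoid V] (Θ : Finset ℝ) (f : ℝ → V)
    (j n : ℕ) (l : ℤ) :
    arcSum Θ f j l = ∑ l' ∈ children n l, arcSum Θ f (j + n) l' := by
  unfold arcSum
  rw [← Finset.sum_fiberwise_of_maps_to (g := fun θ : ℝ ↦ ⌊(2 : ℝ) ^ (j + n) * θ⌋)
    (t := children n l)]
  · refine Finset.sum_congr rfl fun l' hl' ↦ Finset.sum_congr ?_ fun _ _ ↦ rfl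
    ext θ
    simp only [Finset.mem_filter, and_assoc, and_congr_right_iff, and_iff_right_iff_imp]
    rintro - rfl
    rw [← floor_ediv j n, mem_children.1 hl']
  · intro θ hθ
    rw [mem_children, floor_ediv, (Finset.mem_filter.1 hθ).2]

/-! ### `L⁶` norms and Hölder's inequality -/

section Norms

variable {m : Measure E3} [IsFiniteMeasure m]

/-- Bounded continuous functions. -/
def Tame (f : E3 → ℂ) : Prop := Continuous f ∧ ∃ C, ∀ x, ‖f x‖ ≤ C

lemma tame_of_mem_trigPoly {S : Set E3} {f : E3 → ℂ} (hf : f ∈ trigPoly S) : Tame f :=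
  ⟨continuous_of_mem_trigPoly hf, exists_bound_of_mem_trigPoly hf⟩

lemma Tame.memLp_mul {f g : E3 → ℂ} (hf : Tame f) (hg : Tame g) (a b : ℕ) (p : ℝ≥0∞) :
    MemLp (fun x ↦ ‖f x‖ ^ a * ‖g x‖ ^ b) p m := by
  obtain ⟨hf, C, hC⟩ := hf
  obtain ⟨hg, D, hD⟩ := hg
  refine MemLp.of_bound ((hf.norm.pow a).mul (hg.norm.pow b)).aestronglyMeasurable (C ^ a * D ^ b)
    (Filter.Eventually.of_forall fun x ↦ ?_)
  have hC0 : 0 ≤ C := (norm_nonneg _).trans (hC 0)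
  rw [norm_mul, norm_pow, norm_pow, norm_norm, norm_norm]
  gcongr
  · exact hC x
  · exact hD x

lemma Tame.memLp_sq {f : E3 → ℂ} (hf : Tame f) (p : ℝ≥0∞) :
    MemLp (fun x ↦ ‖f x‖ ^ 2) p m := by
  simpa using hf.memLp_mul hf 2 0 p (m := m)

/-- The square of the `L⁶` norm. -/
def sqNorm (m : Measure E3) (f : E3 → ℂ) : ℝ := lpNorm (fun x ↦ ‖f x‖ ^ 2) 3 m

/-- The mixed integral `∫ |f|² |g|⁴`. -/
def mixed (m : Measure E3) (f g : E3 → ℂ) : ℝ := ∫ x, ‖f x‖ ^ 2 * ‖g x‖ ^ 4 ∂m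

lemma sqNorm_nonneg {m : Measure E3} (f : E3 → ℂ) : 0 ≤ sqNorm m f := lpNorm_nonneg

lemma mixed_nonneg {m : Measure E3} (f g : E3 → ℂ) : 0 ≤ mixed m f g := integral_nonneg fun x ↦ by positivity

lemma lpNorm_three_pow_three {m : Measure E3} {u : E3 → ℝ} (hu : MemLp u 3 m) (hu0 : ∀ x, 0 ≤ u x) :
    lpNorm u 3 m ^ 3 = ∫ x, u x ^ 3 ∂m := by
  rw [lpNorm_eq_integral_norm_rpow_toReal (by norm_num) (by norm_num) hu.1]
  have h : ∫ x, ‖u x‖ ^ (3 : ℝ≥0∞).toReal ∂m = ∫ x, u x ^ 3 ∂m := by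
    refine integral_congr_ae (Filter.Eventually.of_forall fun x ↦ ?_)
    simp [abs_of_nonneg (hu0 x)]
  rw [h, ← Real.rpow_natCast, ← Real.rpow_mul (integral_nonneg fun x ↦ pow_nonneg (hu0 x) 3)]
  simp

lemma Tame.sqNorm_pow_three {f : E3 → ℂ} (hf : Tame f) :
    sqNorm m f ^ 3 = ∫ x, ‖f x‖ ^ 6 ∂m := by
  rw [sqNorm, lpNorm_three_pow_three (hf.memLp_sq 3) fun x ↦ by positivity]
  simp_rw [← pow_mul]

/-- Cauchy–Schwarz for monomials in `‖f‖` and `‖g‖`. -/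
lemma Tame.integral_mul_sq_le {f g : E3 → ℂ} (hf : Tame f) (hg : Tame g) (a b c d : ℕ) :
    (∫ x, ‖f x‖ ^ (a + c) * ‖g x‖ ^ (b + d) ∂m) ^ 2 ≤
      (∫ x, ‖f x‖ ^ (2 * a) * ‖g x‖ ^ (2 * b) ∂m) *
        ∫ x, ‖f x‖ ^ (2 * c) * ‖g x‖ ^ (2 * d) ∂m := by
  have h := integral_mul_le_Lp_mul_Lq_of_nonneg (μ := m) (p := 2) (q := 2)
    Real.HolderConjugate.two_two
    (f := fun x ↦ ‖f x‖ ^ a * ‖g x‖ ^ b) (g := fun x ↦ ‖f x‖ ^ c * ‖g x‖ ^ d)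
    (Filter.Eventually.of_forall fun x ↦ by positivity)
    (Filter.Eventually.of_forall fun x ↦ by positivity)
    (hf.memLp_mul hg a b _) (hf.memLp_mul hg c d _)
  have e1 : ∀ x, ‖f x‖ ^ a * ‖g x‖ ^ b * (‖f x‖ ^ c * ‖g x‖ ^ d) =
      ‖f x‖ ^ (a + c) * ‖g x‖ ^ (b + d) := fun x ↦ by ring
  have e2 : ∀ x (a b : ℕ), (‖f x‖ ^ a * ‖g x‖ ^ b) ^ (2 : ℝ) =
      ‖f x‖ ^ (2 * a) * ‖g x‖ ^ (2 * b) := fun x a b ↦ by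
    rw [Real.rpow_two]; ring
  simp_rw [e1, e2, ← Real.sqrt_eq_rpow] at h
  have h0 : 0 ≤ ∫ x, ‖f x‖ ^ (a + c) * ‖g x‖ ^ (b + d) ∂m :=
    integral_nonneg fun x ↦ by positivity
  refine (pow_le_pow_left₀ h0 h 2).trans ?_
  rw [mul_pow, Real.sq_sqrt (integral_nonneg fun x ↦ by positivity),
    Real.sq_sqrt (integral_nonneg fun x ↦ by positivity)]

lemma mixed_sq_le {f g : E3 → ℂ} (hf : Tame f) (hg : Tame g) :
    mixed m f g ^ 2 ≤ mixed m g f * sqNorm m g ^ 3 := by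
  have h := hf.integral_mul_sq_le hg 2 1 0 3 (m := m)
  rw [hg.sqNorm_pow_three]
  simpa [mixed, mul_comm] using h

lemma mixed_le {f g : E3 → ℂ} (hf : Tame f) (hg : Tame g) :
    mixed m f g ≤ sqNorm m f * sqNorm m g ^ 2 := by
  have h1 := mixed_sq_le (m := m) hf hg
  have h2 := mixed_sq_le (m := m) hg hf
  have hX := mixed_nonneg (m := m) f g
  have hY := mixed_nonneg (m := m) g f
  have hF := sqNorm_nonneg (m := m) f
  have hG := sqNorm_nonneg (m := m) g
  rcases hX.eq_or_lt with h0 | h0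
  · rw [← h0]; positivity
  have h3 : mixed m f g ^ 4 ≤ mixed m f g * (sqNorm m f * sqNorm m g ^ 2) ^ 3 := by
    calc mixed m f g ^ 4 = (mixed m f g ^ 2) ^ 2 := by ring
      _ ≤ (mixed m g f * sqNorm m g ^ 3) ^ 2 := by gcongr
      _ = mixed m g f ^ 2 * sqNorm m g ^ 6 := by ring
      _ ≤ (mixed m f g * sqNorm m f ^ 3) * sqNorm m g ^ 6 := by gcongr
      _ = _ := by ring
  have h4 : mixed m f g ^ 3 ≤ (sqNorm m f * sqNorm m g ^ 2) ^ 3 := by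
    refine le_of_mul_le_mul_left ?_ h0
    calc _ = mixed m f g ^ 4 := by ring
      _ ≤ _ := h3
  exact le_of_pow_le_pow_left₀ (by norm_num) (by positivity) h4

lemma lpNorm_norm_mul_norm_pow_le {f g : E3 → ℂ} (hf : Tame f) (hg : Tame g) :
    lpNorm (fun x ↦ ‖f x‖ * ‖g x‖) 3 m ^ 6 ≤ mixed m f g * mixed m g f := by
  have h := hf.integral_mul_sq_le hg 1 2 2 1 (m := m)
  have h' : MemLp (fun x ↦ ‖f x‖ * ‖g x‖) 3 m := by
    simpa using hf.memLp_mul hg 1 1 3 (m := m)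
  rw [show (6 : ℕ) = 3 * 2 from rfl, pow_mul,
    lpNorm_three_pow_three h' fun x ↦ by positivity]
  simp_rw [mul_pow]
  simpa [mixed, mul_comm] using h

lemma sqNorm_sum_le {ι : Type*} (s : Finset ι) (f : ι → E3 → ℂ) (hf : ∀ i ∈ s, Tame (f i)) :
    sqNorm m (∑ i ∈ s, f i) ≤ s.card * ∑ i ∈ s, sqNorm m (f i) := by
  have hmem : ∀ i ∈ s, MemLp (fun x ↦ ‖f i x‖ ^ 2) 3 m := fun i hi ↦ (hf i hi).memLp_sq 3
  calc sqNorm m (∑ i ∈ s, f i)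
      ≤ lpNorm ((s.card : ℝ) • ∑ i ∈ s, fun x ↦ ‖f i x‖ ^ 2) 3 m := by
        refine lpNorm_mono_real ((memLp_finsetSum' s hmem).const_smul _) fun x ↦ ?_
        rw [norm_pow, norm_norm, Finset.sum_apply]
        calc ‖∑ i ∈ s, f i x‖ ^ 2 ≤ (∑ i ∈ s, ‖f i x‖) ^ 2 := by
              gcongr; exact norm_sum_le _ _
          _ ≤ s.card * ∑ i ∈ s, ‖f i x‖ ^ 2 := sq_sum_le_card_mul_sum_sq
          _ = _ := by simp
    _ ≤ _ := by
        rw [lpNorm_const_smul]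
        simp only [Real.nnnorm_natCast, NNReal.coe_natCast]
        gcongr
        exact lpNorm_sum_le hmem (by norm_num)

end Norms

/-! ### Decoupling for the cone over a curve -/

/-- Quantitative nondegeneracy of `γ` on `U`: at each point of `U` some linear functional vanishes
to exactly second order along `γ`. -/
def QuadNondeg (γ : ℝ → E3) (U : Set ℝ) (c₁ c₂ : ℝ) : Prop :=
  ∀ θ₀ ∈ U, ∃ L : E3 →L[ℝ] ℝ, (∀ x, |L x| ≤ c₂ * ‖x‖) ∧
    (∀ θ ∈ U, |L (γ θ)| ≤ c₂ * (θ - θ₀) ^ 2) ∧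
    ∀ d, 0 ≤ d → ∀ θ₁ ∈ U, ∀ θ₂ ∈ U,
      (θ₀ + d ≤ θ₁ ∧ θ₀ + d ≤ θ₂ ∨ θ₁ + d ≤ θ₀ ∧ θ₂ + d ≤ θ₀) →
      c₁ * d * |θ₁ - θ₂| ≤ |L (γ θ₁) - L (γ θ₂)|

/-- The points `k • γ θ` with `k` within relative distance `κ` of `K`. -/
def rayPiece (γ : ℝ → E3) (K κ θ : ℝ) : Set E3 := {ω | ∃ k, |k - K| ≤ κ * |K| ∧ ω = k • γ θ}

lemma rayPiece_mono {γ : ℝ → E3} {K κ κ' θ : ℝ} (h : κ ≤ κ') :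
    rayPiece γ K κ θ ⊆ rayPiece γ K κ' θ := by
  rintro _ ⟨k, hk, rfl⟩
  exact ⟨k, hk.trans (by gcongr), rfl⟩

/-- The part of the cone over `γ` above a dyadic interval. -/
def conePiece (γ : ℝ → E3) (U : Set ℝ) (K κ : ℝ) (j : ℕ) (l : ℤ) : Set E3 :=
  {ω | ∃ θ ∈ U, ⌊(2 : ℝ) ^ j * θ⌋ = l ∧ ω ∈ rayPiece γ K κ θ}

/-- The functions `f θ` have frequencies on the ray through `γ θ`. -/
def Radial (γ : ℝ → E3) (U : Set ℝ) (K κ : ℝ) (Θ : Finset ℝ) (f : ℝ → E3 → ℂ) : Prop :=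
  ∀ θ ∈ Θ, θ ∈ U ∧ f θ ∈ trigPoly (rayPiece γ K κ θ)

lemma Radial.mono {γ : ℝ → E3} {U : Set ℝ} {K κ κ' : ℝ} {Θ : Finset ℝ} {f : ℝ → E3 → ℂ}
    (hf : Radial γ U K κ Θ f) (h : κ ≤ κ') : Radial γ U K κ' Θ f :=
  fun θ hθ ↦ ⟨(hf θ hθ).1, trigPoly_mono (rayPiece_mono h) (hf θ hθ).2⟩

lemma Radial.arcSum_mem {γ : ℝ → E3} {U : Set ℝ} {K κ : ℝ} {Θ : Finset ℝ} {f : ℝ → E3 → ℂ}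
    (hf : Radial γ U K κ Θ f) (j : ℕ) (l : ℤ) :
    arcSum Θ f j l ∈ trigPoly (conePiece γ U K κ j l) := by
  refine Submodule.sum_mem _ fun θ hθ ↦ ?_
  rw [Finset.mem_filter] at hθ
  have hsub : rayPiece γ K κ θ ⊆ conePiece γ U K κ j l :=
    fun ω hω ↦ ⟨θ, (hf θ hθ.1).1, hθ.2, hω⟩
  exact trigPoly_mono hsub (hf θ hθ.1).2

lemma Radial.tame_arcSum {γ : ℝ → E3} {U : Set ℝ} {K κ : ℝ} {Θ : Finset ℝ} {f : ℝ → E3 → ℂ}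
    (hf : Radial γ U K κ Θ f) (j : ℕ) (l : ℤ) : Tame (arcSum Θ f j l) :=
  tame_of_mem_trigPoly (hf.arcSum_mem j l)

lemma floor_eq_of_mem_children {j n : ℕ} {l l' : ℤ} {θ : ℝ} (hl : l' ∈ children n l)
    (hθ : ⌊(2 : ℝ) ^ (j + n) * θ⌋ = l') : ⌊(2 : ℝ) ^ j * θ⌋ = l := by
  rw [← floor_ediv j n, hθ, mem_children.1 hl]

lemma abs_sub_le_of_floor_eq {j : ℕ} {l : ℤ} {θ θ' : ℝ} (h : ⌊(2 : ℝ) ^ j * θ⌋ = l)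
    (h' : ⌊(2 : ℝ) ^ j * θ'⌋ = l) : |θ - θ'| ≤ 1 / 2 ^ j := by
  rw [Int.floor_eq_iff] at h h'
  rw [le_div_iff₀ (by positivity), ← abs_of_pos (show (0 : ℝ) < 2 ^ j by positivity), ← abs_mul, abs_le]
  constructor <;> nlinarith

lemma sub_le_abs_sub_of_floor_eq {j : ℕ} {l l' : ℤ} {θ θ' : ℝ} (h : ⌊(2 : ℝ) ^ j * θ⌋ = l)
    (h' : ⌊(2 : ℝ) ^ j * θ'⌋ = l') : ((|l - l'| : ℤ) - 1 : ℝ) / 2 ^ j ≤ |θ - θ'| := by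
  rw [Int.floor_eq_iff] at h h'
  rw [div_le_iff₀ (by positivity)]
  have hj : (0 : ℝ) < 2 ^ j := by positivity
  push_cast
  rcases abs_cases ((l : ℝ) - l') with ⟨e, -⟩ | ⟨e, -⟩ <;> rw [e]
  · nlinarith [le_abs_self (θ - θ')]
  · nlinarith [neg_le_abs (θ - θ')]

/-- Frequencies of `f_J * f_I' ^ 2` and `f_J' * f_I' ^ 2` are separated when `J` and `J'` are. -/
lemma QuadNondeg.le_norm_sub {γ : ℝ → E3} {U : Set ℝ} {c₁ c₂ r : ℝ} (hQ : QuadNondeg γ U c₁ c₂)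
    (hc₁ : 0 ≤ c₁) (hc₂ : 0 < c₂) {i q b n Λ : ℕ} (hΛ : 11 * c₂ * 2 ^ q ≤ c₁ * Λ)
    (hbn : b ≤ n) {K : ℝ} (hK : r * 4 ^ (i + n) ≤ |K|) {l c c' I' J J' : ℤ}
    (hr : 0 ≤ r)
    (hfl : ∀ θ, ⌊(2 : ℝ) ^ (i + 2 * b) * θ⌋ = J ∨ ⌊(2 : ℝ) ^ (i + 2 * b) * θ⌋ = J' →
      ⌊(2 : ℝ) ^ (i + q) * θ⌋ = c)
    (hfl' : ∀ θ, ⌊(2 : ℝ) ^ (i + b) * θ⌋ = I' → ⌊(2 : ℝ) ^ (i + q) * θ⌋ = c')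
    (hc : c ∈ children q l) (hc' : c' ∈ children q l) (hcc : 2 ≤ |c - c'|)
    (hJ : (Λ : ℤ) < |J - J'|) {ω η : E3}
    (hω : ω ∈ image2 (· + ·) (conePiece γ U K (1 / 4 ^ n) (i + 2 * b) J)
      (image2 (· + ·) (conePiece γ U K (1 / 4 ^ n) (i + b) I')
        (conePiece γ U K (1 / 4 ^ n) (i + b) I')))
    (hη : η ∈ image2 (· + ·) (conePiece γ U K (1 / 4 ^ n) (i + 2 * b) J')
      (image2 (· + ·) (conePiece γ U K (1 / 4 ^ n) (i + b) I')
        (conePiece γ U K (1 / 4 ^ n) (i + b) I'))) :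
    r ≤ ‖ω - η‖ := by
  obtain ⟨_, ⟨θ₁, hθ₁, hθ₁J, k₁, hk₁, rfl⟩, _, ⟨_, ⟨θ₂, hθ₂, hθ₂I, k₂, hk₂, rfl⟩, _,
    ⟨θ₃, hθ₃, hθ₃I, k₃, hk₃, rfl⟩, rfl⟩, rfl⟩ := hω
  obtain ⟨_, ⟨φ₁, hφ₁, hφ₁J, p₁, hp₁, rfl⟩, _, ⟨_, ⟨φ₂, hφ₂, hφ₂I, p₂, hp₂, rfl⟩, _,
    ⟨φ₃, hφ₃, hφ₃I, p₃, hp₃, rfl⟩, rfl⟩, rfl⟩ := hη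
  obtain ⟨L, hL, hL2, hLd⟩ := hQ θ₂ hθ₂
  have hθ₁c := hfl θ₁ (Or.inl hθ₁J)
  have hφ₁c := hfl φ₁ (Or.inr hφ₁J)
  have hθ₂c := hfl' θ₂ hθ₂I
  set δ : ℝ := 1 / 4 ^ (i + b) with hδ
  have hδ0 : 0 < δ := by positivity
  have hK0 : 0 ≤ |K| := abs_nonneg K
  have hn1 : (1 : ℝ) / 4 ^ n ≤ 1 := by
    rw [div_le_one (by positivity)]; exact one_le_pow₀ (by norm_num)
  have hpow : ∀ j : ℕ, ((1 : ℝ) / 2 ^ j) ^ 2 = 1 / 4 ^ j := fun j ↦ by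
    rw [div_pow, one_pow, ← pow_mul, mul_comm, pow_mul]; norm_num
  -- small terms
  have hsmall : ∀ θ ∈ U, ⌊(2 : ℝ) ^ (i + b) * θ⌋ = I' → ∀ k, |k - K| ≤ 1 / 4 ^ n * |K| →
      |k * L (γ θ)| ≤ 2 * c₂ * |K| * δ := by
    intro θ hθ hθI k hk
    have h1 : |k| ≤ 2 * |K| := by
      have := abs_sub_abs_le_abs_sub k K
      nlinarith
    have h2 : |L (γ θ)| ≤ c₂ * δ := by
      refine (hL2 θ hθ).trans ?_
      rw [hδ, ← hpow, ← sq_abs (θ - θ₂)]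
      gcongr
      exact abs_sub_le_of_floor_eq hθI hθ₂I
    rw [abs_mul]
    calc |k| * |L (γ θ)| ≤ (2 * |K|) * (c₂ * δ) := by gcongr
      _ = _ := by ring
  have hmain : ∀ θ ∈ U, ⌊(2 : ℝ) ^ (i + q) * θ⌋ = c → ∀ k, |k - K| ≤ 1 / 4 ^ n * |K| →
      |(k - K) * L (γ θ)| ≤ c₂ * |K| * δ := by
    intro θ hθ hθc k hk
    have h2 : |L (γ θ)| ≤ c₂ * (1 / 4 ^ i) := by
      refine (hL2 θ hθ).trans ?_
      rw [← hpow, ← sq_abs (θ - θ₂)]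
      gcongr
      exact abs_sub_le_of_floor_eq (floor_eq_of_mem_children hc hθc)
        (floor_eq_of_mem_children hc' hθ₂c)
    rw [abs_mul]
    calc |k - K| * |L (γ θ)| ≤ (1 / 4 ^ n * |K|) * (c₂ * (1 / 4 ^ i)) := by gcongr
      _ ≤ (1 / 4 ^ b * |K|) * (c₂ * (1 / 4 ^ i)) := by
        gcongr; norm_num
      _ = _ := by rw [hδ, pow_add]; field_simp
  -- the separation
  have hsep : 11 * c₂ * δ ≤ |L (γ θ₁) - L (γ φ₁)| := by
    have h1 := sub_le_abs_sub_of_floor_eq hθ₁J hφ₁J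
    have h2 : ((1 : ℝ) / 2 ^ (i + q)) * c₁ * |θ₁ - φ₁| ≤ |L (γ θ₁) - L (γ φ₁)| := by
      rw [mul_comm _ c₁]
      refine hLd _ (by positivity) θ₁ hθ₁ φ₁ hφ₁ ?_
      have hj : (0 : ℝ) < 2 ^ (i + q) := by positivity
      rw [Int.floor_eq_iff] at hθ₁c hφ₁c hθ₂c
      have e : (2 : ℝ) ^ (i + q) * (1 / 2 ^ (i + q)) = 1 := by field_simp
      rcases le_abs.1 hcc with h | h
      · left
        have h' : (c' : ℝ) + 2 ≤ c := by exact_mod_cast (by linarith : c' + 2 ≤ c)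
        constructor <;> refine le_of_mul_le_mul_left ?_ hj <;> rw [mul_add, e] <;> linarith
      · right
        have h' : (c : ℝ) + 2 ≤ c' := by exact_mod_cast (by linarith : c + 2 ≤ c')
        constructor <;> refine le_of_mul_le_mul_left ?_ hj <;> rw [mul_add, e] <;> linarith
    refine le_trans ?_ h2
    have h3 : (Λ : ℝ) / 2 ^ (i + 2 * b) ≤ |θ₁ - φ₁| := by
      refine le_trans ?_ h1
      gcongr
      have : (Λ : ℤ) + 1 ≤ |J - J'| := hJ
      have : ((Λ : ℤ) + 1 : ℝ) ≤ (|J - J'| : ℤ) := by exact_mod_cast this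
      push_cast at this ⊢
      linarith
    calc 11 * c₂ * δ = (11 * c₂ * 2 ^ q) * (1 / 2 ^ q * δ) := by field_simp
      _ ≤ (c₁ * Λ) * (1 / 2 ^ q * δ) := by gcongr
      _ = 1 / 2 ^ (i + q) * c₁ * (Λ / 2 ^ (i + 2 * b)) := by
        rw [hδ, show (4 : ℝ) = 2 ^ 2 by norm_num, ← pow_mul]
        field_simp
        ring
      _ ≤ _ := by gcongr
  have hident : L (k₁ • γ θ₁ + (k₂ • γ θ₂ + k₃ • γ θ₃) - (p₁ • γ φ₁ + (p₂ • γ φ₂ + p₃ • γ φ₃))) =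
      K * (L (γ θ₁) - L (γ φ₁)) + ((k₁ - K) * L (γ θ₁) + k₂ * L (γ θ₂) + k₃ * L (γ θ₃)
        - (p₁ - K) * L (γ φ₁) - p₂ * L (γ φ₂) - p₃ * L (γ φ₃)) := by
    simp only [map_sub, map_add, map_smul, smul_eq_mul]
    ring
  have a1 := abs_le.1 (hmain θ₁ hθ₁ hθ₁c k₁ hk₁)
  have a2 := abs_le.1 (hsmall θ₂ hθ₂ hθ₂I k₂ hk₂)
  have a3 := abs_le.1 (hsmall θ₃ hθ₃ hθ₃I k₃ hk₃)
  have b1 := abs_le.1 (hmain φ₁ hφ₁ hφ₁c p₁ hp₁)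
  have b2 := abs_le.1 (hsmall φ₂ hφ₂ hφ₂I p₂ hp₂)
  have b3 := abs_le.1 (hsmall φ₃ hφ₃ hφ₃I p₃ hp₃)
  have herr : |(k₁ - K) * L (γ θ₁) + k₂ * L (γ θ₂) + k₃ * L (γ θ₃)
        - (p₁ - K) * L (γ φ₁) - p₂ * L (γ φ₂) - p₃ * L (γ φ₃)| ≤ 10 * c₂ * |K| * δ := by
    rw [abs_le]; constructor <;> linarith
  have hbig : 11 * c₂ * |K| * δ ≤ |K * (L (γ θ₁) - L (γ φ₁))| := by
    rw [abs_mul]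
    calc _ = |K| * (11 * c₂ * δ) := by ring
      _ ≤ _ := by gcongr
  have hfin := hL (k₁ • γ θ₁ + (k₂ • γ θ₂ + k₃ • γ θ₃) - (p₁ • γ φ₁ + (p₂ • γ φ₂ + p₃ • γ φ₃)))
  rw [hident] at hfin
  have hrK : r ≤ |K| * δ := by
    rw [hδ, mul_one_div, le_div_iff₀ (by positivity)]
    refine le_trans ?_ hK
    gcongr
    norm_num
  refine le_of_mul_le_mul_left ?_ hc₂
  have htri := abs_sub_abs_le_abs_sub (K * (L (γ θ₁) - L (γ φ₁)))
    (-((k₁ - K) * L (γ θ₁) + k₂ * L (γ θ₂) + k₃ * L (γ θ₃)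
        - (p₁ - K) * L (γ φ₁) - p₂ * L (γ φ₂) - p₃ * L (γ φ₃)))
  rw [abs_neg, sub_neg_eq_add] at htri
  calc c₂ * r ≤ c₂ * (|K| * δ) := by gcongr
    _ ≤ _ := by linarith

section Decoupling

variable {m : Measure E3} [IsFiniteMeasure m] {γ : ℝ → E3} {U : Set ℝ} {c₁ c₂ r : ℝ}

/-- One orthogonality step: the arc `I` is split into arcs of length `4 ^ (-b)`, against an arc
`I'` of length `2 ^ (-b)`. -/
lemma BandLimited.mixed_le_sum_children (hm : BandLimited m r) (hQ : QuadNondeg γ U c₁ c₂)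
    (hc₁ : 0 ≤ c₁) (hc₂ : 0 < c₂) (hr : 0 ≤ r) {i q a' b' e n Λ : ℕ}
    (hΛ : 11 * c₂ * 2 ^ q ≤ c₁ * Λ) (hae : q + a' + e = 2 * (q + b')) (hbn : q + b' ≤ n) {K : ℝ}
    (hK : r * 4 ^ (i + n) ≤ |K|) {Θ : Finset ℝ} {f : ℝ → E3 → ℂ}
    (hf : Radial γ U K (1 / 4 ^ n) Θ f) {l c c' I I' : ℤ}
    (hc : c ∈ children q l) (hc' : c' ∈ children q l) (hcc : 2 ≤ |c - c'|)
    (hI : I ∈ children a' c) (hI' : I' ∈ children b' c') :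
    mixed m (arcSum Θ f (i + (q + a')) I) (arcSum Θ f (i + (q + b')) I') ≤
      (2 * Λ + 1 : ℕ) * ∑ J ∈ children e I,
        mixed m (arcSum Θ f (i + 2 * (q + b')) J) (arcSum Θ f (i + (q + b')) I') := by
  have hsum : arcSum Θ f (i + (q + a')) I =
      ∑ J ∈ children e I, arcSum Θ f (i + 2 * (q + b')) J := by
    rw [arcSum_eq_sum_children Θ f (i + (q + a')) e I, add_assoc i, hae]
  set g := arcSum Θ f (i + (q + b')) I' with hg
  set S := conePiece γ U K (1 / 4 ^ n) (i + (q + b')) I'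
  have hgm : g ∈ trigPoly S := hf.arcSum_mem _ _
  have h := hm.integral_norm_sq_sum_le (children e I)
    (fun J ↦ arcSum Θ f (i + 2 * (q + b')) J * (g * g))
    (fun J ↦ image2 (· + ·) (conePiece γ U K (1 / 4 ^ n) (i + 2 * (q + b')) J)
      (image2 (· + ·) S S))
    (fun J _ ↦ mul_mem_trigPoly (hf.arcSum_mem _ _) (mul_mem_trigPoly hgm hgm))
    (fun J J' ↦ |J - J'| ≤ Λ) (fun J J' h ↦ by rwa [abs_sub_comm]) (2 * Λ + 1) ?_ ?_
  · have e1 : ∀ x, ‖∑ J ∈ children e I, (arcSum Θ f (i + 2 * (q + b')) J * (g * g)) x‖ ^ 2 =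
        ‖arcSum Θ f (i + (q + a')) I x‖ ^ 2 * ‖g x‖ ^ 4 := by
      intro x
      rw [hsum, Finset.sum_apply]
      simp only [Pi.mul_apply]
      rw [← Finset.sum_mul, norm_mul, norm_mul]
      ring
    have e2 : ∀ J x, ‖(arcSum Θ f (i + 2 * (q + b')) J * (g * g)) x‖ ^ 2 =
        ‖arcSum Θ f (i + 2 * (q + b')) J x‖ ^ 2 * ‖g x‖ ^ 4 := by
      intro J x
      simp only [Pi.mul_apply, norm_mul]
      ring
    simp_rw [e1, e2] at h
    exact h
  · intro J _
    calc _ ≤ (Finset.Icc (J - Λ) (J + Λ)).card := by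
          refine Finset.card_le_card fun J' hJ' ↦ ?_
          rw [Finset.mem_filter, abs_le] at hJ'
          rw [Finset.mem_Icc]
          constructor <;> linarith [hJ'.2.1, hJ'.2.2]
      _ ≤ _ := by rw [Int.card_Icc]; omega
  · intro J hJ J' hJ' hfar ω hω η hη
    have hfl : ∀ θ, ∀ J ∈ children e I, ⌊(2 : ℝ) ^ (i + 2 * (q + b')) * θ⌋ = J →
        ⌊(2 : ℝ) ^ (i + q) * θ⌋ = c := by
      intro θ J hJ hθ
      rw [← hae, show i + (q + a' + e) = i + q + (a' + e) by ring] at hθ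
      exact floor_eq_of_mem_children (mem_children_add hI hJ) hθ
    refine hQ.le_norm_sub hc₁ hc₂ hΛ hbn hK hr (c := c) ?_ ?_ hc hc' hcc (not_le.1 hfar) hω hη
    · rintro θ (hθ | hθ)
      exacts [hfl θ J hJ hθ, hfl θ J' hJ' hθ]
    · intro θ hθ
      rw [← add_assoc] at hθ
      exact floor_eq_of_mem_children hI' hθ

/-- The sum of the squares of the `L⁶` norms over the arcs of generation `i + n` inside an arc of
generation `i + s`. -/
def sqSum (m : Measure E3) (Θ : Finset ℝ) (f : ℝ → E3 → ℂ) (i n s : ℕ) (J : ℤ) : ℝ :=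
  ∑ J' ∈ children (n - s) J, sqNorm m (arcSum Θ f (i + n) J')

lemma sqSum_nonneg {m : Measure E3} (Θ : Finset ℝ) (f : ℝ → E3 → ℂ) (i n s : ℕ) (J : ℤ) :
    0 ≤ sqSum m Θ f i n s J := Finset.sum_nonneg fun _ _ ↦ sqNorm_nonneg _

lemma sum_sqSum {m : Measure E3} (Θ : Finset ℝ) (f : ℝ → E3 → ℂ) {i n s e : ℕ} (h : s + e ≤ n)
    (J : ℤ) : ∑ J' ∈ children e J, sqSum m Θ f i n (s + e) J' = sqSum m Θ f i n s J := by
  unfold sqSum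
  rw [show n - s = e + (n - (s + e)) by omega, sum_children_add]

/-- Iterating the orthogonality step. -/
lemma BandLimited.mixed_le_of_separated (hm : BandLimited m r) (hQ : QuadNondeg γ U c₁ c₂)
    (hc₁ : 0 ≤ c₁) (hc₂ : 0 < c₂) (hr : 0 ≤ r) {i q n Λ : ℕ}
    (hΛ : 11 * c₂ * 2 ^ q ≤ c₁ * Λ) {K : ℝ}
    (hK : r * 4 ^ (i + n) ≤ |K|) {Θ : Finset ℝ} {f : ℝ → E3 → ℂ}
    (hf : Radial γ U K (1 / 4 ^ n) Θ f) {l : ℤ} {C y : ℝ} (hC : 0 ≤ C) (hy : 1 < y)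
    (hD : ∀ s, q ≤ s → s ≤ n → ∀ J, sqNorm m (arcSum Θ f (i + s) J) ≤
      C * y ^ (2 * (n - s)) * sqSum m Θ f i n s J) (k : ℕ) :
    ∀ (a' b' : ℕ) (c c' I I' : ℤ), (q + b') * 2 ^ k ≤ n → q + a' ≤ 2 * (q + b') → q + a' ≤ n →
      c ∈ children q l → c' ∈ children q l → 2 ≤ |c - c'| → I ∈ children a' c →
      I' ∈ children b' c' →
      mixed m (arcSum Θ f (i + (q + a')) I) (arcSum Θ f (i + (q + b')) I') ≤
        (2 * Λ + 1 : ℕ) ^ 2 * C ^ 3 * (y ^ (6 * n) / y ^ (3 * k * (q + b'))) *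
          sqSum m Θ f i n (q + a') I * sqSum m Θ f i n (q + b') I' ^ 2 := by
  have hy0 : 0 < y := by linarith
  have hP : (1 : ℝ) ≤ (2 * Λ + 1 : ℕ) := by exact_mod_cast (by omega : 1 ≤ 2 * Λ + 1)
  set P : ℝ := ((2 * Λ + 1 : ℕ) : ℝ)
  induction k with
  | zero =>
    intro a' b' c c' I I' hb ha han hc hc' hcc hI hI'
    have hbn : q + b' ≤ n := by simpa using hb
    have h1 := hD (q + a') (by omega) han I
    have h2 := hD (q + b') (by omega) hbn I'
    have hs1 := sqSum_nonneg (m := m) Θ f i n (q + a') I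
    have hs2 := sqSum_nonneg (m := m) Θ f i n (q + b') I'
    have hn1 := sqNorm_nonneg (m := m) (arcSum Θ f (i + (q + a')) I)
    have hn2 := sqNorm_nonneg (m := m) (arcSum Θ f (i + (q + b')) I')
    calc _ ≤ _ := mixed_le (hf.tame_arcSum _ _) (hf.tame_arcSum _ _)
      _ ≤ (C * y ^ (2 * (n - (q + a'))) * sqSum m Θ f i n (q + a') I) *
          (C * y ^ (2 * (n - (q + b'))) * sqSum m Θ f i n (q + b') I') ^ 2 := by gcongr
      _ ≤ (C * y ^ (2 * n) * sqSum m Θ f i n (q + a') I) *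
          (C * y ^ (2 * n) * sqSum m Θ f i n (q + b') I') ^ 2 := by
        gcongr <;> first | exact hy.le | omega
      _ = 1 ^ 2 * C ^ 3 * (y ^ (6 * n) / y ^ (3 * 0 * (q + b'))) *
          sqSum m Θ f i n (q + a') I * sqSum m Θ f i n (q + b') I' ^ 2 := by
        simp only [mul_zero, zero_mul, pow_zero, div_one]; ring
      _ ≤ _ := by gcongr
  | succ k ih =>
    intro a' b' c c' I I' hb ha han hc hc' hcc hI hI'
    obtain ⟨e, he⟩ := Nat.exists_eq_add_of_le ha
    have h2b : 2 * (q + b') * 2 ^ k ≤ n := by rw [pow_succ] at hb; linarith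
    have h2bn : 2 * (q + b') ≤ n :=
      (Nat.le_mul_of_pos_right _ (by positivity)).trans h2b
    have hstep := hm.mixed_le_sum_children hQ hc₁ hc₂ hr hΛ he.symm (by omega) hK hf hc hc' hcc
      hI hI'
    have hs2 := sqSum_nonneg (m := m) Θ f i n (q + b') I'
    have key : ∀ J ∈ children e I,
        mixed m (arcSum Θ f (i + 2 * (q + b')) J) (arcSum Θ f (i + (q + b')) I') ≤
        P * C ^ 3 * (y ^ (6 * n) / y ^ (3 * (k + 1) * (q + b'))) *
          sqSum m Θ f i n (2 * (q + b')) J * sqSum m Θ f i n (q + b') I' ^ 2 := by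
      intro J hJ
      have hs1 := sqSum_nonneg (m := m) Θ f i n (2 * (q + b')) J
      have h1 := mixed_sq_le (m := m) (hf.tame_arcSum (i + 2 * (q + b')) J)
        (hf.tame_arcSum (i + (q + b')) I')
      have h2 := ih b' (a' + e) c' c I' J
        (by rw [← add_assoc, ← he]; exact h2b) (by omega) (by omega) hc' hc
        (by rwa [abs_sub_comm]) hI' (mem_children_add hI hJ)
      rw [← add_assoc q a' e, ← he] at h2
      have h3 := hD (q + b') (by omega) (by omega) I'
      have hn2 := sqNorm_nonneg (m := m) (arcSum Θ f (i + (q + b')) I')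
      have hz : y ^ (2 * (n - (q + b'))) = y ^ (2 * n) / y ^ (2 * (q + b')) := by
        rw [eq_div_iff (by positivity), ← pow_add]; congr 1; omega
      refine le_of_pow_le_pow_left₀ two_ne_zero (by positivity) (h1.trans ?_)
      calc _ ≤ (P ^ 2 * C ^ 3 * (y ^ (6 * n) / y ^ (3 * k * (2 * (q + b')))) *
          sqSum m Θ f i n (q + b') I' * sqSum m Θ f i n (2 * (q + b')) J ^ 2) *
          (C * y ^ (2 * (n - (q + b'))) * sqSum m Θ f i n (q + b') I') ^ 3 := by gcongr
        _ = _ := by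
          rw [hz]
          set S := sqSum m Θ f i n (q + b') I'
          set T := sqSum m Θ f i n (2 * (q + b')) J
          set b := q + b'
          field_simp
          ring
    calc _ ≤ _ := hstep
      _ ≤ P * ∑ J ∈ children e I, P * C ^ 3 * (y ^ (6 * n) / y ^ (3 * (k + 1) * (q + b'))) *
          sqSum m Θ f i n (2 * (q + b')) J * sqSum m Θ f i n (q + b') I' ^ 2 := by
        gcongr with J hJ
        exact key J hJ
      _ = _ := by
        rw [← Finset.sum_mul, ← Finset.mul_sum, he, sum_sqSum Θ f (by omega)]
        ring

/-- Decoupling into arcs of generation `n` with constant `D`. -/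
def Decouples (m : Measure E3) (γ : ℝ → E3) (U : Set ℝ) (r : ℝ) (n : ℕ) (D : ℝ) : Prop :=
  ∀ (i : ℕ) (K : ℝ), r * 4 ^ (i + n) ≤ |K| → ∀ (Θ : Finset ℝ) (f : ℝ → E3 → ℂ),
    Radial γ U K (1 / 4 ^ n) Θ f → ∀ l, sqNorm m (arcSum Θ f i l) ≤
      D * ∑ l' ∈ children n l, sqNorm m (arcSum Θ f (i + n) l')

lemma decouples_two_pow (r : ℝ) (n : ℕ) : Decouples m γ U r n (2 ^ n) := by
  intro i K _ Θ f hf l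
  rw [arcSum_eq_sum_children Θ f i n l]
  have := sqNorm_sum_le (m := m) (children n l) (fun l' ↦ arcSum Θ f (i + n) l')
    fun l' _ ↦ hf.tame_arcSum _ _
  rwa [card_children, Nat.cast_pow, Nat.cast_ofNat] at this

lemma Decouples.mono {m : Measure E3} {n : ℕ} {D D' : ℝ} (h : Decouples m γ U r n D) (hD : D ≤ D') :
    Decouples m γ U r n D' := fun i K hK Θ f hf l ↦ by
  refine (h i K hK Θ f hf l).trans ?_
  gcongr
  exact Finset.sum_nonneg fun _ _ ↦ sqNorm_nonneg _

lemma sum_mul_sum_adjacent_le {n : ℕ} {l : ℤ} (u : ℤ → ℝ) :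
    ∑ c ∈ children n l, ∑ c' ∈ children n l, (if 2 ≤ |c - c'| then 0 else u c * u c') ≤
      3 * ∑ c ∈ children n l, u c ^ 2 := by
  have hcard : ∀ c : ℤ, ((children n l).filter fun c' ↦ ¬ 2 ≤ |c - c'|).card ≤ 3 := by
    intro c
    calc _ ≤ (Finset.Icc (c - 1) (c + 1)).card := by
          refine Finset.card_le_card fun c' h ↦ ?_
          rw [Finset.mem_filter, not_le, abs_lt] at h
          rw [Finset.mem_Icc]
          constructor <;> omega
      _ = 3 := by rw [Int.card_Icc]; omega
  have h1 : ∀ c, ∑ c' ∈ children n l, (if 2 ≤ |c - c'| then 0 else u c ^ 2) ≤ 3 * u c ^ 2 := by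
    intro c
    simp_rw [← ite_not (2 ≤ |c - _|)]
    rw [← Finset.sum_filter, Finset.sum_const, nsmul_eq_mul]
    gcongr
    exact_mod_cast hcard c
  have h2 : ∑ c ∈ children n l, ∑ c' ∈ children n l, (if 2 ≤ |c - c'| then 0 else u c' ^ 2) ≤
      ∑ c ∈ children n l, 3 * u c ^ 2 := by
    rw [Finset.sum_comm]
    refine Finset.sum_le_sum fun c _ ↦ (h1 c).trans' (le_of_eq ?_)
    simp_rw [abs_sub_comm c]
  have h3 := Finset.sum_le_sum fun c (_ : c ∈ children n l) ↦ h1 c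
  calc _ ≤ ∑ c ∈ children n l, ∑ c' ∈ children n l,
        ((if 2 ≤ |c - c'| then 0 else u c ^ 2) / 2 +
          (if 2 ≤ |c - c'| then 0 else u c' ^ 2) / 2) := by
        gcongr with c _ c' _
        split_ifs
        · simp
        · nlinarith [sq_nonneg (u c - u c')]
    _ ≤ _ := by
        simp_rw [Finset.sum_add_distrib, ← Finset.sum_div]
        rw [← Finset.mul_sum] at h2 h3
        linarith

/-- Splitting into adjacent and separated pairs. -/
lemma sqNorm_sum_children_le {n : ℕ} {l : ℤ} (F : ℤ → E3 → ℂ) (hF : ∀ c, Tame (F c)) {T : ℝ}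
    (hT : 0 ≤ T) (hsep : ∀ c ∈ children n l, ∀ c' ∈ children n l, 2 ≤ |c - c'| →
      lpNorm (fun x ↦ ‖F c x‖ * ‖F c' x‖) 3 m ≤ T) :
    sqNorm m (∑ c ∈ children n l, F c) ≤
      3 * ∑ c ∈ children n l, sqNorm m (F c) + 4 ^ n * T := by
  classical
  set s := children n l
  set V : ℤ × ℤ → E3 → ℝ := fun p x ↦ if 2 ≤ |p.1 - p.2| then ‖F p.1 x‖ * ‖F p.2 x‖ else 0
  have hV : ∀ p ∈ s ×ˢ s, MemLp (V p) 3 m := by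
    intro p _
    by_cases h : 2 ≤ |p.1 - p.2|
    · simpa [V, h] using (hF p.1).memLp_mul (hF p.2) 1 1 3 (m := m)
    · simp [V, h]
  have hW : ∀ c ∈ s, MemLp (fun x ↦ ‖F c x‖ ^ 2) 3 m := fun c _ ↦ (hF c).memLp_sq 3
  have hW' : MemLp ((3 : ℝ) • ∑ c ∈ s, fun x ↦ ‖F c x‖ ^ 2) 3 m :=
    (memLp_finsetSum' s hW).const_smul _
  have hVT : ∀ p ∈ s ×ˢ s, lpNorm (V p) 3 m ≤ T := by
    intro p hp
    rw [Finset.mem_product] at hp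
    by_cases h : 2 ≤ |p.1 - p.2|
    · simpa [V, h] using hsep p.1 hp.1 p.2 hp.2 h
    · simpa [V, h] using hT
  calc sqNorm m (∑ c ∈ s, F c)
      ≤ lpNorm (((3 : ℝ) • ∑ c ∈ s, fun x ↦ ‖F c x‖ ^ 2) + ∑ p ∈ s ×ˢ s, V p) 3 m := by
        refine lpNorm_mono_real (hW'.add (memLp_finsetSum' _ hV)) fun x ↦ ?_
        have h1 := sum_mul_sum_adjacent_le (n := n) (l := l) (fun c ↦ ‖F c x‖)
        rw [norm_pow, norm_norm, Finset.sum_apply]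
        calc ‖∑ c ∈ s, F c x‖ ^ 2 ≤ (∑ c ∈ s, ‖F c x‖) ^ 2 := by
              gcongr; exact norm_sum_le _ _
          _ = ∑ c ∈ s, ∑ c' ∈ s, (if 2 ≤ |c - c'| then 0 else ‖F c x‖ * ‖F c' x‖) +
              ∑ c ∈ s, ∑ c' ∈ s, (if 2 ≤ |c - c'| then ‖F c x‖ * ‖F c' x‖ else 0) := by
            rw [sq, Finset.sum_mul_sum]
            simp_rw [← Finset.sum_add_distrib]
            refine Finset.sum_congr rfl fun c _ ↦ Finset.sum_congr rfl fun c' _ ↦ ?_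
            split_ifs <;> simp
          _ ≤ _ := by
            rw [Pi.add_apply, Pi.smul_apply, Finset.sum_apply, Finset.sum_apply,
              Finset.sum_product]
            exact add_le_add_left h1 _
    _ ≤ lpNorm ((3 : ℝ) • ∑ c ∈ s, fun x ↦ ‖F c x‖ ^ 2) 3 m + lpNorm (∑ p ∈ s ×ˢ s, V p) 3 m :=
        lpNorm_add_le hW' (by norm_num)
    _ ≤ _ := by
        refine add_le_add ?_ ?_
        · rw [lpNorm_const_smul]
          rw [show ((‖(3 : ℝ)‖₊ : NNReal) : ℝ) = 3 by simp]
          gcongr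
          exact lpNorm_sum_le hW (by norm_num)
        · calc _ ≤ ∑ p ∈ s ×ˢ s, lpNorm (V p) 3 m := lpNorm_sum_le hV (by norm_num)
            _ ≤ ∑ p ∈ s ×ˢ s, T := Finset.sum_le_sum hVT
            _ = _ := by
              rw [Finset.sum_const, Finset.card_product, card_children, nsmul_eq_mul]
              push_cast
              rw [← mul_pow]
              norm_num

/-- `ℓ²` decoupling for `L⁶` with subexponential constants. -/
theorem BandLimited.exists_decouples (hm : BandLimited m r) (hQ : QuadNondeg γ U c₁ c₂)
    (hc₁ : 0 < c₁) (hc₂ : 0 < c₂) (hr : 0 ≤ r) {y : ℝ} (hy : 1 < y) :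
    ∃ C, 0 < C ∧ ∀ n, Decouples m γ U r n (C * y ^ (2 * n)) := by
  have hy0 : 0 < y := by linarith
  obtain ⟨q, hq⟩ : ∃ q : ℕ, 6 ≤ y ^ q := by
    obtain ⟨q, hq⟩ := pow_unbounded_of_one_lt 6 hy
    exact ⟨q, hq.le⟩
  have hq0 : 0 < q := by
    rcases Nat.eq_zero_or_pos q with rfl | h
    · norm_num at hq
    · exact h
  obtain ⟨Λ, hΛ⟩ : ∃ Λ : ℕ, 11 * c₂ * 2 ^ q ≤ c₁ * Λ := by
    obtain ⟨Λ, hΛ⟩ := exists_nat_ge (11 * c₂ * 2 ^ q / c₁)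
    exact ⟨Λ, by rwa [div_le_iff₀ hc₁, mul_comm (Λ : ℝ)] at hΛ⟩
  set P : ℝ := ((2 * Λ + 1 : ℕ) : ℝ) with hPdef
  have hP : (1 : ℝ) ≤ P := by rw [hPdef]; exact_mod_cast (by omega : 1 ≤ 2 * Λ + 1)
  obtain ⟨k, hk⟩ : ∃ k : ℕ, 4 ^ q * P * 2 ≤ y ^ (k * q) := by
    obtain ⟨k, hk⟩ := pow_unbounded_of_one_lt (4 ^ q * P * 2) hy
    exact ⟨k, hk.le.trans (pow_le_pow_right₀ hy.le (Nat.le_mul_of_pos_right _ hq0))⟩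
  refine ⟨2 ^ (q * 2 ^ k), by positivity, fun n ↦ ?_⟩
  set C : ℝ := 2 ^ (q * 2 ^ k) with hC
  have hC0 : 0 < C := by positivity
  induction n using Nat.strong_induction_on with
  | _ n ih =>
  by_cases hn : n < q * 2 ^ k
  · refine (decouples_two_pow r n).mono ?_
    calc (2 : ℝ) ^ n ≤ 2 ^ (q * 2 ^ k) := pow_le_pow_right₀ (by norm_num) hn.le
      _ ≤ _ := le_mul_of_one_le_right hC0.le (one_le_pow₀ hy.le)
  push Not at hn
  have hqn : q ≤ n := (Nat.le_mul_of_pos_right _ (by positivity)).trans hn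
  intro i K hK Θ f hf l
  have hD : ∀ s, q ≤ s → s ≤ n → ∀ J, sqNorm m (arcSum Θ f (i + s) J) ≤
      C * y ^ (2 * (n - s)) * sqSum m Θ f i n s J := by
    intro s hs hsn J
    have := ih (n - s) (by omega) (i + s) K
      (by rwa [show i + s + (n - s) = i + n by omega]) Θ f
      (hf.mono (by gcongr; exacts [by norm_num, by omega])) J
    rwa [show i + s + (n - s) = i + n by omega] at this
  have hS0 : sqSum m Θ f i n 0 l = ∑ l' ∈ children n l, sqNorm m (arcSum Θ f (i + n) l') := rfl
  rw [← hS0]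
  set S := sqSum m Θ f i n 0 l with hS
  have hSnn : 0 ≤ S := sqSum_nonneg _ _ _ _ _ _
  have hSsum : ∑ c ∈ children q l, sqSum m Θ f i n q c = S := by
    have := sum_sqSum (m := m) Θ f (i := i) (n := n) (s := 0) (e := q) (by omega) l
    rwa [zero_add] at this
  have hSle : ∀ c ∈ children q l, sqSum m Θ f i n q c ≤ S := fun c hc ↦ by
    rw [← hSsum]
    exact Finset.single_le_sum (f := fun c ↦ sqSum m Θ f i n q c)
      (fun c _ ↦ sqSum_nonneg _ _ _ _ _ _) hc
  have hsep : ∀ c ∈ children q l, ∀ c' ∈ children q l, 2 ≤ |c - c'| →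
      lpNorm (fun x ↦ ‖arcSum Θ f (i + q) c x‖ * ‖arcSum Θ f (i + q) c' x‖) 3 m ≤
        P * C * (y ^ (2 * n) / y ^ (k * q)) * S := by
    intro c hc c' hc' hcc
    have h1 := hm.mixed_le_of_separated hQ hc₁.le hc₂ hr hΛ hK hf hC0.le hy hD k 0 0 c c' c c'
      (by simpa using hn) (by omega) (by omega) hc hc' hcc (by simp [children_zero])
      (by simp [children_zero])
    have h2 := hm.mixed_le_of_separated hQ hc₁.le hc₂ hr hΛ hK hf hC0.le hy hD k 0 0 c' c c' c
      (by simpa using hn) (by omega) (by omega) hc' hc (by rwa [abs_sub_comm])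
      (by simp [children_zero]) (by simp [children_zero])
    simp only [add_zero] at h1 h2
    have hs1 := sqSum_nonneg (m := m) Θ f i n q c
    have hs2 := sqSum_nonneg (m := m) Θ f i n q c'
    have hb : ∀ u v, 0 ≤ u → 0 ≤ v → u ≤ S → v ≤ S →
        P ^ 2 * C ^ 3 * (y ^ (6 * n) / y ^ (3 * k * q)) * u * v ^ 2 ≤
        P ^ 3 * C ^ 3 * (y ^ (6 * n) / y ^ (3 * k * q)) * S * S ^ 2 := by
      intro u v hu hv huS hvS
      gcongr
      norm_num
    have h1' := h1.trans (hb _ _ hs1 hs2 (hSle c hc) (hSle c' hc'))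
    have h2' := h2.trans (hb _ _ hs2 hs1 (hSle c' hc') (hSle c hc))
    refine le_of_pow_le_pow_left₀ (n := 6) (by norm_num) (by positivity) ?_
    calc _ ≤ _ := lpNorm_norm_mul_norm_pow_le (hf.tame_arcSum _ _) (hf.tame_arcSum _ _)
      _ ≤ (P ^ 3 * C ^ 3 * (y ^ (6 * n) / y ^ (3 * k * q)) * S * S ^ 2) *
          (P ^ 3 * C ^ 3 * (y ^ (6 * n) / y ^ (3 * k * q)) * S * S ^ 2) := by
        gcongr
        exact mixed_nonneg _ _
      _ = _ := by
        rw [show 6 * n = 2 * n * 3 by ring, show 3 * k * q = k * q * 3 by ring, pow_mul y (2 * n),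
          pow_mul y (k * q)]
        ring
  have hmain := sqNorm_sum_children_le (m := m) (n := q) (l := l)
    (fun c ↦ arcSum Θ f (i + q) c) (fun c ↦ hf.tame_arcSum _ _) (by positivity) hsep
  rw [← arcSum_eq_sum_children] at hmain
  have hz : y ^ (2 * (n - q)) = y ^ (2 * n) / y ^ (2 * q) := by
    rw [eq_div_iff (by positivity), ← pow_add]; congr 1; omega
  calc _ ≤ _ := hmain
    _ ≤ 3 * ∑ c ∈ children q l, C * y ^ (2 * (n - q)) * sqSum m Θ f i n q c +
        4 ^ q * (P * C * (y ^ (2 * n) / y ^ (k * q)) * S) := by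
      gcongr with c hc
      exact hD q le_rfl hqn c
    _ = C * y ^ (2 * n) * S * (3 / y ^ (2 * q) + 4 ^ q * P / y ^ (k * q)) := by
      rw [← Finset.mul_sum, hSsum, hz]
      ring
    _ ≤ C * y ^ (2 * n) * S * 1 := by
      gcongr
      have h1 : 3 / y ^ (2 * q) ≤ 1 / 2 := by
        rw [div_le_iff₀ (by positivity)]
        have : y ^ q ≤ y ^ (2 * q) := pow_le_pow_right₀ hy.le (by omega)
        linarith
      have h2 : 4 ^ q * P / y ^ (k * q) ≤ 1 / 2 := by
        rw [div_le_iff₀ (by positivity)]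
        linarith
      linarith
    _ = _ := by rw [mul_one]

end Decoupling

section SixthPower

variable {m : Measure E3} [IsFiniteMeasure m] {γ : ℝ → E3} {U : Set ℝ} {c₁ c₂ r : ℝ}

lemma Decouples.iterate {m : Measure E3} {n : ℕ} {D : ℝ} (hD : Decouples m γ U r n D)
    (hD0 : 0 ≤ D) (hr : 0 ≤ r) {K : ℝ} {Θ : Finset ℝ} {f : ℝ → E3 → ℂ}
    (hf : Radial γ U K (1 / 4 ^ n) Θ f) (l : ℤ) (j : ℕ) (hK : r * 4 ^ (j * n) ≤ |K|) :
    sqNorm m (arcSum Θ f 0 l) ≤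
      D ^ j * ∑ l' ∈ children (j * n) l, sqNorm m (arcSum Θ f (j * n) l') := by
  induction j with
  | zero => simp [children_zero]
  | succ j ih =>
    rw [add_mul, one_mul] at hK ⊢
    have hK' : r * 4 ^ (j * n) ≤ |K| := by
      refine le_trans ?_ hK
      gcongr
      · norm_num
      · omega
    calc _ ≤ _ := ih hK'
      _ ≤ D ^ j * ∑ l' ∈ children (j * n) l, D * ∑ l'' ∈ children n l',
          sqNorm m (arcSum Θ f (j * n + n) l'') := by
        gcongr with l' _
        exact hD (j * n) K hK Θ f hf l'
      _ = _ := by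
        rw [← Finset.mul_sum, ← sum_children_add, pow_succ, mul_assoc]

lemma le_norm_smul_sub_smul {k k' K : ℝ} {u v : E3} (hu : ‖u‖ = 1) (hv : ‖v‖ = 1)
    (hk : |k - K| ≤ |K| / 2) (hk' : |k' - K| ≤ |K| / 2) :
    |K| / 2 * ‖u - v‖ ≤ ‖k • u - k' • v‖ := by
  have h1 : ‖k • u - k' • v‖ ^ 2 = (k - k') ^ 2 + k * k' * ‖u - v‖ ^ 2 := by
    rw [norm_sub_sq_real, norm_sub_sq_real, norm_smul, norm_smul, hu, hv, inner_smul_left,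
      inner_smul_right]
    simp only [mul_one, Real.norm_eq_abs, sq_abs, conj_trivial]
    ring
  have h2 : (|K| / 2) ^ 2 ≤ k * k' := by
    rw [abs_le] at hk hk'
    rcases abs_cases K with ⟨e, _⟩ | ⟨e, _⟩ <;> rw [e] at hk hk' ⊢ <;> nlinarith
  refine le_of_pow_le_pow_left₀ two_ne_zero (norm_nonneg _) ?_
  rw [h1, mul_pow]
  nlinarith [mul_le_mul_of_nonneg_right h2 (sq_nonneg ‖u - v‖), sq_nonneg (k - k')]

lemma norm_arcSum_le {Θ : Finset ℝ} {ν : ℝ → ℝ} (hν : ∀ θ, 0 ≤ ν θ) {h : ℝ → E3 → ℂ}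
    (hh : ∀ θ ∈ Θ, ∀ x, ‖h θ x‖ ≤ 1) (j : ℕ) (l : ℤ) (x : E3) :
    ‖arcSum Θ (fun θ ↦ (ν θ : ℂ) • h θ) j l x‖ ≤ arcSum Θ ν j l := by
  unfold arcSum
  rw [Finset.sum_apply]
  refine norm_sum_le_of_le _ fun θ hθ ↦ ?_
  rw [Pi.smul_apply, norm_smul, Complex.norm_real, Real.norm_of_nonneg (hν θ)]
  exact mul_le_of_le_one_right (hν θ) (hh θ (Finset.mem_filter.1 hθ).1 x)

lemma arcSum_nonneg {Θ : Finset ℝ} {ν : ℝ → ℝ} (hν : ∀ θ, 0 ≤ ν θ) (j : ℕ) (l : ℤ) :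
    0 ≤ arcSum Θ ν j l := Finset.sum_nonneg fun θ _ ↦ hν θ

/-- The `L²` bound on an arc. -/
lemma BandLimited.integral_norm_sq_arcSum_le (hm : BandLimited m r) {c₃ : ℝ}
    (hU : ∀ θ ∈ U, ‖γ θ‖ = 1) (hc₃ : 0 ≤ c₃)
    (hlow : ∀ θ ∈ U, ∀ θ' ∈ U, c₃ * |θ - θ'| ≤ ‖γ θ - γ θ'‖) {Λ : ℕ} (hΛ : 2 * r ≤ c₃ * Λ)
    {K κ : ℝ} (hκ : κ ≤ 1 / 2) {G : ℕ} (hK : 2 ^ G ≤ |K|) {Θ : Finset ℝ}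
    (hinj : InjOn (fun θ : ℝ ↦ ⌊(2 : ℝ) ^ G * θ⌋) Θ) {ν : ℝ → ℝ} (hν : ∀ θ, 0 ≤ ν θ)
    {h : ℝ → E3 → ℂ} (hh : Radial γ U K κ Θ h) (hh1 : ∀ θ ∈ Θ, ∀ x, ‖h θ x‖ ≤ 1) {B : ℝ}
    (hB : ∀ θ ∈ Θ, ν θ ≤ B) (j : ℕ) (l : ℤ) :
    ∫ x, ‖arcSum Θ (fun θ ↦ (ν θ : ℂ) • h θ) j l x‖ ^ 2 ∂m ≤
      (2 * Λ + 1 : ℕ) * (m.real univ * B) * arcSum Θ ν j l := by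
  set s := Θ.filter fun θ ↦ ⌊(2 : ℝ) ^ j * θ⌋ = l with hs
  have hsΘ : ∀ θ ∈ s, θ ∈ Θ := fun θ hθ ↦ (Finset.mem_filter.1 hθ).1
  have key := hm.integral_norm_sq_sum_le s (fun θ ↦ (ν θ : ℂ) • h θ)
    (fun θ ↦ rayPiece γ K κ θ) (fun θ hθ ↦ Submodule.smul_mem _ _ (hh θ (hsΘ θ hθ)).2)
    (fun θ θ' ↦ |⌊(2 : ℝ) ^ G * θ⌋ - ⌊(2 : ℝ) ^ G * θ'⌋| ≤ Λ)
    (fun θ θ' h ↦ by rwa [abs_sub_comm]) (2 * Λ + 1) ?_ ?_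
  · have e1 : ∀ x, arcSum Θ (fun θ ↦ (ν θ : ℂ) • h θ) j l x =
        ∑ θ ∈ s, ((ν θ : ℂ) • h θ) x := fun x ↦ by rw [arcSum, Finset.sum_apply]
    simp_rw [e1]
    refine key.trans ?_
    rw [mul_assoc]
    gcongr
    rw [arcSum, Finset.mul_sum]
    refine Finset.sum_le_sum fun θ hθ ↦ ?_
    calc ∫ x, ‖((ν θ : ℂ) • h θ) x‖ ^ 2 ∂m ≤ ∫ _, B * ν θ ∂m := by
          refine integral_mono (integrable_norm_pow
            (Submodule.smul_mem _ _ (hh θ (hsΘ θ hθ)).2) 2) (integrable_const _) fun x ↦ ?_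
          simp only [Pi.smul_apply, norm_smul, Complex.norm_real, Real.norm_of_nonneg (hν θ)]
          have h1 := hh1 θ (hsΘ θ hθ) x
          have h2 := hB θ (hsΘ θ hθ)
          have h3 := hν θ
          calc (ν θ * ‖h θ x‖) ^ 2 ≤ (ν θ * 1) ^ 2 := by gcongr
            _ = ν θ * ν θ := by ring
            _ ≤ _ := by gcongr
      _ = _ := by rw [integral_const, smul_eq_mul]; ring
  · intro θ _
    calc _ ≤ (Finset.Icc (⌊(2 : ℝ) ^ G * θ⌋ - Λ) (⌊(2 : ℝ) ^ G * θ⌋ + Λ)).card := by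
          refine Finset.card_le_card_of_injOn (fun θ' ↦ ⌊(2 : ℝ) ^ G * θ'⌋) ?_ ?_
          · intro θ' hθ'
            simp only [Finset.coe_filter, mem_ofPred_eq, abs_le] at hθ'
            simp only [Finset.coe_Icc, mem_Icc]
            constructor <;> linarith [hθ'.2.1, hθ'.2.2]
          · refine hinj.mono fun θ' hθ' ↦ ?_
            simp only [Finset.coe_filter, mem_ofPred_eq] at hθ'
            exact hsΘ θ' hθ'.1
      _ ≤ _ := by rw [Int.card_Icc]; omega
  · rintro θ hθ θ' hθ' hfar _ ⟨k, hk, rfl⟩ _ ⟨k', hk', rfl⟩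
    have hθU := (hh θ (hsΘ θ hθ)).1
    have hθU' := (hh θ' (hsΘ θ' hθ')).1
    have hK0 := abs_nonneg K
    refine le_trans ?_ (le_norm_smul_sub_smul (hU θ hθU) (hU θ' hθU') (hk.trans (by nlinarith))
      (hk'.trans (by nlinarith)))
    have h1 := sub_le_abs_sub_of_floor_eq (j := G) (θ := θ) (θ' := θ') rfl rfl
    have h2 : (Λ : ℝ) / 2 ^ G ≤ |θ - θ'| := by
      refine le_trans ?_ h1
      gcongr
      have : (Λ : ℤ) + 1 ≤ |⌊(2 : ℝ) ^ G * θ⌋ - ⌊(2 : ℝ) ^ G * θ'⌋| := not_le.1 hfar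
      have : ((Λ : ℤ) + 1 : ℝ) ≤ (|⌊(2 : ℝ) ^ G * θ⌋ - ⌊(2 : ℝ) ^ G * θ'⌋| : ℤ) := by
        exact_mod_cast this
      push_cast at this ⊢
      linarith
    calc r ≤ c₃ * Λ / 2 := by linarith
      _ = 2 ^ G / 2 * (c₃ * (Λ / 2 ^ G)) := by field_simp
      _ ≤ |K| / 2 * (c₃ * |θ - θ'|) := by gcongr
      _ ≤ _ := by gcongr; exact hlow θ hθU θ' hθU'

/-- The `L⁶` bound for a superposition of waves along the directions of a Frostman measure. -/
theorem BandLimited.exists_integral_norm_six_arcSum_le (hm : BandLimited m r)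
    (hQ : QuadNondeg γ U c₁ c₂) (hc₁ : 0 < c₁) (hc₂ : 0 < c₂) (hr : 0 ≤ r) {c₃ : ℝ}
    (hU : ∀ θ ∈ U, ‖γ θ‖ = 1) (hc₃ : 0 < c₃)
    (hlow : ∀ θ ∈ U, ∀ θ' ∈ U, c₃ * |θ - θ'| ≤ ‖γ θ - γ θ'‖) {y s : ℝ} (hy : 1 < y)
    (hs0 : 0 < s) (hs1 : s < 1) :
    ∃ (n J₀ : ℕ) (C : ℝ), 0 < n ∧ 0 < C ∧ ∀ J, J₀ ≤ J → ∀ K : ℝ, 2 ^ J ≤ |K| →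
      ∀ (Θ : Finset ℝ) (ν : ℝ → ℝ) (h : ℝ → E3 → ℂ),
        InjOn (fun θ : ℝ ↦ ⌊(2 : ℝ) ^ J * θ⌋) Θ → (∀ θ, 0 ≤ ν θ) →
        Radial γ U K (1 / 4 ^ n) Θ h → (∀ θ ∈ Θ, ∀ x, ‖h θ x‖ ≤ 1) →
        (∀ j ≤ J, ∀ l, arcSum Θ ν j l ≤ s ^ j) → ∀ l,
        ∫ x, ‖arcSum Θ (fun θ ↦ (ν θ : ℂ) • h θ) 0 l x‖ ^ 6 ∂m ≤
          C * y ^ (5 * J) * s ^ (2 * J) * arcSum Θ ν 0 l ^ 3 := by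
  have hy0 : 0 < y := by linarith
  obtain ⟨C₀, hC₀, hdec⟩ := hm.exists_decouples hQ hc₁ hc₂ hr hy
  obtain ⟨n, hn0, hn⟩ : ∃ n : ℕ, 0 < n ∧ C₀ ≤ y ^ n := by
    obtain ⟨n, hn⟩ := pow_unbounded_of_one_lt C₀ hy
    exact ⟨n + 1, by omega, hn.le.trans (pow_le_pow_right₀ hy.le (by omega))⟩
  have hD : Decouples m γ U r n (y ^ (3 * n)) := (hdec n).mono <| by
    calc C₀ * y ^ (2 * n) ≤ y ^ n * y ^ (2 * n) := by gcongr
      _ = _ := by rw [← pow_add]; congr 1; ring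
  obtain ⟨Jr, hJr⟩ : ∃ Jr : ℕ, r ≤ 2 ^ Jr := by
    obtain ⟨Jr, h⟩ := pow_unbounded_of_one_lt r (show (1 : ℝ) < 2 by norm_num)
    exact ⟨Jr, h.le⟩
  obtain ⟨Λ, hΛ⟩ : ∃ Λ : ℕ, 2 * r ≤ c₃ * Λ := by
    obtain ⟨Λ, hΛ⟩ := exists_nat_ge (2 * r / c₃)
    exact ⟨Λ, by rwa [div_le_iff₀ hc₃, mul_comm (Λ : ℝ)] at hΛ⟩
  set A : ℝ := (2 * Λ + 1 : ℕ) * (m.real univ + 1) with hA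
  have hA0 : 0 < A := by positivity
  refine ⟨n, Jr, A / s ^ (Jr + 2 * n), hn0, by positivity, ?_⟩
  intro J hJ K hK Θ ν h hinj hν hh hh1 hfr l
  set f : ℝ → E3 → ℂ := fun θ ↦ (ν θ : ℂ) • h θ with hf
  have hfrad : Radial γ U K (1 / 4 ^ n) Θ f :=
    fun θ hθ ↦ ⟨(hh θ hθ).1, Submodule.smul_mem _ _ (hh θ hθ).2⟩
  set j := (J - Jr) / (2 * n) with hj
  have hj1 : 2 * (j * n) ≤ J - Jr := by
    have := Nat.div_mul_le_self (J - Jr) (2 * n)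
    rw [← hj] at this
    linarith
  have hj2 : J - Jr ≤ 2 * (j * n) + 2 * n := by
    have := Nat.lt_div_mul_add (a := J - Jr) (b := 2 * n) (by omega)
    rw [← hj] at this
    linarith
  have hK' : r * 4 ^ (j * n) ≤ |K| := by
    calc r * 4 ^ (j * n) ≤ 2 ^ Jr * 2 ^ (2 * (j * n)) := by
          rw [pow_mul 2 2]; norm_num; gcongr
      _ = 2 ^ (Jr + 2 * (j * n)) := by rw [pow_add]
      _ ≤ 2 ^ J := pow_le_pow_right₀ (by norm_num) (by omega)
      _ ≤ _ := hK
  have hν1 : ∀ θ ∈ Θ, ν θ ≤ s ^ J := by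
    intro θ hθ
    refine le_trans ?_ (hfr J le_rfl ⌊(2 : ℝ) ^ J * θ⌋)
    exact Finset.single_le_sum (f := ν) (fun θ _ ↦ hν θ) (Finset.mem_filter.2 ⟨hθ, rfl⟩)
  have hn4 : (1 : ℝ) / 4 ^ n ≤ 1 / 2 := by
    gcongr
    calc (2 : ℝ) ≤ 4 ^ 1 := by norm_num
      _ ≤ 4 ^ n := pow_le_pow_right₀ (by norm_num) hn0
  set g := j * n with hg
  set N : ℝ := arcSum Θ ν 0 l with hN
  obtain ⟨X, hX0, hX3⟩ : ∃ X : ℝ, 0 ≤ X ∧ X ^ 3 = A * s ^ J * s ^ (2 * g) :=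
    ⟨(A * s ^ J * s ^ (2 * g)) ^ ((3 : ℕ) : ℝ)⁻¹, by positivity,
      Real.rpow_inv_natCast_pow (by positivity) (by norm_num)⟩
  have hpiece : ∀ l', sqNorm m (arcSum Θ f g l') ≤ X * arcSum Θ ν g l' := by
    intro l'
    have ht := hfrad.tame_arcSum g l'
    have hN0 := arcSum_nonneg (Θ := Θ) hν g l'
    have hNs := hfr g (by omega) l'
    refine le_of_pow_le_pow_left₀ (n := 3) (by norm_num) (by positivity) ?_
    rw [ht.sqNorm_pow_three, mul_pow, hX3]
    have hL2 := hm.integral_norm_sq_arcSum_le hU hc₃.le hlow hΛ hn4 hK hinj hν hh hh1 hν1 g l'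
    calc ∫ x, ‖arcSum Θ f g l' x‖ ^ 6 ∂m
        ≤ ∫ x, arcSum Θ ν g l' ^ 4 * ‖arcSum Θ f g l' x‖ ^ 2 ∂m := by
          refine integral_mono (integrable_norm_pow (hfrad.arcSum_mem g l') 6)
            ((integrable_norm_pow (hfrad.arcSum_mem g l') 2).const_mul _) fun x ↦ ?_
          have := norm_arcSum_le (Θ := Θ) hν hh1 g l' x
          calc ‖arcSum Θ f g l' x‖ ^ 6 = ‖arcSum Θ f g l' x‖ ^ 4 * ‖arcSum Θ f g l' x‖ ^ 2 := by
                ring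
            _ ≤ _ := by gcongr
      _ = arcSum Θ ν g l' ^ 4 * ∫ x, ‖arcSum Θ f g l' x‖ ^ 2 ∂m := integral_const_mul _ _
      _ ≤ arcSum Θ ν g l' ^ 4 * (A * s ^ J * arcSum Θ ν g l') := by
          gcongr
          refine hL2.trans ?_
          rw [hA, ← mul_assoc ((2 * Λ + 1 : ℕ) : ℝ)]
          gcongr
          linarith
      _ = A * s ^ J * arcSum Θ ν g l' ^ 2 * arcSum Θ ν g l' ^ 3 := by ring
      _ ≤ A * s ^ J * (s ^ g) ^ 2 * arcSum Θ ν g l' ^ 3 := by gcongr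
      _ = _ := by rw [← pow_mul, mul_comm g 2]
  have hit := hD.iterate (by positivity) hr hfrad l j hK'
  have hsum : sqNorm m (arcSum Θ f 0 l) ≤ y ^ (3 * g) * (X * N) := by
    refine hit.trans ?_
    rw [← pow_mul, show 3 * n * j = 3 * g by rw [hg]; ring]
    gcongr
    calc _ ≤ ∑ l' ∈ children g l, X * arcSum Θ ν g l' := Finset.sum_le_sum fun l' _ ↦ hpiece l'
      _ = _ := by
        rw [← Finset.mul_sum, hN, arcSum_eq_sum_children Θ ν 0 g l, zero_add]
  have hN0 : 0 ≤ N := arcSum_nonneg hν 0 l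
  rw [← (hfrad.tame_arcSum 0 l).sqNorm_pow_three]
  calc _ ≤ (y ^ (3 * g) * (X * N)) ^ 3 := by
        gcongr
        exact sqNorm_nonneg _
    _ = A * y ^ (9 * g) * s ^ (2 * g) * s ^ J * N ^ 3 := by
      rw [mul_pow, mul_pow, hX3, ← pow_mul]; ring
    _ ≤ A * y ^ (5 * J) * (s ^ J / s ^ (Jr + 2 * n)) * s ^ J * N ^ 3 := by
      have h1 : y ^ (9 * g) ≤ y ^ (5 * J) := pow_le_pow_right₀ hy.le (by omega)
      have h2 : s ^ (2 * g) ≤ s ^ J / s ^ (Jr + 2 * n) := by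
        rw [le_div_iff₀ (by positivity), ← pow_add]
        exact pow_le_pow_of_le_one hs0.le hs1.le (by omega)
      gcongr
    _ = _ := by rw [two_mul J, pow_add]; ring

end SixthPower

/-! ### Frostman's lemma on a dyadic tree -/

lemma children_one (i : ℤ) : children 1 i = {2 * i, 2 * i + 1} := by
  ext k
  rw [mem_children, Finset.mem_insert, Finset.mem_singleton, pow_one]
  omega

lemma sum_children_succ (d : ℕ) (i : ℤ) (w : ℤ → ℝ) :
    ∑ k ∈ children (d + 1) i, w k =
      ∑ k ∈ children d (2 * i), w k + ∑ k ∈ children d (2 * i + 1), w k := by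
  rw [add_comm d 1, sum_children_add, children_one, Finset.sum_pair (by omega)]

lemma mem_children_of_mem_of_mem {d d' : ℕ} (h : d' ≤ d) {i i' k : ℤ} (hk : k ∈ children d i)
    (hk' : k ∈ children d' i') : i' ∈ children (d - d') i := by
  rw [mem_children] at *
  rw [← hk', ← hk, Int.ediv_ediv_of_nonneg (by positivity), ← pow_add]
  congr 2
  omega

lemma sum_children_eq_zero_or {d d' : ℕ} (h : d' ≤ d) {i i' : ℤ} {w : ℤ → ℝ}
    (hw : ∀ k, k ∉ children d i → w k = 0) :
    ∑ k ∈ children d' i', w k = 0 ∨ i' ∈ children (d - d') i := by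
  by_cases h' : i' ∈ children (d - d') i
  · exact Or.inr h'
  · exact Or.inl <| Finset.sum_eq_zero fun k hk ↦
      hw k fun hk' ↦ h' (mem_children_of_mem_of_mem h hk' hk)

/-- A measure on the leaves of a dyadic tree which is carried by `T`, satisfies a Frostman
condition, and whose mass dominates the content of `T`. -/
lemma exists_frostman_tree (T : Set ℤ) (b : ℕ → ℝ) (hb : ∀ d, 0 < b d) (d : ℕ) :
    ∀ i : ℤ, ∃ (w : ℤ → ℝ) (𝒞 : Finset (ℕ × ℤ)), (∀ k, 0 ≤ w k) ∧
      (∀ k, k ∉ children d i → w k = 0) ∧ (∀ k, k ∉ T → w k = 0) ∧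
      (∀ d' ≤ d, ∀ i', ∑ k ∈ children d' i', w k ≤ b d') ∧
      (∀ p ∈ 𝒞, p.1 ≤ d) ∧
      (∀ k ∈ children d i, k ∈ T → ∃ p ∈ 𝒞, k ∈ children p.1 p.2) ∧
      ∑ p ∈ 𝒞, b p.1 ≤ ∑ k ∈ children d i, w k := by
  classical
  induction d with
  | zero =>
    intro i
    by_cases hi : i ∈ T
    · refine ⟨Pi.single i (b 0), {(0, i)}, fun k ↦ ?_, fun k hk ↦ ?_, fun k hk ↦ ?_, ?_, ?_, ?_, ?_⟩
      · by_cases h : k = i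
        · subst h; simpa using (hb 0).le
        · simp [h]
      · rw [children_zero, Finset.mem_singleton] at hk; simp [hk]
      · have : k ≠ i := by rintro rfl; exact hk hi
        simp [this]
      · intro d' hd' i'
        obtain rfl : d' = 0 := by omega
        rw [children_zero, Finset.sum_singleton]
        by_cases h : i' = i
        · subst h; simp
        · simpa [h] using (hb 0).le
      · simp
      · intro k hk _
        exact ⟨(0, i), by simp, hk⟩
      · simp [children_zero]
    · refine ⟨0, ∅, fun _ ↦ le_rfl, fun _ _ ↦ rfl, fun _ _ ↦ rfl, fun d' _ i' ↦ ?_, ?_, ?_, ?_⟩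
      · simpa using (hb d').le
      · simp
      · intro k hk hkT
        rw [children_zero, Finset.mem_singleton] at hk
        exact absurd (hk ▸ hkT) hi
      · simp
  | succ d ih =>
    intro i
    obtain ⟨w₁, 𝒞₁, hp₁, hs₁, ht₁, hb₁, hd₁, hc₁, hm₁⟩ := ih (2 * i)
    obtain ⟨w₂, 𝒞₂, hp₂, hs₂, ht₂, hb₂, hd₂, hc₂, hm₂⟩ := ih (2 * i + 1)
    set w := w₁ + w₂ with hw
    have hmem : ∀ k, k ∈ children (d + 1) i ↔
        k ∈ children d (2 * i) ∨ k ∈ children d (2 * i + 1) := by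
      intro k
      rw [mem_children, mem_children, mem_children, pow_succ,
        ← Int.ediv_ediv_of_nonneg (by positivity)]
      omega
    have hp : ∀ k, 0 ≤ w k := fun k ↦ add_nonneg (hp₁ k) (hp₂ k)
    have hs : ∀ k, k ∉ children (d + 1) i → w k = 0 := by
      intro k hk
      rw [hmem, not_or] at hk
      simp [hw, hs₁ k hk.1, hs₂ k hk.2]
    have ht : ∀ k, k ∉ T → w k = 0 := fun k hk ↦ by simp [hw, ht₁ k hk, ht₂ k hk]
    have hbd : ∀ d' ≤ d, ∀ i', ∑ k ∈ children d' i', w k ≤ b d' := by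
      intro d' hd' i'
      simp only [hw, Pi.add_apply, Finset.sum_add_distrib]
      rcases sum_children_eq_zero_or hd' hs₁ (i' := i') with h | h
      · rw [h, zero_add]; exact hb₂ d' hd' i'
      rcases sum_children_eq_zero_or hd' hs₂ (i' := i') with h' | h'
      · rw [h', add_zero]; exact hb₁ d' hd' i'
      rw [mem_children] at h h'
      omega
    have hz₁ : ∑ k ∈ children d (2 * i + 1), w₁ k = 0 := Finset.sum_eq_zero fun k hk ↦ hs₁ k
      fun hk' ↦ by rw [mem_children] at hk hk'; omega
    have hz₂ : ∑ k ∈ children d (2 * i), w₂ k = 0 := Finset.sum_eq_zero fun k hk ↦ hs₂ k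
      fun hk' ↦ by rw [mem_children] at hk hk'; omega
    have hS : ∑ k ∈ children (d + 1) i, w k =
        ∑ k ∈ children d (2 * i), w₁ k + ∑ k ∈ children d (2 * i + 1), w₂ k := by
      simp only [sum_children_succ, hw, Pi.add_apply, Finset.sum_add_distrib, hz₁, hz₂]
      ring
    set S := ∑ k ∈ children (d + 1) i, w k with hSdef
    by_cases hcase : S ≤ b (d + 1)
    · refine ⟨w, 𝒞₁ ∪ 𝒞₂, hp, hs, ht, ?_, ?_, ?_, ?_⟩
      · intro d' hd' i'
        rcases Nat.le_succ_iff.1 hd' with h | rfl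
        · exact hbd d' h i'
        rcases sum_children_eq_zero_or le_rfl hs (i' := i') with h | h
        · rw [h]; exact (hb _).le
        · rw [Nat.sub_self, children_zero, Finset.mem_singleton] at h
          rw [h]; exact hcase
      · intro p hpc
        rcases Finset.mem_union.1 hpc with h | h
        · exact (hd₁ p h).trans (by omega)
        · exact (hd₂ p h).trans (by omega)
      · intro k hk hkT
        rcases (hmem k).1 hk with h | h
        · obtain ⟨p, hpc, hkp⟩ := hc₁ k h hkT
          exact ⟨p, Finset.mem_union_left _ hpc, hkp⟩
        · obtain ⟨p, hpc, hkp⟩ := hc₂ k h hkT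
          exact ⟨p, Finset.mem_union_right _ hpc, hkp⟩
      · rw [← hSdef, hS]
        have h1 := Finset.sum_union_inter (s₁ := 𝒞₁) (s₂ := 𝒞₂) (f := fun p ↦ b p.1)
        have h2 : 0 ≤ ∑ p ∈ 𝒞₁ ∩ 𝒞₂, b p.1 := Finset.sum_nonneg fun p _ ↦ (hb _).le
        linarith
    · push Not at hcase
      have hbpos := hb (d + 1)
      have hS0 : 0 < S := hbpos.trans hcase
      set ρ := b (d + 1) / S with hρ
      have hρ0 : 0 ≤ ρ := by positivity
      have hρ1 : ρ ≤ 1 := (div_le_one hS0).2 hcase.le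
      have hsum : ∑ k ∈ children (d + 1) i, ρ * w k = b (d + 1) := by
        rw [← Finset.mul_sum, ← hSdef, hρ, div_mul_cancel₀ _ hS0.ne']
      refine ⟨fun k ↦ ρ * w k, {(d + 1, i)}, fun k ↦ mul_nonneg hρ0 (hp k),
        fun k hk ↦ by simp [hs k hk], fun k hk ↦ by simp [ht k hk], ?_, ?_, ?_, ?_⟩
      · intro d' hd' i'
        rcases Nat.le_succ_iff.1 hd' with h | rfl
        · refine le_trans ?_ (hbd d' h i')
          exact Finset.sum_le_sum fun k _ ↦ mul_le_of_le_one_left (hp k) hρ1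
        rcases sum_children_eq_zero_or le_rfl hs (i' := i') with h | h
        · rw [← Finset.mul_sum, h, mul_zero]; exact (hb _).le
        · rw [Nat.sub_self, children_zero, Finset.mem_singleton] at h
          rw [h, hsum]
      · simp
      · intro k hk _
        exact ⟨(d + 1, i), by simp, hk⟩
      · rw [hsum]; simp

/-- Frostman's lemma at scale `2 ^ (-J)` inside a unit interval. -/
lemma exists_frostman_arcs (E : Set ℝ) {s : ℝ} (hs : 0 < s) (J : ℕ) (l : ℤ) :
    ∃ (Θ : Finset ℝ) (ν : ℝ → ℝ) (𝒞 : Finset (ℕ × ℤ)), (∀ θ ∈ Θ, θ ∈ E) ∧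
      InjOn (fun θ : ℝ ↦ ⌊(2 : ℝ) ^ J * θ⌋) Θ ∧ (∀ θ, 0 ≤ ν θ) ∧
      (∀ j ≤ J, ∀ l', arcSum Θ ν j l' ≤ s ^ j) ∧ (∀ θ ∈ Θ, ⌊θ⌋ = l) ∧
      (∀ θ ∈ E, ⌊θ⌋ = l → ∃ p ∈ 𝒞, ⌊(2 : ℝ) ^ p.1 * θ⌋ = p.2) ∧
      ∑ p ∈ 𝒞, s ^ p.1 ≤ arcSum Θ ν 0 l := by
  classical
  set T : Set ℤ := (fun θ : ℝ ↦ ⌊(2 : ℝ) ^ J * θ⌋) '' E with hT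
  obtain ⟨w, 𝒞, hp, hsupp, hwT, hb, hd, hc, hm⟩ :=
    exists_frostman_tree T (fun d ↦ s ^ (J - d)) (fun d ↦ by positivity) J l
  have hrep : ∀ k : ℤ, ∃ θ : ℝ, k ∈ T → θ ∈ E ∧ ⌊(2 : ℝ) ^ J * θ⌋ = k := by
    intro k
    by_cases hk : k ∈ T
    · obtain ⟨θ, hθ, h⟩ := hk
      exact ⟨θ, fun _ ↦ ⟨hθ, h⟩⟩
    · exact ⟨0, fun h ↦ absurd h hk⟩
  choose rep hrep using hrep
  set T' := (children J l).filter (· ∈ T) with hT'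
  have hrepT : ∀ k ∈ T', rep k ∈ E ∧ ⌊(2 : ℝ) ^ J * rep k⌋ = k := fun k hk ↦
    hrep k (Finset.mem_filter.1 hk).2
  have hfl : ∀ (j : ℕ), j ≤ J → ∀ (l' : ℤ) (θ : ℝ), ⌊(2 : ℝ) ^ j * θ⌋ = l' ↔
      ⌊(2 : ℝ) ^ J * θ⌋ ∈ children (J - j) l' := by
    intro j hj l' θ
    have := floor_ediv j (J - j) θ
    rw [show j + (J - j) = J by omega] at this
    rw [mem_children, this]
  have hrinj : InjOn rep T' := fun k hk k' hk' h ↦ by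
    rw [← (hrepT k hk).2, ← (hrepT k' hk').2, h]
  have harc : ∀ j ≤ J, ∀ l', arcSum (T'.image rep) (fun θ ↦ w ⌊(2 : ℝ) ^ J * θ⌋) j l' =
      ∑ k ∈ children (J - j) l', w k := by
    intro j hj l'
    rw [arcSum, Finset.sum_filter, Finset.sum_image hrinj]
    have h1 : ∀ k ∈ T', (if ⌊(2 : ℝ) ^ j * rep k⌋ = l' then w ⌊(2 : ℝ) ^ J * rep k⌋ else 0) =
        if k ∈ children (J - j) l' then w k else 0 := by
      intro k hk
      simp only [hfl j hj, (hrepT k hk).2]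
    rw [Finset.sum_congr rfl h1, ← Finset.sum_filter]
    refine Finset.sum_subset (fun k hk ↦ (Finset.mem_filter.1 hk).2) fun k hk hk' ↦ ?_
    by_contra hne
    have h2 : k ∈ T := by_contra fun h ↦ hne (hwT k h)
    have h3 : k ∈ children J l := by_contra fun h ↦ hne (hsupp k h)
    exact hk' (by simp [hT', hk, h2, h3])
  refine ⟨T'.image rep, fun θ ↦ w ⌊(2 : ℝ) ^ J * θ⌋, 𝒞.image fun p ↦ (J - p.1, p.2), ?_, ?_,
    fun θ ↦ hp _, ?_, ?_, ?_, ?_⟩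
  · intro θ hθ
    obtain ⟨k, hk, rfl⟩ := Finset.mem_image.1 hθ
    exact (hrepT k hk).1
  · intro θ hθ θ' hθ' h
    obtain ⟨k, hk, rfl⟩ := Finset.mem_image.1 hθ
    obtain ⟨k', hk', rfl⟩ := Finset.mem_image.1 hθ'
    simp only [(hrepT k hk).2, (hrepT k' hk').2] at h
    rw [h]
  · intro j hj l'
    rw [harc j hj]
    have := hb (J - j) (by omega) l'
    rwa [show J - (J - j) = j by omega] at this
  · intro θ hθ
    obtain ⟨k, hk, rfl⟩ := Finset.mem_image.1 hθ
    have := (hfl 0 (by omega) l (rep k)).2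
    simp only [pow_zero, one_mul, Nat.sub_zero, (hrepT k hk).2] at this
    exact this (Finset.mem_filter.1 hk).1
  · intro θ hθ hθl
    have h1 := (hfl 0 (by omega) l θ).1 (by simpa using hθl)
    obtain ⟨p, hpc, hkp⟩ := hc _ h1 ⟨θ, hθ, rfl⟩
    refine ⟨(J - p.1, p.2), Finset.mem_image_of_mem _ hpc, (hfl _ (by simp) _ _).2 ?_⟩
    simpa [show J - (J - p.1) = p.1 by have := hd p hpc; omega] using hkp
  · rw [harc 0 (by omega)]
    refine le_trans ?_ hm
    refine le_of_eq (Finset.sum_image fun p hpc p' hpc' h ↦ ?_)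
    have h1 := hd p hpc
    have h2 := hd p' hpc'
    simp only [Prod.mk.injEq] at h
    exact Prod.ext (by omega) h.2

/-! ### Trigonometric polynomials on `ℝ` -/

/-- The character `s ↦ exp (2πi k s)`. -/
def expChar (k : ℤ) (s : ℝ) : ℂ := (Real.fourierChar (k * s) : ℂ)

lemma expChar_eq_exp (k : ℤ) (s : ℝ) :
    expChar k s = Complex.exp (2 * Real.pi * Complex.I * k * s) := by
  rw [expChar, Real.fourierChar_apply]
  congr 1
  push_cast
  ring

lemma norm_expChar (k : ℤ) (s : ℝ) : ‖expChar k s‖ = 1 := Circle.norm_coe _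

lemma continuous_expChar (k : ℤ) : Continuous (expChar k) := by
  unfold expChar
  have := Real.continuous_fourierChar
  fun_prop

lemma expChar_add_right (k : ℤ) (s u : ℝ) :
    expChar k (s + u) = expChar k s * expChar k u := by
  simp only [expChar_eq_exp, ← Complex.exp_add]
  push_cast
  ring_nf

lemma expChar_sub_right (k : ℤ) (s u : ℝ) :
    expChar k (s - u) = expChar k s * expChar (-k) u := by
  simp only [expChar_eq_exp, ← Complex.exp_add]
  push_cast
  ring_nf

lemma expChar_add_left (k l : ℤ) (s : ℝ) :
    expChar (k + l) s = expChar k s * expChar l s := by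
  simp only [expChar_eq_exp, ← Complex.exp_add]
  push_cast
  ring_nf

lemma conj_expChar (k : ℤ) (s : ℝ) : starRingEnd ℂ (expChar k s) = expChar (-k) s := by
  simp only [expChar_eq_exp, ← Complex.exp_conj]
  simp [Complex.conj_ofNat]

lemma integral_expChar (k : ℤ) : ∫ u in (0 : ℝ)..1, expChar k u = if k = 0 then 1 else 0 := by
  split_ifs with hk
  · simp [expChar_eq_exp, hk]
  · simp only [expChar_eq_exp]
    rw [integral_exp_mul_complex]
    · have : Complex.exp (2 * Real.pi * Complex.I * k) = 1 := by
        rw [mul_comm]; exact Complex.exp_int_mul_two_pi_mul_I k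
      simp [this]
    · simp [hk, Real.pi_ne_zero]

lemma hasDerivAt_expChar (k : ℤ) (s : ℝ) :
    HasDerivAt (expChar k) (2 * Real.pi * Complex.I * k * expChar k s) s := by
  have h : HasDerivAt (fun s : ℝ ↦ (k : ℝ) * s) k s := by
    simpa using (hasDerivAt_id s).const_mul (k : ℝ)
  have := (Real.hasDerivAt_fourierChar ((k : ℝ) * s)).scomp s h
  refine this.congr_deriv ?_
  simp [expChar]
  ring

/-- The trigonometric polynomial with coefficients `c` on the spectrum `S`. -/
def trigSum (S : Finset ℤ) (c : ℤ → ℂ) (s : ℝ) : ℂ := ∑ k ∈ S, c k * expChar k s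

lemma continuous_trigSum (S : Finset ℤ) (c : ℤ → ℂ) : Continuous (trigSum S c) := by
  unfold trigSum
  have := continuous_expChar
  fun_prop

lemma trigSum_congr {S : Finset ℤ} {c d : ℤ → ℂ} (h : ∀ k ∈ S, c k = d k) :
    trigSum S c = trigSum S d := by
  ext s
  exact Finset.sum_congr rfl fun k hk ↦ by rw [h k hk]

lemma trigSum_sum {ι : Type*} (T : Finset ι) (S : Finset ℤ) (c : ι → ℤ → ℂ) (s : ℝ) :
    trigSum S (fun k ↦ ∑ i ∈ T, c i k) s = ∑ i ∈ T, trigSum S (c i) s := by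
  simp only [trigSum, Finset.sum_mul]
  exact Finset.sum_comm

lemma trigSum_add (S : Finset ℤ) (c d : ℤ → ℂ) (s : ℝ) :
    trigSum S (c + d) s = trigSum S c s + trigSum S d s := by
  simp [trigSum, add_mul, Finset.sum_add_distrib]

lemma trigSum_sub (S : Finset ℤ) (c d : ℤ → ℂ) (s : ℝ) :
    trigSum S (c - d) s = trigSum S c s - trigSum S d s := by
  simp [trigSum, sub_mul, Finset.sum_sub_distrib]

lemma trigSum_smul (S : Finset ℤ) (z : ℂ) (c : ℤ → ℂ) (s : ℝ) :
    trigSum S (z • c) s = z * trigSum S c s := by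
  simp [trigSum, Finset.mul_sum, mul_assoc]

lemma trigSum_filter (S : Finset ℤ) (c : ℤ → ℂ) (P : ℤ → Prop) [DecidablePred P]
    (h : ∀ k ∈ S, ¬ P k → c k = 0) : trigSum (S.filter P) c = trigSum S c := by
  ext s
  refine Finset.sum_subset (Finset.filter_subset _ _) fun k hk hk' ↦ ?_
  rw [h k hk fun hP ↦ hk' (Finset.mem_filter.2 ⟨hk, hP⟩), zero_mul]

lemma integral_trigSum_mul_expChar (S : Finset ℤ) (c : ℤ → ℂ) {k : ℤ} (hk : k ∈ S) :
    ∫ u in (0 : ℝ)..1, trigSum S c u * expChar (-k) u = c k := by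
  have h : ∀ u, trigSum S c u * expChar (-k) u = ∑ l ∈ S, c l * expChar (l + -k) u := by
    intro u
    simp only [trigSum, Finset.sum_mul, expChar_add_left, mul_assoc]
  simp only [h]
  rw [intervalIntegral.integral_finsetSum fun l _ ↦ by
    exact ((continuous_expChar _).const_mul _).intervalIntegrable _ _]
  simp only [intervalIntegral.integral_const_mul, integral_expChar]
  rw [Finset.sum_eq_single k]
  · simp
  · intro l _ hl
    rw [if_neg (by omega), mul_zero]
  · exact fun h ↦ absurd hk h

lemma norm_coeff_le (S : Finset ℤ) (c : ℤ → ℂ) {k : ℤ} (hk : k ∈ S) :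
    ‖c k‖ ≤ ∫ u in (0 : ℝ)..1, ‖trigSum S c u‖ := by
  rw [← integral_trigSum_mul_expChar S c hk]
  refine (intervalIntegral.norm_integral_le_integral_norm zero_le_one).trans_eq ?_
  simp [norm_expChar]

/-- `φ` is a multiplier of norm at most `B` for the supremum norm of trigonometric polynomials. -/
def IsMultiplier (φ : ℤ → ℂ) (B : ℝ) : Prop :=
  ∀ (S : Finset ℤ) (c : ℤ → ℂ) (b : ℝ), (∀ s, ‖trigSum S c s‖ ≤ b) →
    ∀ s, ‖trigSum S (φ * c) s‖ ≤ B * b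

lemma IsMultiplier.sub {φ ψ : ℤ → ℂ} {B D : ℝ} (hφ : IsMultiplier φ B) (hψ : IsMultiplier ψ D) :
    IsMultiplier (φ - ψ) (B + D) := by
  intro S c b h s
  rw [sub_mul, trigSum_sub, add_mul]
  exact norm_sub_le_of_le (hφ S c b h s) (hψ S c b h s)

lemma IsMultiplier.smul {φ : ℤ → ℂ} {B : ℝ} (hφ : IsMultiplier φ B) (z : ℂ) :
    IsMultiplier (z • φ) (‖z‖ * B) := by
  intro S c b h s
  rw [smul_mul_assoc, trigSum_smul, norm_mul, mul_assoc]
  exact mul_le_mul_of_nonneg_left (hφ S c b h s) (norm_nonneg z)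

lemma IsMultiplier.mul {φ ψ : ℤ → ℂ} {B D : ℝ} (hφ : IsMultiplier φ B) (hψ : IsMultiplier ψ D) :
    IsMultiplier (φ * ψ) (B * D) := by
  intro S c b h s
  rw [mul_assoc, mul_assoc]
  exact hφ S _ _ (hψ S c b h) s

/-- The Fejér multiplier of width `M` centred at `k₀`. -/
def hat (k₀ : ℤ) (M : ℕ) (k : ℤ) : ℂ := ((max 0 (M - |k - k₀|) : ℤ) : ℂ) / M

lemma hat_eq_zero {k₀ : ℤ} {M : ℕ} {k : ℤ} (h : M ≤ |k - k₀|) : hat k₀ M k = 0 := by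
  rw [hat, max_eq_left (by omega)]
  simp

lemma hat_eq {k₀ : ℤ} {M : ℕ} {k : ℤ} (h : |k - k₀| ≤ M) :
    hat k₀ M k = ((M - |k - k₀| : ℤ) : ℂ) / M := by
  rw [hat, max_eq_right (by omega)]

lemma norm_hat_le (k₀ : ℤ) (M : ℕ) (k : ℤ) : ‖hat k₀ M k‖ ≤ 1 := by
  rw [hat, norm_div, Complex.norm_intCast, Complex.norm_natCast]
  refine div_le_one_of_le₀ ?_ (by positivity)
  have : |max 0 (M - |k - k₀|)| ≤ (M : ℤ) := by
    rw [abs_of_nonneg (le_max_left _ _)]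
    have := abs_nonneg (k - k₀)
    omega
  exact_mod_cast this

lemma sum_sum_ite_sub (M : ℕ) (d : ℤ) :
    ∑ a ∈ Finset.Ico (0 : ℤ) M, ∑ b ∈ Finset.Ico (0 : ℤ) M, (if -d + (a - b) = 0 then (1 : ℂ) else 0)
      = ((max 0 (M - |d|) : ℤ) : ℂ) := by
  have h1 : ∀ a : ℤ, ∑ b ∈ Finset.Ico (0 : ℤ) M, (if -d + (a - b) = 0 then (1 : ℂ) else 0) =
      if a ∈ Finset.Ico d (M + d) then 1 else 0 := by
    intro a
    have h2 : ∀ b : ℤ, -d + (a - b) = 0 ↔ b = a - d := fun b ↦ by omega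
    simp only [h2, Finset.sum_ite_eq', Finset.mem_Ico]
    congr 1
    rw [eq_iff_iff]
    constructor <;> rintro ⟨_, _⟩ <;> constructor <;> omega
  simp only [h1]
  rw [← Finset.sum_filter, Finset.filter_mem_eq_inter, Finset.Ico_inter_Ico]
  simp only [Finset.sum_const, Int.card_Ico, nsmul_eq_mul, mul_one]
  rw [← Int.cast_natCast, Int.toNat_eq_max]
  congr 1
  rcases abs_cases d with ⟨h, _⟩ | ⟨h, _⟩ <;> rw [h] <;> simp only [max_def, min_def] <;>
    split_ifs <;> omega

lemma isMultiplier_hat (k₀ : ℤ) {M : ℕ} (hM : 0 < M) : IsMultiplier (hat k₀ M) 1 := by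
  intro S c b hb s
  set D : ℝ → ℂ := fun u ↦ ∑ a ∈ Finset.Ico (0 : ℤ) M, expChar a u with hD
  have hDc : Continuous D := by
    have := continuous_expChar
    fun_prop
  have hM' : (M : ℂ) ≠ 0 := by exact_mod_cast hM.ne'
  have hDD : ∀ u, D u * starRingEnd ℂ (D u) =
      ∑ a ∈ Finset.Ico (0 : ℤ) M, ∑ b ∈ Finset.Ico (0 : ℤ) M, expChar (a - b) u := by
    intro u
    simp only [hD, map_sum, Finset.sum_mul_sum, conj_expChar, sub_eq_add_neg, expChar_add_left]
  have key : ∀ d : ℤ, ∫ u in (0 : ℝ)..1, expChar (-d) u * (D u * starRingEnd ℂ (D u)) =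
      ((max 0 (M - |d|) : ℤ) : ℂ) := by
    intro d
    rw [← sum_sum_ite_sub]
    simp only [hDD, Finset.mul_sum, ← expChar_add_left]
    rw [intervalIntegral.integral_finsetSum fun a _ ↦ by
      have := continuous_expChar
      exact Continuous.intervalIntegrable (by fun_prop) _ _]
    refine Finset.sum_congr rfl fun a _ ↦ ?_
    rw [intervalIntegral.integral_finsetSum fun b _ ↦
      (continuous_expChar _).intervalIntegrable _ _]
    simp only [integral_expChar]
  have hnorm : ∫ u in (0 : ℝ)..1, ‖D u‖ ^ 2 = M := by
    have h0 := key 0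
    have h1 : ∀ u, expChar (-0) u * (D u * starRingEnd ℂ (D u)) = ((‖D u‖ ^ 2 : ℝ) : ℂ) := by
      intro u
      rw [Complex.mul_conj, Complex.normSq_eq_norm_sq]
      simp [expChar]
    simp only [h1] at h0
    rw [intervalIntegral.integral_ofReal] at h0
    have h2 : max 0 ((M : ℤ) - |0|) = M := by simp
    rw [h2] at h0
    exact_mod_cast h0
  have hrep : trigSum S (hat k₀ M * c) s =
      ∫ u in (0 : ℝ)..1, trigSum S c (s - u) * (expChar k₀ u * (D u * starRingEnd ℂ (D u)) / M) := by
    have h1 : ∀ u, trigSum S c (s - u) * (expChar k₀ u * (D u * starRingEnd ℂ (D u)) / M) =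
        ∑ k ∈ S, (c k * expChar k s / M) *
          (expChar (-(k - k₀)) u * (D u * starRingEnd ℂ (D u))) := by
      intro u
      rw [trigSum, Finset.sum_mul]
      refine Finset.sum_congr rfl fun k _ ↦ ?_
      rw [expChar_sub_right, show -(k - k₀) = -k + k₀ by ring, expChar_add_left (-k) k₀ u]
      field_simp
    simp only [h1]
    rw [intervalIntegral.integral_finsetSum fun k _ ↦ by
      have := continuous_expChar
      exact Continuous.intervalIntegrable (by fun_prop) _ _]
    simp only [intervalIntegral.integral_const_mul, key]
    rw [trigSum]
    refine Finset.sum_congr rfl fun k _ ↦ ?_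
    rw [Pi.mul_apply, hat]
    ring
  rw [hrep]
  have hb0 : 0 ≤ b := (norm_nonneg _).trans (hb 0)
  calc _ ≤ ∫ u in (0 : ℝ)..1, b / M * ‖D u‖ ^ 2 := by
        refine intervalIntegral.norm_integral_le_of_norm_le zero_le_one ?_ ?_
        · refine .of_forall fun u _ ↦ ?_
          rw [norm_mul, norm_div, norm_mul, norm_mul, norm_expChar, RCLike.norm_conj,
            Complex.norm_natCast]
          calc _ ≤ b * (1 * (‖D u‖ * ‖D u‖) / M) :=
                mul_le_mul_of_nonneg_right (hb _) (by positivity)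
            _ = _ := by ring
        · exact Continuous.intervalIntegrable (by fun_prop) _ _
    _ = 1 * b := by
        rw [intervalIntegral.integral_const_mul, hnorm]
        have : (M : ℝ) ≠ 0 := by exact_mod_cast hM.ne'
        field_simp

/-- **Bernstein's inequality** in Lipschitz form. -/
lemma norm_trigSum_sub_le {N : ℕ} (hN : 0 < N) {S : Finset ℤ} (hS : ∀ k ∈ S, |k| ≤ N)
    {c : ℤ → ℂ} {b : ℝ} (hb : ∀ s, ‖trigSum S c s‖ ≤ b) (s u : ℝ) :
    ‖trigSum S c (s + u) - trigSum S c s‖ ≤ 4 * Real.pi * N * b * |u| := by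
  have hN' : (N : ℂ) ≠ 0 := by exact_mod_cast hN.ne'
  have hmul := (isMultiplier_hat N (M := 2 * N) (by omega)).sub
    (isMultiplier_hat (-N) (M := 2 * N) (by omega))
  have hc : ∀ k ∈ S, ((hat N (2 * N) - hat (-N) (2 * N)) * c) k = k / N * c k := by
    intro k hk
    have h := abs_le.1 (hS k hk)
    rw [Pi.mul_apply, Pi.sub_apply, hat_eq, hat_eq, abs_of_nonpos (by omega),
      abs_of_nonneg (by omega)]
    · push_cast
      field_simp
      ring
    · rw [abs_le]; push_cast; constructor <;> omega
    · rw [abs_le]; push_cast; constructor <;> omega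
  have hd : ∀ x, HasDerivAt (trigSum S c)
      (2 * Real.pi * Complex.I * N *
        trigSum S ((hat N (2 * N) - hat (-N) (2 * N)) * c) x) x := by
    intro x
    have : HasDerivAt (fun x ↦ ∑ k ∈ S, c k * expChar k x)
        (∑ k ∈ S, c k * (2 * Real.pi * Complex.I * k * expChar k x)) x :=
      HasDerivAt.fun_sum fun k _ ↦ (hasDerivAt_expChar k x).const_mul _
    refine this.congr_deriv ?_
    rw [trigSum_congr hc, trigSum, Finset.mul_sum]
    refine Finset.sum_congr rfl fun k _ ↦ ?_
    field_simp
  have hbound : ∀ x, ‖2 * Real.pi * Complex.I * N *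
      trigSum S ((hat N (2 * N) - hat (-N) (2 * N)) * c) x‖ ≤ 4 * Real.pi * N * b := by
    intro x
    have := hmul S c b hb x
    simp only [norm_mul, Complex.norm_I, Complex.norm_natCast, Complex.norm_real,
      Real.norm_of_nonneg Real.pi_pos.le, Complex.norm_ofNat]
    calc _ ≤ 2 * Real.pi * 1 * N * ((1 + 1) * b) := by gcongr
      _ = _ := by ring
  have := Convex.norm_image_sub_le_of_norm_hasDerivWithin_le
    (fun x _ ↦ (hd x).hasDerivWithinAt) (fun x _ ↦ hbound x) convex_univ (mem_univ s)
    (mem_univ (s + u))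
  simpa using this

/-- Trigonometric polynomials bounded by `1` with spectrum within `M` of `K`. -/
def testFun (K : ℤ) (M : ℕ) : Set (ℝ → ℂ) :=
  {h | ∃ (S : Finset ℤ) (c : ℤ → ℂ), (∀ k ∈ S, |k - K| ≤ M) ∧ h = trigSum S c ∧ ∀ s, ‖h s‖ ≤ 1}

lemma continuous_of_mem_testFun {K : ℤ} {M : ℕ} {h : ℝ → ℂ} (hh : h ∈ testFun K M) :
    Continuous h := by
  obtain ⟨S, c, -, rfl, -⟩ := hh
  exact continuous_trigSum S c

lemma norm_le_one_of_mem_testFun {K : ℤ} {M : ℕ} {h : ℝ → ℂ} (hh : h ∈ testFun K M) (s : ℝ) :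
    ‖h s‖ ≤ 1 := by
  obtain ⟨S, c, -, -, hb⟩ := hh
  exact hb s

lemma integrable_trigSum (p : Measure ℝ) [IsFiniteMeasure p] (S : Finset ℤ) (c : ℤ → ℂ) :
    Integrable (trigSum S c) p := by
  refine Integrable.of_bound (continuous_trigSum S c).aestronglyMeasurable (∑ k ∈ S, ‖c k‖)
    (.of_forall fun s ↦ ?_)
  refine norm_sum_le_of_le _ fun k _ ↦ ?_
  rw [norm_mul, norm_expChar, mul_one]

lemma integral_trigSum_add (q : Measure ℝ) [IsFiniteMeasure q] (S : Finset ℤ) (c : ℤ → ℂ)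
    (s : ℝ) :
    ∫ u, trigSum S c (s + u) ∂q = trigSum S (fun k ↦ c k * ∫ u, expChar k u ∂q) s := by
  have h1 : ∀ u, trigSum S c (s + u) = ∑ k ∈ S, c k * expChar k s * expChar k u := fun u ↦ by
    simp only [trigSum, expChar_add_right, mul_assoc]
  simp only [h1]
  rw [integral_finsetSum]
  · rw [trigSum]
    refine Finset.sum_congr rfl fun k _ ↦ ?_
    rw [integral_const_mul]
    ring
  · intro k _
    refine Integrable.const_mul ?_ _
    exact Integrable.of_bound (continuous_expChar k).aestronglyMeasurable 1
      (.of_forall fun u ↦ (norm_expChar k u).le)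

/-- Band limited integrals against `p` are controlled by those against a convolution of `p` with
a probability measure concentrated at a scale finer than the frequency. -/
lemma norm_integral_le_of_conv (p q : Measure ℝ) [IsFiniteMeasure p] [IsProbabilityMeasure q]
    {ρ : ℝ} (hq : ∀ᵐ u ∂q, |u| ≤ ρ) {K : ℤ} {M N : ℕ} (hN : 0 < N) (hKM : |K| + M ≤ N)
    (hρ : 4 * Real.pi * N * ρ ≤ 1 / 2) {β : ℝ}
    (hβ : ∀ h ∈ testFun K M, ‖∫ s, h s ∂(p ∗ q)‖ ≤ β) {h : ℝ → ℂ} (hh : h ∈ testFun K M) :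
    ‖∫ s, h s ∂p‖ ≤ 2 * β := by
  have key : ∀ (n : ℕ), ∀ h ∈ testFun K M, ‖∫ s, h s ∂p‖ ≤ 2 * β + (1 / 2) ^ n * p.real univ := by
    intro n
    induction n with
    | zero =>
      intro h hh
      have h0 : 0 ≤ β := (norm_nonneg _).trans (hβ h hh)
      have := norm_integral_le_of_norm_le_const (μ := p)
        (.of_forall (norm_le_one_of_mem_testFun hh))
      simp only [pow_zero]
      linarith
    | succ n ih =>
      rintro h ⟨S, c, hS, rfl, hb⟩
      have hconv : ∫ s, trigSum S c s ∂(p ∗ q) =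
          ∫ s, trigSum S (fun k ↦ c k * ∫ u, expChar k u ∂q) s ∂p := by
        rw [integral_conv (integrable_trigSum _ S c)]
        simp only [integral_trigSum_add]
      set d : ℤ → ℂ := fun k ↦ c k * ∫ u, expChar k u ∂q with hd
      have hdiff : ∀ s, ‖trigSum S (c - d) s‖ ≤ 1 / 2 := by
        intro s
        have h1 : trigSum S (c - d) s = - ∫ u, (trigSum S c (s + u) - trigSum S c s) ∂q := by
          rw [integral_sub, integral_trigSum_add, integral_const, trigSum_sub]
          · simp [hd]
          · refine Integrable.of_bound
              ((continuous_trigSum S c).comp (continuous_const.add continuous_id)).aestronglyMeasurable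
              1 (.of_forall fun u ↦ hb _)
          · exact integrable_const _
        rw [h1, norm_neg]
        have h2 : ∀ᵐ u ∂q, ‖trigSum S c (s + u) - trigSum S c s‖ ≤ 1 / 2 := by
          filter_upwards [hq] with u hu
          refine (norm_trigSum_sub_le hN (fun k hk ↦ ?_) hb s u).trans ?_
          · have := abs_sub_abs_le_abs_sub k K
            have := hS k hk
            omega
          · have := Real.pi_pos
            calc _ ≤ 4 * Real.pi * N * 1 * ρ := by gcongr
              _ ≤ 1 / 2 := by linarith
        simpa using norm_integral_le_of_norm_le_const h2
      have hmem : trigSum S ((2 : ℂ) • (c - d)) ∈ testFun K M := by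
        refine ⟨S, _, hS, rfl, fun s ↦ ?_⟩
        rw [trigSum_smul, norm_mul, Complex.norm_ofNat]
        linarith [hdiff s]
      have h3 := ih _ hmem
      have h4 := hβ _ ⟨S, c, hS, rfl, hb⟩
      rw [hconv] at h4
      have h5 : ∫ s, trigSum S c s ∂p =
          ∫ s, trigSum S d s ∂p + 1 / 2 * ∫ s, trigSum S ((2 : ℂ) • (c - d)) s ∂p := by
        simp only [trigSum_smul, trigSum_sub]
        rw [integral_const_mul, integral_sub (integrable_trigSum p S c) (integrable_trigSum p S d)]
        ring
      rw [h5]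
      refine (norm_add_le _ _).trans ?_
      rw [norm_mul]
      have : ‖(1 / 2 : ℂ)‖ = 1 / 2 := by simp
      rw [this, pow_succ]
      linarith
  refine le_of_forall_pos_le_add fun ε hε ↦ ?_
  have hlim : Filter.Tendsto (fun n : ℕ ↦ (1 / 2 : ℝ) ^ n * p.real univ) .atTop (nhds 0) := by
    simpa using (tendsto_pow_atTop_nhds_zero_of_lt_one (by norm_num : (0 : ℝ) ≤ 1 / 2)
      (by norm_num)).mul_const (p.real univ)
  obtain ⟨n, hn⟩ := (hlim.eventually (gt_mem_nhds hε)).exists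
  exact (key n h hh).trans (by linarith)

/-! ### Littlewood–Paley decomposition -/

/-- The de la Vallée-Poussin multiplier. -/
def valleePoussin (N : ℕ) : ℤ → ℂ := (2 : ℂ) • hat 0 (2 * N) - hat 0 N

lemma isMultiplier_valleePoussin {N : ℕ} (hN : 0 < N) : IsMultiplier (valleePoussin N) 3 := by
  have := ((isMultiplier_hat 0 (M := 2 * N) (by omega)).smul 2).sub (isMultiplier_hat 0 hN)
  have h3 : ‖(2 : ℂ)‖ * 1 + 1 = 3 := by norm_num
  rwa [h3] at this

lemma valleePoussin_of_le {N : ℕ} (hN : 0 < N) {k : ℤ} (hk : |k| ≤ N) :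
    valleePoussin N k = 1 := by
  have hN' : (N : ℂ) ≠ 0 := by exact_mod_cast hN.ne'
  rw [valleePoussin, Pi.sub_apply, Pi.smul_apply, hat_eq, hat_eq]
  · push_cast
    simp only [sub_zero, smul_eq_mul]
    field_simp
    ring
  · simpa using hk
  · simp only [sub_zero]; push_cast; omega

lemma valleePoussin_of_ge {N : ℕ} {k : ℤ} (hk : 2 * N ≤ |k|) : valleePoussin N k = 0 := by
  rw [valleePoussin, Pi.sub_apply, Pi.smul_apply, hat_eq_zero, hat_eq_zero]
  · simp
  · simp only [sub_zero]; omega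
  · simp only [sub_zero]; push_cast; omega

lemma norm_valleePoussin_le (N : ℕ) (k : ℤ) : ‖valleePoussin N k‖ ≤ 3 := by
  rw [valleePoussin, Pi.sub_apply, Pi.smul_apply]
  refine (norm_sub_le _ _).trans ?_
  rw [norm_smul, Complex.norm_ofNat]
  linarith [norm_hat_le 0 (2 * N) k, norm_hat_le 0 N k]

lemma norm_trigSum_valleePoussin_le (N : ℕ) (S : Finset ℤ) (c : ℤ → ℂ) (s : ℝ) :
    ‖trigSum S (valleePoussin N * c) s‖ ≤
      (3 * (4 * N + 1)) * ∫ u in (0 : ℝ)..1, ‖trigSum S c u‖ := by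
  have hI : 0 ≤ ∫ u in (0 : ℝ)..1, ‖trigSum S c u‖ :=
    intervalIntegral.integral_nonneg zero_le_one fun u _ ↦ norm_nonneg _
  rw [← trigSum_filter S _ (fun k ↦ k ∈ Finset.Icc (-(2 * N : ℤ)) (2 * N))]
  · refine (norm_sum_le_of_le _ (f := fun k ↦ (valleePoussin N * c) k * expChar k s)
      (n := fun _ ↦ 3 * ∫ u in (0 : ℝ)..1, ‖trigSum S c u‖) fun k hk ↦ ?_).trans ?_
    · rw [norm_mul, norm_expChar, mul_one, Pi.mul_apply, norm_mul]
      exact mul_le_mul (norm_valleePoussin_le N k) (norm_coeff_le S c (Finset.mem_filter.1 hk).1)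
        (norm_nonneg _) (by norm_num)
    · rw [Finset.sum_const, nsmul_eq_mul]
      have h1 : ((S.filter fun k ↦ k ∈ Finset.Icc (-(2 * N : ℤ)) (2 * N)).card : ℝ) ≤ 4 * N + 1 := by
        have : (S.filter fun k ↦ k ∈ Finset.Icc (-(2 * N : ℤ)) (2 * N)).card ≤ 4 * N + 1 := by
          refine (Finset.card_le_card (t := Finset.Icc (-(2 * N : ℤ)) (2 * N))
            fun k hk ↦ (Finset.mem_filter.1 hk).2).trans ?_
          rw [Int.card_Icc]
          omega
        exact_mod_cast this
      calc _ ≤ (4 * N + 1 : ℝ) * (3 * ∫ u in (0 : ℝ)..1, ‖trigSum S c u‖) := by gcongr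
        _ = _ := by ring
  · intro k _ hk
    rw [Pi.mul_apply, valleePoussin_of_ge, zero_mul]
    rw [Finset.mem_Icc, not_and_or] at hk
    rcases abs_cases k with ⟨h, _⟩ | ⟨h, _⟩ <;> omega

/-- The indices of the frequency intervals covering the dyadic annulus. -/
def annulus (l : ℕ) : Finset ℤ := (Finset.Icc (-2 ^ (l + 2)) (2 ^ (l + 2))).filter (2 ^ l ≤ |·|)

lemma sum_annulus_hat {l M : ℕ} (hM : 0 < M) {k : ℤ} (h1 : 2 ^ l * M < |k|)
    (h2 : |k| < 2 ^ (l + 2) * M) : ∑ m ∈ annulus l, hat (m * M) M k = 1 := by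
  have hM' : (0 : ℤ) < M := by exact_mod_cast hM
  have hMc : (M : ℂ) ≠ 0 := by exact_mod_cast hM.ne'
  set q := k / M with hq
  set r := k % M with hr
  have hk : k = q * M + r := by rw [hq, hr, Int.ediv_mul_add_emod]
  have hr0 : 0 ≤ r := Int.emod_nonneg _ hM'.ne'
  have hr1 : r < M := Int.emod_lt_of_pos _ hM'
  have hl : (1 : ℤ) ≤ 2 ^ l := one_le_pow₀ (by norm_num)
  have hl2 : (2 : ℤ) ^ (l + 2) = 4 * 2 ^ l := by ring
  have hb : q ∈ annulus l ∧ q + 1 ∈ annulus l := by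
    simp only [annulus, Finset.mem_filter, Finset.mem_Icc]
    rcases lt_or_ge k 0 with h | h
    · rw [abs_of_neg h] at h1 h2
      have hqu : q + 1 ≤ -2 ^ l := by
        have : q < -2 ^ l := by
          by_contra! hc
          nlinarith
        omega
      have hql : -2 ^ (l + 2) ≤ q := by
        by_contra! hc
        nlinarith
      rw [abs_of_neg (by omega), abs_of_neg (by omega)]
      omega
    · rw [abs_of_nonneg h] at h1 h2
      have hql : 2 ^ l ≤ q := by
        by_contra! hc
        nlinarith
      have hqu : q < 2 ^ (l + 2) := by
        by_contra! hc
        nlinarith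
      rw [abs_of_pos (by omega), abs_of_pos (by omega)]
      omega
  rw [← Finset.sum_subset (s₁ := {q, q + 1})]
  · rw [Finset.sum_pair (by omega), hat_eq, hat_eq, hk]
    · rw [show q * M + r - q * M = r by ring, show q * M + r - (q + 1) * M = r - M by ring,
        abs_of_nonneg hr0, abs_of_nonpos (by omega)]
      push_cast
      field_simp
      ring
    · rw [hk, show q * M + r - (q + 1) * M = r - M by ring, abs_le]
      omega
    · rw [hk, show q * M + r - q * M = r by ring, abs_le]
      omega
  · intro m hm
    rcases Finset.mem_insert.1 hm with rfl | hm
    · exact hb.1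
    · rw [Finset.mem_singleton.1 hm]; exact hb.2
  · intro m _ hm
    simp only [Finset.mem_insert, Finset.mem_singleton, not_or] at hm
    refine hat_eq_zero ?_
    rw [hk, show q * M + r - m * M = (q - m) * M + r by ring]
    rcases lt_or_gt_of_ne hm.1 with h | h
    · have : 1 ≤ q - m := by omega
      rw [abs_of_nonneg (by nlinarith)]
      nlinarith
    · have : q - m ≤ -2 := by omega
      rw [abs_of_nonpos (by nlinarith)]
      nlinarith

lemma norm_integral_trigSum_le_mul {p : Measure ℝ} {K : ℤ} {M : ℕ} {β : ℝ}
    (hβ : ∀ h ∈ testFun K M, ‖∫ s, h s ∂p‖ ≤ β) {S : Finset ℤ} {c : ℤ → ℂ}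
    (hS : ∀ k ∈ S, c k ≠ 0 → |k - K| ≤ M) {B : ℝ} (hB : 0 < B)
    (hb : ∀ s, ‖trigSum S c s‖ ≤ B) : ‖∫ s, trigSum S c s ∂p‖ ≤ B * β := by
  classical
  have hBc : (B : ℂ) ≠ 0 := by exact_mod_cast hB.ne'
  have hmem : trigSum S (((B : ℂ)⁻¹) • c) ∈ testFun K M := by
    refine ⟨S.filter (c · ≠ 0), ((B : ℂ)⁻¹) • c, fun k hk ↦ ?_, ?_, fun s ↦ ?_⟩
    · exact hS k (Finset.mem_filter.1 hk).1 (Finset.mem_filter.1 hk).2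
    · rw [trigSum_filter]
      intro k _ hk
      simp [not_not.1 hk]
    · rw [trigSum_smul, norm_mul, norm_inv, Complex.norm_real, Real.norm_of_nonneg hB.le]
      exact inv_mul_le_one_of_le₀ (hb s) hB.le
  have := hβ _ hmem
  simp only [trigSum_smul] at this
  rw [integral_const_mul, norm_mul, norm_inv, Complex.norm_real, Real.norm_of_nonneg hB.le] at this
  rwa [inv_mul_le_iff₀ hB] at this

lemma norm_integral_trigSum_le_tsum (p : Measure ℝ) [IsFiniteMeasure p] {l J₁ : ℕ} (hl : l ≤ J₁)
    {a : ℕ → ℝ} (ha0 : ∀ J, 0 ≤ a J) (ha : Summable a)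
    (hp : ∀ J, J₁ ≤ J → ∀ m ∈ annulus l, ∀ h ∈ testFun (m * (2 ^ (J - l) : ℕ)) (2 ^ (J - l)),
      ‖∫ s, h s ∂p‖ ≤ a J)
    (S : Finset ℤ) (c : ℤ → ℂ) {B : ℝ} (hB : 0 < B) (hb : ∀ s, ‖trigSum S c s‖ ≤ B) :
    ‖∫ s, trigSum S c s ∂p‖ ≤
      p.real univ * (3 * (4 * (2 ^ J₁ : ℕ) + 1)) * (∫ u in (0 : ℝ)..1, ‖trigSum S c u‖) +
        6 * (annulus l).card * B * ∑' i, a (i + J₁) := by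
  obtain ⟨n, hn⟩ : ∃ n : ℕ, ∀ k ∈ S, |k| ≤ (2 ^ (J₁ + n) : ℕ) := by
    refine ⟨∑ k ∈ S, k.natAbs, fun k hk ↦ ?_⟩
    have h1 : k.natAbs ≤ ∑ k ∈ S, k.natAbs :=
      Finset.single_le_sum (f := Int.natAbs) (fun _ _ ↦ Nat.zero_le _) hk
    have h2 := (Nat.lt_two_pow_self (n := J₁ + ∑ k ∈ S, k.natAbs)).le
    rw [Int.abs_eq_natAbs]
    exact_mod_cast (by omega : k.natAbs ≤ 2 ^ (J₁ + ∑ k ∈ S, k.natAbs))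
  have hstep : ∀ J, J₁ ≤ J →
      ‖∫ s, trigSum S ((valleePoussin (2 ^ (J + 1)) - valleePoussin (2 ^ J)) * c) s ∂p‖ ≤
        6 * (annulus l).card * B * a J := by
    intro J hJ
    set M := 2 ^ (J - l) with hM
    set ψ := valleePoussin (2 ^ (J + 1)) - valleePoussin (2 ^ J) with hψ
    have hψm : IsMultiplier ψ 6 := by
      have := (isMultiplier_valleePoussin (N := 2 ^ (J + 1)) (by positivity)).sub
        (isMultiplier_valleePoussin (N := 2 ^ J) (by positivity))
      norm_num at this
      exact this
    have hMl : 2 ^ l * M = 2 ^ J := by rw [hM, ← pow_add]; congr 1; omega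
    have hMl' : (2 : ℤ) ^ l * M = 2 ^ J := by exact_mod_cast hMl
    have hsum : trigSum S (ψ * c) =
        trigSum S (fun k ↦ ∑ m ∈ annulus l, (hat (m * M) M * ψ * c) k) := by
      refine trigSum_congr fun k _ ↦ ?_
      simp only [Pi.mul_apply, mul_assoc]
      rw [← Finset.sum_mul]
      rcases le_or_gt |k| (2 ^ J) with h | h
      · have : ψ k = 0 := by
          rw [hψ, Pi.sub_apply, valleePoussin_of_le (by positivity),
            valleePoussin_of_le (by positivity), sub_self]
          · push_cast; exact h
          · push_cast; rw [pow_succ]; linarith [abs_nonneg k]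
        simp [this]
      rcases le_or_gt (2 ^ (J + 2)) |k| with h' | h'
      · have : ψ k = 0 := by
          have e1 : (2 : ℤ) ^ (J + 2) = 4 * 2 ^ J := by ring
          have e2 : (2 : ℤ) ^ (J + 1) = 2 * 2 ^ J := by ring
          rw [hψ, Pi.sub_apply, valleePoussin_of_ge, valleePoussin_of_ge, sub_self]
          · push_cast; linarith
          · push_cast; linarith
        simp [this]
      · rw [sum_annulus_hat (by positivity), one_mul]
        · rw [hMl']; exact h
        · rw [pow_add, mul_right_comm, hMl', ← pow_add]; exact h'
    rw [hsum]
    simp only [trigSum_sum]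
    rw [integral_finsetSum _ fun m _ ↦ integrable_trigSum p S _]
    refine (norm_sum_le_of_le _ (n := fun _ ↦ 6 * B * a J) fun m hm ↦ ?_).trans_eq ?_
    · refine norm_integral_trigSum_le_mul (hp J hJ m hm) (fun k _ hk ↦ ?_) (by positivity) ?_
      · by_contra! hc
        exact hk (by simp only [Pi.mul_apply]; rw [hat_eq_zero hc.le]; simp)
      · intro s
        have := ((isMultiplier_hat (m * M) (M := M) (by positivity)).mul hψm) S c B hb s
        linarith
    · rw [Finset.sum_const, nsmul_eq_mul]
      ring
  have hdecomp : ∀ s, trigSum S c s = trigSum S (valleePoussin (2 ^ J₁) * c) s +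
      ∑ i ∈ Finset.range n, trigSum S
        ((valleePoussin (2 ^ (i + J₁ + 1)) - valleePoussin (2 ^ (i + J₁))) * c) s := by
    intro s
    rw [← trigSum_sum, ← trigSum_add]
    refine congrFun (trigSum_congr fun k hk ↦ ?_) s
    simp only [Pi.add_apply, Pi.mul_apply, Pi.sub_apply]
    rw [← Finset.sum_mul, ← add_mul]
    have := Finset.sum_range_sub (fun i ↦ valleePoussin (2 ^ (i + J₁)) k) n
    simp only [Nat.add_right_comm _ 1 J₁, zero_add] at this
    rw [this, add_sub_cancel, valleePoussin_of_le (by positivity), one_mul]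
    rw [add_comm n]; exact hn k hk
  have hI : ∫ s, trigSum S c s ∂p = ∫ s, trigSum S (valleePoussin (2 ^ J₁) * c) s ∂p +
      ∑ i ∈ Finset.range n, ∫ s, trigSum S
        ((valleePoussin (2 ^ (i + J₁ + 1)) - valleePoussin (2 ^ (i + J₁))) * c) s ∂p := by
    rw [integral_congr_ae (.of_forall hdecomp), integral_add (integrable_trigSum p S _)
      (integrable_finsetSum _ fun i _ ↦ integrable_trigSum p S _),
      integral_finsetSum _ fun i _ ↦ integrable_trigSum p S _]
  rw [hI]
  refine (norm_add_le _ _).trans (add_le_add ?_ ?_)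
  · have := norm_integral_le_of_norm_le_const (μ := p)
      (.of_forall (norm_trigSum_valleePoussin_le (2 ^ J₁) S c))
    push_cast at this ⊢
    linarith
  · refine (norm_sum_le_of_le _ fun i _ ↦ hstep (i + J₁) (by omega)).trans ?_
    rw [← Finset.mul_sum]
    have hsa : Summable fun i ↦ a (i + J₁) := (summable_nat_add_iff J₁).2 ha
    exact mul_le_mul_of_nonneg_left (hsa.sum_le_tsum _ fun i _ ↦ ha0 _) (by positivity)

lemma exists_trigSum_of_isCompact {Z : Set ℝ} (hZ : IsCompact Z) (hZ0 : volume Z = 0) {ε : ℝ}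
    (hε : 0 < ε) (hε1 : ε ≤ 1) : ∃ (S : Finset ℤ) (c : ℤ → ℂ), (∀ s, ‖trigSum S c s‖ ≤ 2) ∧
      (∀ s, -ε ≤ (trigSum S c s).re) ∧ (∀ s ∈ Z, 1 - ε ≤ (trigSum S c s).re) ∧
      ∫ u in (0 : ℝ)..1, ‖trigSum S c u‖ ≤ 2 * ε := by
  set Y : Set UnitAddCircle := (fun s : ℝ ↦ (s : UnitAddCircle)) '' Z with hY
  have hYc : IsCompact Y := hZ.image (AddCircle.continuous_mk' 1)
  have hY0 : volume Y = 0 := by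
    rw [AddCircle.add_projection_respects_measure (1 : ℝ) 0 hYc.measurableSet]
    refine measure_mono_null inter_subset_left ?_
    have : (QuotientAddGroup.mk ⁻¹' Y : Set ℝ) ⊆ ⋃ n : ℤ, (fun s ↦ (n : ℝ) + s) '' Z := by
      rintro s ⟨z, hz, hzs⟩
      obtain ⟨n, hn⟩ := (QuotientAddGroup.eq.1 hzs)
      refine mem_iUnion.2 ⟨n, z, hz, ?_⟩
      simp only [zsmul_eq_mul, mul_one] at hn
      simp only [hn]
      ring
    refine measure_mono_null this (measure_iUnion_null fun n ↦ ?_)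
    rw [image_add_left, measure_preimage_add]
    exact hZ0
  obtain ⟨W, hYW, hWo, hW⟩ := hYc.exists_isOpen_lt_of_lt (μ := volume) (ENNReal.ofReal ε)
    (by rw [hY0]; exact ENNReal.ofReal_pos.2 hε)
  obtain ⟨f, hf1, hf0, -, hf01⟩ := exists_continuous_one_zero_of_isCompact hYc hWo.isClosed_compl
    (disjoint_compl_right_iff_subset.2 hYW)
  set F : C(UnitAddCircle, ℂ) := ⟨fun x ↦ (f x : ℂ), by fun_prop⟩ with hF
  have hcl : F ∈ closure (Submodule.span ℂ (range (fourier (T := 1))) : Set C(UnitAddCircle, ℂ)) := by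
    have := span_fourier_closure_eq_top (T := 1)
    rw [← Submodule.topologicalClosure_coe, this]
    trivial
  obtain ⟨G, hG, hFG⟩ := Metric.mem_closure_iff.1 hcl ε hε
  obtain ⟨c, hc⟩ := (Finsupp.mem_span_range_iff_exists_finsupp).1 hG
  have hGe : ∀ s : ℝ, trigSum c.support c s = G (s : UnitAddCircle) := by
    intro s
    rw [← hc, Finsupp.sum, ContinuousMap.sum_apply, trigSum]
    refine Finset.sum_congr rfl fun k _ ↦ ?_
    rw [ContinuousMap.smul_apply, fourier_coe_apply, expChar_eq_exp, smul_eq_mul]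
    simp
  have hd : ∀ x, ‖(f x : ℂ) - G x‖ ≤ ε := by
    intro x
    rw [dist_eq_norm] at hFG
    exact ((F - G).norm_coe_le_norm x).trans hFG.le
  have hre : ∀ x, f x - ε ≤ (G x).re := by
    intro x
    have := (Complex.abs_re_le_norm _).trans (hd x)
    simp only [Complex.sub_re, Complex.ofReal_re] at this
    linarith [(abs_le.1 this).2]
  have hnorm : ∀ x, ‖G x‖ ≤ f x + ε := by
    intro x
    have h1 := norm_sub_norm_le (G x) (f x)
    rw [norm_sub_rev, Complex.norm_real, Real.norm_of_nonneg (hf01 x).1] at h1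
    linarith [hd x]
  refine ⟨c.support, c, fun s ↦ ?_, fun s ↦ ?_, fun s hs ↦ ?_, ?_⟩
  · rw [hGe]; linarith [hnorm s, (hf01 (s : UnitAddCircle)).2]
  · rw [hGe]; linarith [hre s, (hf01 (s : UnitAddCircle)).1]
  · rw [hGe]
    have : f (s : UnitAddCircle) = 1 := hf1 ⟨s, hs, rfl⟩
    linarith [hre s]
  · simp only [hGe]
    have h1 := UnitAddCircle.intervalIntegral_preimage 0 (fun x ↦ ‖G x‖)
    rw [zero_add] at h1
    rw [h1]
    have h2 : ∀ x, ‖G x‖ ≤ W.indicator 1 x + ε := by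
      intro x
      refine (hnorm x).trans ?_
      by_cases hx : x ∈ W
      · rw [indicator_of_mem hx]; simpa using (hf01 x).2
      · rw [indicator_of_notMem hx, hf0 hx]; simp
    calc _ ≤ ∫ x : UnitAddCircle, (W.indicator 1 x + ε) := by
          refine integral_mono (G.continuous.norm.integrable_of_hasCompactSupport
            (HasCompactSupport.of_compactSpace _)) ?_ h2
          exact ((integrable_indicator_iff hWo.measurableSet).2
            (integrableOn_const (by finiteness))).add (integrable_const _)
      _ = volume.real W + ε := by
          rw [integral_add ((integrable_indicator_iff hWo.measurableSet).2
            (integrableOn_const (by finiteness))) (integrable_const _),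
            integral_indicator_one hWo.measurableSet]
          simp [Measure.real]
      _ ≤ 2 * ε := by
          have : volume.real W ≤ ε := ENNReal.toReal_le_of_le_ofReal hε.le hW.le
          linarith

/-- A finite measure on the line whose frequency-localised integrals are summable over dyadic
scales is absolutely continuous. -/
lemma absolutelyContinuous_of_summable (p : Measure ℝ) [IsFiniteMeasure p] {l J₀ : ℕ}
    {a : ℕ → ℝ} (ha0 : ∀ J, 0 ≤ a J) (ha : Summable a)
    (hp : ∀ J, J₀ ≤ J → ∀ m ∈ annulus l, ∀ h ∈ testFun (m * (2 ^ (J - l) : ℕ)) (2 ^ (J - l)),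
      ‖∫ s, h s ∂p‖ ≤ a J) : p ≪ volume := by
  refine Measure.AbsolutelyContinuous.mk fun Z hZm hZ0 ↦ ?_
  rw [hZm.measure_eq_iSup_isCompact]
  simp only [ENNReal.iSup_eq_zero]
  intro Y hYZ hY
  have hY0 : volume Y = 0 := measure_mono_null hYZ hZ0
  have hreal : p.real Y ≤ 0 := by
    set C := 6 * ((annulus l).card : ℝ) * 2 with hC
    have htail : Filter.Tendsto (fun n ↦ C * ∑' i, a (i + n)) .atTop (nhds 0) := by
      simpa using (tendsto_sum_nat_add a).const_mul C
    refine le_of_forall_pos_le_add fun δ hδ ↦ ?_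
    obtain ⟨J₁, hJ₁, hJ₁'⟩ := ((htail.eventually (gt_mem_nhds (half_pos hδ))).and
      (Filter.eventually_ge_atTop (max l J₀))).exists
    set D := p.real univ * (3 * (4 * (2 ^ J₁ : ℕ) + 1)) * 2 + p.real univ + p.real univ with hD
    have hD0 : 0 ≤ D := by positivity
    set ε := min 1 (δ / 2 / (D + 1)) with hε
    have hε0 : 0 < ε := lt_min one_pos (by positivity)
    obtain ⟨S, c, h1, h2, h3, h4⟩ := exists_trigSum_of_isCompact hY hY0 hε0 (min_le_left _ _)
    have h5 := norm_integral_trigSum_le_tsum p ((le_max_left _ _).trans hJ₁') ha0 ha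
      (fun J hJ ↦ hp J (((le_max_right _ _).trans hJ₁').trans hJ)) S c two_pos h1
    rw [← hC] at h5
    have h6 : p.real Y - ε * p.real univ - ε * p.real univ ≤ ‖∫ s, trigSum S c s ∂p‖ := by
      have hintg : Integrable (fun s ↦ Y.indicator (fun _ ↦ 1 : ℝ → ℝ) s - ε - ε) p :=
        (((integrable_indicator_iff hY.measurableSet).2
          (integrableOn_const (by finiteness))).sub (integrable_const _)).sub (integrable_const _)
      calc _ = ∫ s, (Y.indicator (fun _ ↦ 1 : ℝ → ℝ) s - ε - ε) ∂p := by
            rw [integral_sub _ (integrable_const _), integral_sub _ (integrable_const _),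
              integral_indicator hY.measurableSet]
            · simp [Measure.real, mul_comm]
            · exact (integrable_indicator_iff hY.measurableSet).2
                (integrableOn_const (by finiteness))
            · exact ((integrable_indicator_iff hY.measurableSet).2
                (integrableOn_const (by finiteness))).sub (integrable_const _)
        _ ≤ ∫ s, (trigSum S c s).re ∂p := by
            refine integral_mono hintg (integrable_trigSum p S c).re fun s ↦ ?_
            by_cases hs : s ∈ Y
            · simp only [indicator_of_mem hs]; linarith [h3 s hs]
            · simp only [indicator_of_notMem hs]; linarith [h2 s]
        _ = (∫ s, trigSum S c s ∂p).re := integral_re (integrable_trigSum p S c)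
        _ ≤ _ := Complex.re_le_norm _
    have h7 : ε * D ≤ δ / 2 := by
      calc ε * D ≤ δ / 2 / (D + 1) * (D + 1) := by
            gcongr
            · exact min_le_right _ _
            · linarith
        _ = δ / 2 := by field_simp
    have h8 : p.real univ * (3 * (4 * (2 ^ J₁ : ℕ) + 1)) * ∫ u in (0 : ℝ)..1, ‖trigSum S c u‖ ≤
        p.real univ * (3 * (4 * (2 ^ J₁ : ℕ) + 1)) * (2 * ε) := by gcongr
    have h9 : ε * D = p.real univ * (3 * (4 * (2 ^ J₁ : ℕ) + 1)) * (2 * ε) + ε * p.real univ +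
        ε * p.real univ := by rw [hD]; ring
    linarith
  exact (measureReal_eq_zero_iff (by finiteness)).1 (le_antisymm hreal measureReal_nonneg)

/-! ### Hausdorff measure of limsup sets covered by dyadic arcs -/

lemma ediam_arc_le (p : ℕ × ℤ) :
    ediam {θ : ℝ | ⌊(2 : ℝ) ^ p.1 * θ⌋ = p.2} ≤ ENNReal.ofReal ((1 / 2) ^ p.1) := by
  refine ediam_le fun θ hθ θ' hθ' ↦ ?_
  rw [edist_dist, Real.dist_eq]
  refine ENNReal.ofReal_le_ofReal ?_
  have h1 := Int.floor_eq_iff.1 hθ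
  have h2 := Int.floor_eq_iff.1 hθ'
  have hp : (0 : ℝ) < 2 ^ p.1 := by positivity
  rw [one_div, inv_pow, ← one_div, le_div_iff₀ hp, ← abs_of_pos hp, ← abs_mul, abs_le]
  constructor <;> nlinarith

lemma hausdorffMeasure_eq_zero_of_covers {σ : ℝ} (hσ : 0 < σ) {X : Set ℝ}
    {𝒞 : ℕ → Finset (ℕ × ℤ)} {a : ℕ → ℝ} (ha : Summable a)
    (hsum : ∀ J, ∑ p ∈ 𝒞 J, ((2 : ℝ) ^ (-σ)) ^ p.1 ≤ a J)
    (hX : ∀ θ ∈ X, ∀ N, ∃ J, N ≤ J ∧ ∃ p ∈ 𝒞 J, ⌊(2 : ℝ) ^ p.1 * θ⌋ = p.2) :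
    μH[σ] X = 0 := by
  classical
  have ha0 : ∀ J, 0 ≤ a J := fun J ↦
    (Finset.sum_nonneg fun p _ ↦ by positivity).trans (hsum J)
  set T : ℕ → ℝ := fun n ↦ ∑' i, a (i + n) with hT
  have hTl : Filter.Tendsto T .atTop (nhds 0) := tendsto_sum_nat_add a
  have hT0 : ∀ n, 0 ≤ T n := fun n ↦ tsum_nonneg fun i ↦ ha0 _
  set arc : ℕ × ℤ → Set ℝ := fun p ↦ {θ | ⌊(2 : ℝ) ^ p.1 * θ⌋ = p.2} with harc
  set t : ℕ → ℕ × (ℕ × ℤ) → Set ℝ := fun n q ↦ if q.2 ∈ 𝒞 (q.1 + n) then arc q.2 else ∅ with ht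
  have hpow : ∀ i : ℕ, ((1 / 2 : ℝ) ^ i) ^ σ = ((2 : ℝ) ^ (-σ)) ^ i := by
    intro i
    rw [← Real.rpow_natCast, ← Real.rpow_natCast, ← Real.rpow_mul (by norm_num),
      ← Real.rpow_mul (by norm_num), one_div, Real.inv_rpow (by norm_num), ← Real.rpow_neg (by norm_num)]
    ring_nf
  have hr : Filter.Tendsto (fun n ↦ ENNReal.ofReal (T n ^ (1 / σ))) .atTop (nhds 0) := by
    have h1 : Filter.Tendsto (fun n ↦ T n ^ (1 / σ)) .atTop (nhds (0 ^ (1 / σ))) :=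
      hTl.rpow_const (.inr (by positivity))
    rw [Real.zero_rpow (by positivity)] at h1
    simpa using ENNReal.tendsto_ofReal h1
  have hmain := Measure.hausdorffMeasure_le_liminf_tsum σ X
    (fun n ↦ ENNReal.ofReal (T n ^ (1 / σ))) hr t
    (.of_forall fun n q ↦ ?_) (.of_forall fun n θ hθ ↦ ?_)
  · refine le_antisymm (hmain.trans ?_) bot_le
    have hle : ∀ n, ∑' q, ediam (t n q) ^ σ ≤ ENNReal.ofReal (T n) := by
      intro n
      rw [ENNReal.tsum_prod', hT, ENNReal.ofReal_tsum_of_nonneg (fun i ↦ ha0 _)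
        ((summable_nat_add_iff n).2 ha)]
      refine ENNReal.tsum_le_tsum fun i ↦ ?_
      rw [tsum_eq_sum (s := 𝒞 (i + n))]
      · refine le_trans ?_ (ENNReal.ofReal_le_ofReal (hsum (i + n)))
        rw [ENNReal.ofReal_sum_of_nonneg fun p _ ↦ by positivity]
        refine Finset.sum_le_sum fun p hp ↦ ?_
        simp only [ht, hp, if_true]
        refine (ENNReal.rpow_le_rpow (ediam_arc_le p) hσ.le).trans_eq ?_
        rw [ENNReal.ofReal_rpow_of_nonneg (by positivity) hσ.le, hpow]
      · intro p hp
        simp [ht, hp, hσ]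
    have h0 : Filter.Tendsto (fun n ↦ ENNReal.ofReal (T n)) .atTop (nhds 0) := by
      simpa using ENNReal.tendsto_ofReal hTl
    rw [← h0.liminf_eq]
    exact Filter.liminf_le_liminf (.of_forall hle)
  · simp only [ht]
    split_ifs with hq
    · refine (ediam_arc_le q.2).trans (ENNReal.ofReal_le_ofReal ?_)
      have h1 : ((1 / 2 : ℝ) ^ q.2.1) ^ σ ≤ T n := by
        rw [hpow]
        refine (Finset.single_le_sum (f := fun p : ℕ × ℤ ↦ ((2 : ℝ) ^ (-σ)) ^ p.1)
          (fun p _ ↦ by positivity) hq).trans ((hsum _).trans ?_)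
        exact ((summable_nat_add_iff n).2 ha).le_tsum q.1 fun j _ ↦ ha0 _
      calc ((1 / 2 : ℝ) ^ q.2.1) = (((1 / 2 : ℝ) ^ q.2.1) ^ σ) ^ (1 / σ) := by
            rw [← Real.rpow_mul (by positivity), mul_one_div_cancel hσ.ne', Real.rpow_one]
        _ ≤ _ := Real.rpow_le_rpow (by positivity) h1 (by positivity)
    · simp
  · obtain ⟨J, hJ, p, hp, hpθ⟩ := hX θ hθ n
    refine mem_iUnion.2 ⟨(J - n, p), ?_⟩
    simp only [ht, Nat.sub_add_cancel hJ, hp, if_true]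
    exact hpθ

/-! ### Mollification by balls -/

/-- The uniform probability measure on the ball of radius `ρ`. -/
def uniformBall (ρ : ℝ) : Measure E3 := ProbabilityTheory.cond volume (ball (0 : E3) ρ)

lemma isProbabilityMeasure_uniformBall {ρ : ℝ} (hρ : 0 < ρ) :
    IsProbabilityMeasure (uniformBall ρ) :=
  ProbabilityTheory.cond_isProbabilityMeasure_of_finite (measure_ball_pos _ _ hρ).ne'
    measure_ball_lt_top.ne

lemma uniformBall_compl_ball (ρ : ℝ) : uniformBall ρ (ball (0 : E3) ρ)ᶜ = 0 := by
  rw [uniformBall, ProbabilityTheory.cond_apply measurableSet_ball]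
  simp

lemma conv_uniformBall_le (μ : Measure E3) [IsFiniteMeasure μ] {ρ : ℝ} (hρ : 0 < ρ) {b : ℝ≥0∞}
    (hμ : ∀ y, μ (ball y ρ) ≤ b) :
    μ ∗ uniformBall ρ ≤ ((volume (ball (0 : E3) ρ))⁻¹ * b) • (volume : Measure E3) := by
  have := isProbabilityMeasure_uniformBall hρ
  refine Measure.le_iff.2 fun A hA ↦ ?_
  rw [← lintegral_indicator_one hA,
    Measure.lintegral_conv (measurable_one.indicator hA)]
  have hinner : ∀ x : E3, ∫⁻ u, A.indicator 1 (x + u) ∂uniformBall ρ =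
      (volume (ball (0 : E3) ρ))⁻¹ *
        ∫⁻ z, A.indicator 1 z * (ball z ρ).indicator (fun _ ↦ (1 : ℝ≥0∞)) x := by
    intro x
    rw [uniformBall, ProbabilityTheory.cond, lintegral_smul_measure, smul_eq_mul,
      ← lintegral_indicator measurableSet_ball,
      ← lintegral_add_left_eq_self (μ := volume) (fun z ↦ A.indicator 1 z *
        (ball z ρ).indicator (fun _ ↦ (1 : ℝ≥0∞)) x) x]
    congr 1
    refine lintegral_congr fun u ↦ ?_
    have : x ∈ ball (x + u) ρ ↔ u ∈ ball (0 : E3) ρ := by simp [mem_ball, dist_eq_norm]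
    by_cases hu : u ∈ ball (0 : E3) ρ
    · rw [indicator_of_mem hu, indicator_of_mem (this.2 hu), mul_one]
    · rw [indicator_of_notMem hu, indicator_of_notMem (fun h ↦ hu (this.1 h)), mul_zero]
  simp only [hinner]
  have hmeas : Measurable (Function.uncurry fun (x z : E3) ↦ A.indicator (1 : E3 → ℝ≥0∞) z *
      (ball z ρ).indicator (fun _ ↦ (1 : ℝ≥0∞)) x) := by
    refine ((measurable_one.indicator hA).comp measurable_snd).mul ?_
    have : MeasurableSet {q : E3 × E3 | dist q.1 q.2 < ρ} :=
      measurableSet_lt (by fun_prop) measurable_const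
    exact (measurable_const (a := (1 : ℝ≥0∞))).indicator this
  rw [lintegral_const_mul _ hmeas.lintegral_prod_right, lintegral_lintegral_swap hmeas.aemeasurable,
    Measure.smul_apply, smul_eq_mul, mul_assoc]
  refine mul_le_mul_right ?_ _
  have h2 : ∀ z : E3, ∫⁻ x, A.indicator 1 z * (ball z ρ).indicator (fun _ ↦ (1 : ℝ≥0∞)) x ∂μ ≤
      A.indicator (fun _ ↦ b) z := by
    intro z
    by_cases hz : z ∈ A
    · simp only [indicator_of_mem hz, Pi.one_apply, one_mul]
      rw [lintegral_indicator measurableSet_ball]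
      simpa using hμ z
    · simp [indicator_of_notMem hz]
  refine (lintegral_mono h2).trans_eq ?_
  rw [lintegral_indicator hA]
  simp

lemma conv_uniformBall_compl_ball (μ : Measure E3) [IsFiniteMeasure μ] {ρ R : ℝ} (hρ : 0 < ρ)
    (hρ1 : ρ ≤ 1) (hμ : μ (ball 0 R)ᶜ = 0) : (μ ∗ uniformBall ρ) (ball 0 (R + 1))ᶜ = 0 := by
  have := isProbabilityMeasure_uniformBall hρ
  rw [Measure.conv, Measure.map_apply (by fun_prop) measurableSet_ball.compl]
  refine measure_mono_null (t := (ball 0 R)ᶜ ×ˢ univ ∪ univ ×ˢ (ball 0 ρ)ᶜ) ?_ ?_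
  · rintro ⟨x, u⟩ hx
    simp only [mem_preimage, mem_compl_iff, mem_ball, dist_zero_right, not_lt] at hx
    simp only [mem_union, mem_prod, mem_compl_iff, mem_ball, dist_zero_right, mem_univ, and_true,
      true_and, not_lt]
    by_contra! hc
    linarith [norm_add_le x u]
  · rw [measure_union_null_iff, Measure.prod_prod, Measure.prod_prod, hμ, uniformBall_compl_ball]
    simp

lemma conv_uniformBall_le_smul (μ m : Measure E3) [IsFiniteMeasure μ] {C t R : ℝ}
    (hμ : ∀ y, ∀ ρ, 0 < ρ → ρ ≤ 1 → μ (closedBall y ρ) ≤ ENNReal.ofReal (C * ρ ^ t))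
    (hμR : μ (ball 0 R)ᶜ = 0) (hm : (volume : Measure E3).restrict (ball 0 (R + 1)) ≤ m)
    {ρ : ℝ} (hρ : 0 < ρ) (hρ1 : ρ ≤ 1) :
    μ ∗ uniformBall ρ ≤ ENNReal.ofReal (C / volume.real (ball (0 : E3) 1) * ρ ^ (t - 3)) • m := by
  have h1 := conv_uniformBall_le μ hρ (b := ENNReal.ofReal (C * ρ ^ t)) fun y ↦
    (measure_mono ball_subset_closedBall).trans (hμ y ρ hρ hρ1)
  have hv : 0 < volume.real (ball (0 : E3) 1) :=
    ENNReal.toReal_pos (measure_ball_pos _ _ one_pos).ne' measure_ball_lt_top.ne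
  have hconst : (volume (ball (0 : E3) ρ))⁻¹ * ENNReal.ofReal (C * ρ ^ t) =
      ENNReal.ofReal (C / volume.real (ball (0 : E3) 1) * ρ ^ (t - 3)) := by
    rw [Measure.addHaar_ball _ _ hρ.le, ← ofReal_measureReal (s := ball (0 : E3) 1)
      measure_ball_lt_top.ne, ← ENNReal.ofReal_mul (by positivity),
      ← ENNReal.ofReal_inv_of_pos (by positivity), ← ENNReal.ofReal_mul (by positivity)]
    congr 1
    rw [Real.rpow_sub hρ]
    have : Module.finrank ℝ E3 = 3 := by simp
    rw [this]
    norm_num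
    field_simp
  rw [hconst] at h1
  have h2 : (μ ∗ uniformBall ρ).restrict (ball 0 (R + 1)) = μ ∗ uniformBall ρ :=
    Measure.restrict_eq_self_of_ae_mem
      (mem_ae_iff.2 (conv_uniformBall_compl_ball μ hρ hρ1 hμR))
  rw [← h2]
  calc _ ≤ (ENNReal.ofReal (C / volume.real (ball (0 : E3) 1) * ρ ^ (t - 3)) •
        (volume : Measure E3)).restrict (ball 0 (R + 1)) := Measure.restrict_mono le_rfl h1
    _ ≤ _ := by
        rw [Measure.restrict_smul]
        refine Measure.le_iff.2 fun A _ ↦ ?_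
        rw [Measure.smul_apply, Measure.smul_apply, smul_eq_mul, smul_eq_mul]
        exact mul_le_mul_right (hm A) _

lemma pow_six_le_integral (q : Measure E3) [IsFiniteMeasure q] {F : E3 → ℂ} {B : ℝ}
    (hF : Continuous F) (hB : ∀ x, ‖F x‖ ≤ B) {b : ℝ} (hb0 : 0 < b) (hb : b ≤ ‖∫ x, F x ∂q‖) :
    b ^ 6 ≤ 64 * (q.real univ + 1) ^ 5 * ∫ x, ‖F x‖ ^ 6 ∂q := by
  set P := q.real univ + 1 with hP
  have hP0 : 0 < P := by positivity
  set r := b / (2 * P) with hr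
  have hr0 : 0 < r := by positivity
  have hpt : ∀ x, ‖F x‖ ≤ r + ‖F x‖ ^ 6 / r ^ 5 := by
    intro x
    rcases le_total ‖F x‖ r with h | h
    · have : 0 ≤ ‖F x‖ ^ 6 / r ^ 5 := by positivity
      linarith
    · have : ‖F x‖ ≤ ‖F x‖ ^ 6 / r ^ 5 := by
        rw [le_div_iff₀ (by positivity), pow_succ' _ 5]
        gcongr
      linarith
  have hintg : Integrable F q := Integrable.of_bound hF.aestronglyMeasurable B (.of_forall hB)
  have hintg6 : Integrable (fun x ↦ ‖F x‖ ^ 6) q := by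
    refine Integrable.of_bound (hF.norm.pow 6).aestronglyMeasurable (B ^ 6) (.of_forall fun x ↦ ?_)
    rw [norm_pow, norm_norm]
    gcongr
    exact hB x
  have h1 : b ≤ r * q.real univ + (∫ x, ‖F x‖ ^ 6 ∂q) / r ^ 5 := by
    calc b ≤ ∫ x, ‖F x‖ ∂q := hb.trans (norm_integral_le_integral_norm _)
      _ ≤ ∫ x, (r + ‖F x‖ ^ 6 / r ^ 5) ∂q :=
          integral_mono hintg.norm ((integrable_const _).add (hintg6.div_const _)) hpt
      _ = _ := by
          rw [integral_add (integrable_const _) (hintg6.div_const _), integral_const,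
            integral_div (r ^ 5) fun x ↦ ‖F x‖ ^ 6, smul_eq_mul, mul_comm]
  have h2 : r * q.real univ ≤ b / 2 := by
    calc r * q.real univ ≤ r * P := by gcongr; linarith
      _ = b / 2 := by rw [hr]; field_simp
  have h3 : b / 2 * r ^ 5 ≤ ∫ x, ‖F x‖ ^ 6 ∂q := by
    rw [← le_div_iff₀ (by positivity)]
    linarith
  calc b ^ 6 = 64 * P ^ 5 * (b / 2 * r ^ 5) := by rw [hr]; field_simp; norm_num
    _ ≤ _ := by gcongr

/-! ### Covering the bad directions at a given scale -/

lemma trigSum_inner_mem_trigPoly {γ : ℝ → E3} {θ : ℝ} {K : ℤ} {M : ℕ} {κ : ℝ}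
    (hKM : (M : ℝ) ≤ κ * |(K : ℝ)|) {h : ℝ → ℂ} (hh : h ∈ testFun K M) :
    (fun x ↦ h ⟪x, γ θ⟫) ∈ trigPoly (rayPiece γ K κ θ) := by
  obtain ⟨S, c, hS, rfl, -⟩ := hh
  have : (fun x ↦ trigSum S c ⟪x, γ θ⟫) = ∑ k ∈ S, c k • wave ((k : ℝ) • γ θ) := by
    ext x
    simp [trigSum, wave, expChar, Finset.sum_apply, inner_smul_left, real_inner_comm]
  rw [this]
  refine Submodule.sum_mem _ fun k hk ↦ Submodule.smul_mem _ _ (Submodule.subset_span ?_)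
  refine ⟨_, ⟨k, ?_, rfl⟩, rfl⟩
  have : |(k : ℝ) - K| ≤ M := by exact_mod_cast hS k hk
  exact this.trans hKM

lemma exists_finset_cover (q m : Measure E3) [IsFiniteMeasure q] [IsFiniteMeasure m] {D : ℝ}
    (hD : 0 ≤ D)
    (hq : q ≤ ENNReal.ofReal D • m) {γ : ℝ → E3} {U E : Set ℝ} (hEU : E ⊆ U) {K : ℤ} {M : ℕ}
    {κ β s G : ℝ} (hKM : (M : ℝ) ≤ κ * |(K : ℝ)|) (hβ : 0 < β)
    (hE : ∀ θ ∈ E, ∃ h ∈ testFun K M, β < ‖∫ x, h ⟪x, γ θ⟫ ∂q‖) (hs : 0 < s) (J : ℕ) (z : ℤ)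
    (hG : ∀ (Θ : Finset ℝ) (ν : ℝ → ℝ) (h : ℝ → E3 → ℂ),
        InjOn (fun θ : ℝ ↦ ⌊(2 : ℝ) ^ J * θ⌋) Θ → (∀ θ, 0 ≤ ν θ) →
        Radial γ U K κ Θ h → (∀ θ ∈ Θ, ∀ x, ‖h θ x‖ ≤ 1) →
        (∀ j ≤ J, ∀ l, arcSum Θ ν j l ≤ s ^ j) →
        ∫ x, ‖arcSum Θ (fun θ ↦ (ν θ : ℂ) • h θ) 0 z x‖ ^ 6 ∂m ≤ G * arcSum Θ ν 0 z ^ 3)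
    (hG0 : 0 ≤ G) :
    ∃ 𝒞 : Finset (ℕ × ℤ), (∀ θ ∈ E, ⌊θ⌋ = z → ∃ p ∈ 𝒞, ⌊(2 : ℝ) ^ p.1 * θ⌋ = p.2) ∧
      (∑ p ∈ 𝒞, s ^ p.1) ^ 3 ≤ 64 * (q.real univ + 1) ^ 5 * D * G / β ^ 6 := by
  obtain ⟨Θ, ν, 𝒞, hΘE, hinj, hν, hfr, hΘz, hcov, hsum⟩ := exists_frostman_arcs E hs J z
  refine ⟨𝒞, hcov, ?_⟩
  have hn : ∀ θ, ∃ h : E3 → ℂ, θ ∈ E → h ∈ trigPoly (rayPiece γ K κ θ) ∧ (∀ x, ‖h x‖ ≤ 1) ∧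
      ∃ b : ℝ, β < b ∧ ∫ x, h x ∂q = b := by
    intro θ
    by_cases hθ : θ ∈ E
    · obtain ⟨h, hh, hb⟩ := hE θ hθ
      set I := ∫ x, h ⟪x, γ θ⟫ ∂q with hI
      have hI0 : 0 < ‖I‖ := hβ.trans hb
      refine ⟨(starRingEnd ℂ I / ‖I‖) • fun x ↦ h ⟪x, γ θ⟫, fun _ ↦
        ⟨Submodule.smul_mem _ _ (trigSum_inner_mem_trigPoly hKM hh), fun x ↦ ?_, ‖I‖, hb, ?_⟩⟩
      · simp only [Pi.smul_apply, smul_eq_mul, norm_mul, norm_div, RCLike.norm_conj,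
          Complex.norm_real, norm_norm, div_self hI0.ne', one_mul]
        exact norm_le_one_of_mem_testFun hh _
      · simp only [Pi.smul_apply, smul_eq_mul]
        rw [integral_const_mul, ← hI, div_mul_eq_mul_div, mul_comm, Complex.mul_conj,
          Complex.normSq_eq_norm_sq]
        have : (‖I‖ : ℂ) ≠ 0 := by exact_mod_cast hI0.ne'
        push_cast
        field_simp
    · exact ⟨0, fun h ↦ absurd h hθ⟩
  choose h hh using hn
  set V := arcSum Θ ν 0 z with hV
  have hV0 : 0 ≤ V := arcSum_nonneg hν 0 z
  have hsum0 : 0 ≤ ∑ p ∈ 𝒞, s ^ p.1 := Finset.sum_nonneg fun p _ ↦ by positivity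
  refine (pow_le_pow_left₀ hsum0 hsum 3).trans ?_
  rcases hV0.eq_or_lt with hV0 | hV0
  · rw [← hV0]
    have : 0 ≤ 64 * (q.real univ + 1) ^ 5 * D * G / β ^ 6 := by positivity
    simpa using this
  have hrad : Radial γ U K κ Θ h := fun θ hθ ↦ ⟨hEU (hΘE θ hθ), (hh θ (hΘE θ hθ)).1⟩
  have hb1 : ∀ θ ∈ Θ, ∀ x, ‖h θ x‖ ≤ 1 := fun θ hθ ↦ (hh θ (hΘE θ hθ)).2.1
  have h6 := hG Θ ν h hinj hν hrad hb1 hfr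
  set F := arcSum Θ (fun θ ↦ (ν θ : ℂ) • h θ) 0 z with hF
  have hFb : ∀ x, ‖F x‖ ≤ V := norm_arcSum_le hν hb1 0 z
  have hFc : Continuous F := by
    refine continuous_of_mem_trigPoly (S := univ) (Submodule.sum_mem _ fun θ hθ ↦ ?_)
    exact Submodule.smul_mem _ _
      (trigPoly_mono (subset_univ _) (hrad θ (Finset.mem_filter.1 hθ).1).2)
  have hlow : β * V ≤ ‖∫ x, F x ∂q‖ := by
    refine le_trans ?_ (Complex.re_le_norm _)
    have h1 : ∫ x, F x ∂q = ∑ θ ∈ Θ with ⌊(2 : ℝ) ^ 0 * θ⌋ = z, (ν θ : ℂ) * ∫ x, h θ x ∂q := by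
      simp only [hF, arcSum, Finset.sum_apply, Pi.smul_apply, smul_eq_mul]
      rw [integral_finsetSum]
      · exact Finset.sum_congr rfl fun θ _ ↦ integral_const_mul _ _
      · intro θ hθ
        have hθ' := (Finset.mem_filter.1 hθ).1
        exact (Integrable.of_bound (continuous_of_mem_trigPoly
          (hrad θ hθ').2).aestronglyMeasurable 1 (.of_forall (hb1 θ hθ'))).const_mul _
    rw [h1, Complex.re_sum, hV, arcSum, Finset.mul_sum]
    refine Finset.sum_le_sum fun θ hθ ↦ ?_
    obtain ⟨b, hb, hbI⟩ := (hh θ (hΘE θ (Finset.mem_filter.1 hθ).1)).2.2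
    rw [hbI, ← Complex.ofReal_mul, Complex.ofReal_re, mul_comm]
    exact mul_le_mul_of_nonneg_left hb.le (hν θ)
  have h7 := pow_six_le_integral q hFc hFb (by positivity : 0 < β * V) hlow
  have h8 : ∫ x, ‖F x‖ ^ 6 ∂q ≤ D * ∫ x, ‖F x‖ ^ 6 ∂m := by
    have hintg : Integrable (fun x ↦ ‖F x‖ ^ 6) m := by
      refine Integrable.of_bound (hFc.norm.pow 6).aestronglyMeasurable (V ^ 6)
        (.of_forall fun x ↦ ?_)
      rw [norm_pow, norm_norm]
      gcongr
      exact hFb x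
    have := integral_mono_measure hq (.of_forall fun x ↦ by positivity)
      (hintg.smul_measure ENNReal.ofReal_ne_top)
    rwa [integral_smul_measure, ENNReal.toReal_ofReal hD, smul_eq_mul] at this
  rw [le_div_iff₀ (by positivity)]
  refine le_of_mul_le_mul_right ?_ (by positivity : 0 < V ^ 3)
  calc V ^ 3 * β ^ 6 * V ^ 3 = (β * V) ^ 6 := by ring
    _ ≤ 64 * (q.real univ + 1) ^ 5 * ∫ x, ‖F x‖ ^ 6 ∂q := h7
    _ ≤ 64 * (q.real univ + 1) ^ 5 * (D * (G * V ^ 3)) := by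
        gcongr
        exact h8.trans (mul_le_mul_of_nonneg_left h6 hD)
    _ = _ := by ring

lemma sum_biUnion_le_sum {ι α : Type*} [DecidableEq ι] [DecidableEq α] (S : Finset ι)
    (T : ι → Finset α) {f : α → ℝ} (hf : ∀ p, 0 ≤ f p) :
    ∑ p ∈ S.biUnion T, f p ≤ ∑ k ∈ S, ∑ p ∈ T k, f p := by
  induction S using Finset.induction_on with
  | empty => simp
  | insert k S hk ih =>
    rw [Finset.biUnion_insert, Finset.sum_insert hk]
    have h1 := Finset.sum_union_inter (s₁ := T k) (s₂ := S.biUnion T) (f := f)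
    have h2 : 0 ≤ ∑ p ∈ T k ∩ S.biUnion T, f p := Finset.sum_nonneg fun p _ ↦ hf p
    linarith

lemma integral_conv_uniformBall (μ : Measure E3) [IsFiniteMeasure μ] {ρ : ℝ} (hρ : 0 < ρ) (v : E3)
    {h : ℝ → ℂ} (hh : Continuous h) :
    ∫ s, h s ∂(μ.map (fun x ↦ ⟪x, v⟫) ∗ (uniformBall ρ).map (fun x ↦ ⟪x, v⟫)) =
      ∫ x, h ⟪x, v⟫ ∂(μ ∗ uniformBall ρ) := by
  have := isProbabilityMeasure_uniformBall hρ
  have hL : (fun x : E3 ↦ ⟪x, v⟫) = innerSL ℝ v := by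
    ext x
    rw [innerSL_apply_apply, real_inner_comm]
  rw [hL, ← Measure.map_conv_continuousLinearMap, integral_map (by fun_prop)
    hh.aestronglyMeasurable]
  simp only [innerSL_apply_apply, real_inner_comm]

lemma map_uniformBall_ae {ρ : ℝ} {v : E3} (hv : ‖v‖ = 1) :
    ∀ᵐ u ∂(uniformBall ρ).map (fun x ↦ ⟪x, v⟫), |u| ≤ ρ := by
  rw [ae_map_iff (by fun_prop) (measurableSet_le (by fun_prop) measurable_const)]
  have : ∀ᵐ x ∂uniformBall ρ, x ∈ ball (0 : E3) ρ := mem_ae_iff.2 (uniformBall_compl_ball ρ)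
  filter_upwards [this] with x hx
  refine (abs_real_inner_le_norm x v).trans ?_
  rw [hv, mul_one]
  exact (mem_ball_zero_iff.1 hx).le

/-- The projections of a `t`-dimensional measure onto the directions of a nondegenerate curve are
absolutely continuous outside a set of directions of dimension at most `(3 - t) / 2`. -/
theorem BandLimited.hausdorffMeasure_not_absolutelyContinuous {m : Measure E3} [IsFiniteMeasure m]
    {r : ℝ} (hm : BandLimited m r) (hr : 0 ≤ r) {γ : ℝ → E3} {U : Set ℝ} {c₁ c₂ c₃ : ℝ}
    (hQ : QuadNondeg γ U c₁ c₂) (hc₁ : 0 < c₁) (hc₂ : 0 < c₂)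
    (hU : ∀ θ ∈ U, ‖γ θ‖ = 1) (hc₃ : 0 < c₃)
    (hlow : ∀ θ ∈ U, ∀ θ' ∈ U, c₃ * |θ - θ'| ≤ ‖γ θ - γ θ'‖)
    (μ : Measure E3) [IsFiniteMeasure μ] {C t R σ : ℝ} (hC : 0 < C)
    (hμ : ∀ y, ∀ ρ, 0 < ρ → ρ ≤ 1 → μ (closedBall y ρ) ≤ ENNReal.ofReal (C * ρ ^ t))
    (hμR : μ (ball 0 R)ᶜ = 0) (hmR : (volume : Measure E3).restrict (ball 0 (R + 1)) ≤ m)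
    (hσ : 0 < σ) (hσt : (3 - t) / 2 < σ) :
    μH[σ] {θ ∈ U | ¬ μ.map (fun x ↦ ⟪x, γ θ⟫) ≪ volume} = 0 := by
  classical
  set s : ℝ := 2 ^ (-σ) with hs
  have hs0 : 0 < s := by positivity
  have hs1 : s < 1 := Real.rpow_lt_one_of_one_lt_of_neg (by norm_num) (by linarith)
  set w : ℝ := 2 ^ (3 - t) * s ^ 2 with hw
  have hw0 : 0 < w := by positivity
  have hw1 : w < 1 := by
    rw [hw, hs, ← Real.rpow_natCast, ← Real.rpow_mul (by norm_num), ← Real.rpow_add (by norm_num)]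
    refine Real.rpow_lt_one_of_one_lt_of_neg (by norm_num) ?_
    push_cast
    linarith
  obtain ⟨y, hy1, hyw⟩ : ∃ y : ℝ, 1 < y ∧ y ^ 11 * w < 1 := by
    have h1 : Filter.Tendsto (fun y : ℝ ↦ y ^ 11 * w) (nhdsWithin 1 (Ioi 1)) (nhds (1 ^ 11 * w)) :=
      (Continuous.tendsto (by fun_prop) 1).mono_left nhdsWithin_le_nhds
    rw [one_pow, one_mul] at h1
    obtain ⟨y, h2, h3⟩ := ((h1.eventually (gt_mem_nhds hw1)).and self_mem_nhdsWithin).exists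
    exact ⟨y, h3, h2⟩
  have hy0 : 0 < y := by linarith
  obtain ⟨n, J₀, C', hn, hC', hsix⟩ :=
    hm.exists_integral_norm_six_arcSum_le hQ hc₁ hc₂ hr hU hc₃ hlow hy1 hs0 hs1
  set l := 2 * n with hl
  set Ja := max J₀ l with hJa
  set κ : ℝ := 1 / (40 * Real.pi) with hκ
  have hpi := Real.pi_pos
  have hκ0 : 0 < κ := by positivity
  have hκ1 : κ ≤ 1 := by
    rw [hκ, div_le_one (by positivity)]
    linarith [Real.pi_gt_three]
  set ρ : ℕ → ℝ := fun J ↦ κ * (2 ^ J)⁻¹ with hρ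
  have hρ0 : ∀ J, 0 < ρ J := fun J ↦ by positivity
  have hρ1 : ∀ J, ρ J ≤ 1 := fun J ↦ by
    have : ((2 : ℝ) ^ J)⁻¹ ≤ 1 := inv_le_one_of_one_le₀ (one_le_pow₀ (by norm_num))
    exact mul_le_one₀ hκ1 (by positivity) this
  set v₁ := volume.real (ball (0 : E3) 1) with hv₁
  have hv : 0 < v₁ := ENNReal.toReal_pos (measure_ball_pos _ _ one_pos).ne' measure_ball_lt_top.ne
  set q : ℕ → Measure E3 := fun J ↦ μ ∗ uniformBall (ρ J) with hq
  have hqfin : ∀ J, IsFiniteMeasure (q J) := fun J ↦ by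
    have := isProbabilityMeasure_uniformBall (hρ0 J)
    infer_instance
  have hqmass : ∀ J, (q J).real univ = μ.real univ := fun J ↦ by
    have := isProbabilityMeasure_uniformBall (hρ0 J)
    rw [Measure.real, Measure.real, hq]
    simp only [Measure.conv]
    rw [Measure.map_apply (by fun_prop) MeasurableSet.univ, preimage_univ, ← univ_prod_univ,
      Measure.prod_prod, measure_univ (μ := uniformBall (ρ J)), mul_one]
  have hqD : ∀ J, q J ≤ ENNReal.ofReal (C / v₁ * κ ^ (t - 3) * ((2 : ℝ) ^ (3 - t)) ^ J) • m := by
    intro J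
    have := conv_uniformBall_le_smul μ m hμ hμR hmR (hρ0 J) (hρ1 J)
    have he : ρ J ^ (t - 3) = κ ^ (t - 3) * ((2 : ℝ) ^ (3 - t)) ^ J := by
      rw [hρ]
      simp only
      rw [Real.mul_rpow hκ0.le (by positivity), Real.inv_rpow (by positivity),
        ← Real.rpow_neg (by positivity), ← Real.rpow_natCast, ← Real.rpow_natCast,
        ← Real.rpow_mul (by norm_num), ← Real.rpow_mul (by norm_num)]
      ring_nf
    rwa [he, ← mul_assoc] at this
  set B : ℕ → ℤ → Set ℝ := fun J k ↦ {θ ∈ U | ∃ h ∈ testFun (k * (2 ^ (J - l) : ℕ)) (2 ^ (J - l)),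
    (y⁻¹) ^ J < ‖∫ x, h ⟪x, γ θ⟫ ∂(q J)‖} with hB
  -- directions avoiding the bad sets from some scale on are good
  have hgood : ∀ θ ∈ U, (∃ N, ∀ J, N ≤ J → ∀ k ∈ annulus l, θ ∉ B J k) →
      μ.map (fun x ↦ ⟪x, γ θ⟫) ≪ volume := by
    rintro θ hθ ⟨N, hN⟩
    refine absolutelyContinuous_of_summable _ (l := l) (J₀ := max N Ja)
      (a := fun J ↦ 2 * (y⁻¹) ^ J) (fun J ↦ by positivity)
      ((summable_geometric_of_lt_one (by positivity) (inv_lt_one_of_one_lt₀ hy1)).mul_left 2)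
      fun J hJ k hk h hh ↦ ?_
    have hpr := isProbabilityMeasure_uniformBall (hρ0 J)
    have : IsProbabilityMeasure ((uniformBall (ρ J)).map fun x ↦ ⟪x, γ θ⟫) :=
      Measure.isProbabilityMeasure_map (by fun_prop)
    have hlJ : l ≤ J := (le_max_right _ _).trans ((le_max_right _ _).trans hJ)
    have hpow : (2 : ℤ) ^ l * 2 ^ (J - l) = 2 ^ J := by rw [← pow_add]; congr 1; omega
    have hl1 : (1 : ℤ) ≤ 2 ^ l := one_le_pow₀ (by norm_num)
    have hJl : (1 : ℤ) ≤ 2 ^ (J - l) := one_le_pow₀ (by norm_num)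
    refine norm_integral_le_of_conv _ _ (map_uniformBall_ae (ρ := ρ J) (hU θ hθ)) (N := 5 * 2 ^ J)
      (by positivity) ?_ ?_ (fun h hh ↦ ?_) hh
    · simp only [annulus, Finset.mem_filter, Finset.mem_Icc, ← abs_le] at hk
      rw [abs_mul]
      push_cast
      rw [abs_of_pos (by positivity : (0 : ℤ) < 2 ^ (J - l))]
      have hk1 : |k| ≤ 2 ^ l * 4 := by
        have := hk.1
        rw [pow_add] at this
        norm_num at this
        exact this
      nlinarith
    · rw [hρ, hκ]
      push_cast
      field_simp
      norm_num
    · rw [integral_conv_uniformBall μ (hρ0 J) _ (continuous_of_mem_testFun hh)]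
      by_contra! hc
      exact hN J ((le_max_left _ _).trans hJ) k hk ⟨hθ, h, hh, hc⟩
  set Q := 64 * (μ.real univ + 1) ^ 5 * (C / v₁ * κ ^ (t - 3)) * C' with hQdef
  have hQ0 : 0 ≤ Q := by positivity
  set ζ : ℝ := (y ^ 11 * w) ^ (1 / 3 : ℝ) with hζ
  have hζ0 : 0 ≤ ζ := by positivity
  have hζ1 : ζ < 1 := Real.rpow_lt_one (by positivity) hyw (by norm_num)
  have hζ3 : ζ ^ 3 = y ^ 11 * w := by
    rw [hζ, ← Real.rpow_natCast, ← Real.rpow_mul (by positivity)]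
    norm_num
  have hcover : ∀ (z : ℤ) (J : ℕ) (k : ℤ), ∃ 𝒞 : Finset (ℕ × ℤ), Ja ≤ J → k ∈ annulus l →
      (∀ θ ∈ B J k, ⌊θ⌋ = z → ∃ p ∈ 𝒞, ⌊(2 : ℝ) ^ p.1 * θ⌋ = p.2) ∧
        ∑ p ∈ 𝒞, s ^ p.1 ≤ (Q + 1) * ζ ^ J := by
    intro z J k
    by_cases hJk : Ja ≤ J ∧ k ∈ annulus l
    swap
    · exact ⟨∅, fun h1 h2 ↦ absurd ⟨h1, h2⟩ hJk⟩
    obtain ⟨hJ, hk⟩ := hJk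
    have hlJ : l ≤ J := (le_max_right _ _).trans hJ
    have hpow : (2 : ℝ) ^ l * 2 ^ (J - l) = 2 ^ J := by rw [← pow_add]; congr 1; omega
    have hkl : (2 : ℝ) ^ l ≤ |(k : ℝ)| := by
      have := (Finset.mem_filter.1 hk).2
      exact_mod_cast this
    have h4 : (4 : ℝ) ^ n = 2 ^ l := by rw [hl, pow_mul]; norm_num
    have hKabs : |(((k * (2 ^ (J - l) : ℕ) : ℤ)) : ℝ)| = |(k : ℝ)| * 2 ^ (J - l) := by
      push_cast
      rw [abs_mul, abs_of_pos (by positivity : (0 : ℝ) < 2 ^ (J - l))]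
    have := hqfin J
    obtain ⟨𝒞, h1, h2⟩ := exists_finset_cover (q J) m (by positivity) (hqD J) (γ := γ) (U := U)
      (E := B J k) (fun θ hθ ↦ hθ.1) (K := k * (2 ^ (J - l) : ℕ)) (M := 2 ^ (J - l))
      (κ := 1 / 4 ^ n) (β := (y⁻¹) ^ J) (s := s) (G := C' * y ^ (5 * J) * s ^ (2 * J))
      (by
        rw [hKabs, h4]
        push_cast
        rw [one_div, le_inv_mul_iff₀ (by positivity)]
        exact mul_le_mul_of_nonneg_right hkl (by positivity))
      (by positivity) (fun θ hθ ↦ hθ.2) hs0 J z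
      (fun Θ ν h hi hν hrad hb hfr ↦ hsix J ((le_max_left _ _).trans hJ) _
        (by
          rw [hKabs, ← hpow]
          exact mul_le_mul_of_nonneg_right hkl (by positivity)) Θ ν h hi hν hrad hb hfr z)
      (by positivity)
    refine ⟨𝒞, fun _ _ ↦ ⟨h1, ?_⟩⟩
    rw [hqmass] at h2
    have h3 : 64 * (μ.real univ + 1) ^ 5 * (C / v₁ * κ ^ (t - 3) * ((2 : ℝ) ^ (3 - t)) ^ J) *
        (C' * y ^ (5 * J) * s ^ (2 * J)) / ((y⁻¹) ^ J) ^ 6 = Q * (ζ ^ J) ^ 3 := by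
      rw [← pow_mul ζ, mul_comm J 3, pow_mul ζ, hζ3, hQdef, hw, ← pow_mul, inv_pow, div_inv_eq_mul]
      ring
    rw [h3] at h2
    refine le_of_pow_le_pow_left₀ (n := 3) (by norm_num) (by positivity) (h2.trans ?_)
    rw [mul_pow]
    gcongr
    nlinarith [sq_nonneg Q, mul_nonneg hQ0 (sq_nonneg Q)]
  choose 𝒞 h𝒞 using hcover
  -- conclusion on each unit interval
  have hz : ∀ z : ℤ,
      μH[σ] ({θ ∈ U | ¬ μ.map (fun x ↦ ⟪x, γ θ⟫) ≪ volume} ∩ {θ | ⌊θ⌋ = z}) = 0 := by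
    intro z
    refine hausdorffMeasure_eq_zero_of_covers hσ
      (𝒞 := fun J ↦ if Ja ≤ J then (annulus l).biUnion (𝒞 z J) else ∅)
      (a := fun J ↦ (annulus l).card * ((Q + 1) * ζ ^ J))
      (((summable_geometric_of_lt_one hζ0 hζ1).mul_left _).mul_left _) (fun J ↦ ?_) ?_
    · split_ifs with hJ
      · calc ∑ p ∈ (annulus l).biUnion (𝒞 z J), s ^ p.1
            ≤ ∑ k ∈ annulus l, ∑ p ∈ 𝒞 z J k, s ^ p.1 := by
              exact sum_biUnion_le_sum _ _ fun p ↦ by positivity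
          _ ≤ ∑ k ∈ annulus l, (Q + 1) * ζ ^ J :=
              Finset.sum_le_sum fun k hk ↦ (h𝒞 z J k hJ hk).2
          _ = _ := by rw [Finset.sum_const, nsmul_eq_mul]
      · simp only [Finset.sum_empty]
        positivity
    · rintro θ ⟨⟨hθU, hθ⟩, hθz⟩ N
      have h1 : ¬ _ := fun h ↦ hθ (hgood θ hθU h)
      push Not at h1
      obtain ⟨J, hJ, k, hk, hθB⟩ := h1 (max N Ja)
      have hJa' : Ja ≤ J := (le_max_right _ _).trans hJ
      obtain ⟨p, hp, hpθ⟩ := (h𝒞 z J k hJa' hk).1 θ hθB hθz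
      refine ⟨J, (le_max_left _ _).trans hJ, p, ?_, hpθ⟩
      rw [if_pos hJa', Finset.mem_biUnion]
      exact ⟨k, hk, hp⟩
  refine measure_mono_null (t := ⋃ z : ℤ,
    {θ ∈ U | ¬ μ.map (fun x ↦ ⟪x, γ θ⟫) ≪ volume} ∩ {θ | ⌊θ⌋ = z}) ?_ (measure_iUnion_null hz)
  exact fun θ hθ ↦ mem_iUnion.2 ⟨⌊θ⌋, hθ, rfl⟩

open scoped FourierTransform SchwartzMap in
/-- Every ball carries a band-limited majorant of Lebesgue measure. -/
lemma exists_bandLimited (R : ℝ) : ∃ m : Measure E3, IsFiniteMeasure m ∧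
    (∃ r, 0 ≤ r ∧ BandLimited m r) ∧ (volume : Measure E3).restrict (ball 0 R) ≤ m := by
  set δ : ℝ := 1 / (2 * Real.pi * (|R| + 1)) with hδ
  have hpi := Real.pi_pos
  have hδ0 : 0 < δ := by positivity
  let φ : ContDiffBump (0 : E3) := ⟨δ / 2, δ, by positivity, by linarith⟩
  have hφs : ∀ v, δ ≤ ‖v‖ → φ v = 0 := fun v hv ↦ φ.zero_of_le_dist (by simpa using hv)
  have hcd : ContDiff ℝ ((⊤ : ℕ∞) : WithTop ℕ∞) fun v ↦ (φ v : ℂ) :=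
    Complex.ofRealCLM.contDiff.comp φ.contDiff
  have hcs : HasCompactSupport fun v ↦ (φ v : ℂ) :=
    φ.hasCompactSupport.comp_left (g := fun z : ℝ ↦ (z : ℂ)) Complex.ofReal_zero
  let g : 𝓢(E3, ℂ) := hcs.toSchwartzMap hcd
  have hg : ∀ v, g v = (φ v : ℂ) := fun v ↦ rfl
  have hI : 0 < ∫ v, φ v := φ.integral_pos
  set c : ℝ := ((∫ v, φ v) / 2) ^ 2 with hc
  have hc0 : 0 < c := by positivity
  have hintg : Integrable (fun x ↦ ‖𝓕 g x‖ ^ 2) (volume : Measure E3) := by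
    have := (𝓕 g).memLp 2 (volume : Measure E3)
    exact (memLp_two_iff_integrable_sq_norm this.1).1 this
  have hcont : Continuous fun x ↦ ‖𝓕 g x‖ ^ 2 / c := by
    have := (𝓕 g).continuous
    fun_prop
  have hfin : IsFiniteMeasure ((volume : Measure E3).withDensity
      fun x ↦ ENNReal.ofReal (‖𝓕 g x‖ ^ 2 / c)) := isFiniteMeasure_withDensity_ofReal
    (hintg.div_const c).2
  refine ⟨_, hfin, ⟨2 * δ, by positivity, fun ω hω ↦ ?_⟩, ?_⟩
  · -- the Fourier transform of the weight is an autocorrelation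
    have hcd' : ContDiff ℝ ((⊤ : ℕ∞) : WithTop ℕ∞) ((fun v ↦ (φ v : ℂ)) ∘ fun v ↦ v + ω) :=
      hcd.comp (by fun_prop)
    have hcs' : HasCompactSupport ((fun v ↦ (φ v : ℂ)) ∘ fun v ↦ v + ω) :=
      hcs.comp_homeomorph (Homeomorph.addRight ω)
    let g' : 𝓢(E3, ℂ) := hcs'.toSchwartzMap hcd'
    have h1 := SchwartzMap.integral_inner_fourier_fourier g g'
    have h2 : ∀ x, 𝓕 g' x = wave ω x * 𝓕 g x := fun x ↦ by
      have := congrFun (VectorFourier.fourierIntegral_comp_add_right Real.fourierChar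
        (volume : Measure E3) (innerₗ E3) (fun v ↦ (φ v : ℂ)) ω) x
      exact this
    have h3 : ∫ x, (inner ℂ (g x) (g' x) : ℂ) = 0 := by
      rw [← integral_zero E3 ℂ]
      congr 1 with x
      have h4 : g' x = (φ (x + ω) : ℂ) := rfl
      rw [hg, h4]
      by_cases hx : δ ≤ ‖x‖
      · simp [hφs x hx]
      · have : δ ≤ ‖x + ω‖ := by
          have := norm_sub_le (x + ω) x
          rw [add_sub_cancel_left] at this
          linarith
        simp [hφs _ this]
    rw [h3] at h1
    rw [integral_withDensity_eq_integral_toReal_smul (by fun_prop) (by simp)]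
    have h5 : ∀ x, (ENNReal.ofReal (‖𝓕 g x‖ ^ 2 / c)).toReal • wave ω x =
        (c⁻¹ : ℂ) * inner ℂ (𝓕 g x) (𝓕 g' x) := fun x ↦ by
      rw [ENNReal.toReal_ofReal (by positivity), h2, RCLike.inner_apply, Complex.real_smul,
        mul_assoc, Complex.mul_conj, Complex.normSq_eq_norm_sq]
      push_cast
      ring
    simp_rw [h5]
    rw [integral_const_mul, h1, mul_zero]
  · rw [Measure.le_iff]
    intro S hS
    rw [Measure.restrict_apply hS, withDensity_apply _ hS, ← lintegral_indicator hS,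
      ← lintegral_indicator_one (hS.inter measurableSet_ball)]
    refine lintegral_mono fun x ↦ ?_
    by_cases hx : x ∈ S ∩ ball 0 R
    swap
    · simp [indicator_of_notMem hx]
    rw [indicator_of_mem hx, indicator_of_mem hx.1, Pi.one_apply, ENNReal.one_le_ofReal,
      one_le_div hc0, hc]
    refine pow_le_pow_left₀ (by positivity) ?_ 2
    have hxR : ‖x‖ < |R| + 1 := by
      have := mem_ball_zero_iff.1 hx.2
      linarith [le_abs_self R]
    have h6 : (𝓕 g x).re = ∫ v, Real.cos (2 * Real.pi * ⟪v, x⟫) * φ v := by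
      have h7 : 𝓕 g x = ∫ v, Real.fourierChar (-⟪v, x⟫) • (φ v : ℂ) := rfl
      have h8 : Integrable (fun v ↦ Real.fourierChar (-⟪v, x⟫) • (φ v : ℂ)) := by
        exact (Real.fourierIntegral_convergent_iff x).2 φ.integrable.ofReal
      rw [h7, ← RCLike.re_eq_complex_re, ← integral_re h8]
      congr 1 with v
      simp [Circle.smul_def, Real.fourierChar_apply, Complex.exp_re]
    refine le_trans ?_ (Complex.re_le_norm _)
    rw [h6, ← integral_div]
    refine integral_mono (φ.integrable.div_const _) ?_ fun v ↦ ?_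
    · refine φ.integrable.bdd_mul (c := 1) ?_ ?_
      · exact Continuous.aestronglyMeasurable (by fun_prop)
      · exact Filter.Eventually.of_forall fun v ↦ Real.abs_cos_le_one _
    · by_cases hv : δ ≤ ‖v‖
      · simp [hφs v hv]
      have h9 : |2 * Real.pi * ⟪v, x⟫| ≤ 1 := by
        rw [abs_mul, abs_of_pos (by positivity)]
        have h10 : |⟪v, x⟫| ≤ δ * (|R| + 1) := (abs_real_inner_le_norm v x).trans
          (mul_le_mul (not_le.1 hv).le hxR.le (norm_nonneg _) hδ0.le)
        calc 2 * Real.pi * |⟪v, x⟫| ≤ 2 * Real.pi * (δ * (|R| + 1)) := by gcongr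
          _ = 1 := by rw [hδ]; field_simp
      have h11 := Real.one_sub_sq_div_two_le_cos (x := 2 * Real.pi * ⟪v, x⟫)
      have h12 := (sq_le_one_iff_abs_le_one _).2 h9
      have h13 := φ.nonneg (x := v)
      simp only
      nlinarith

/-- The cross product on Euclidean space. -/
def cross (u v : E3) : E3 :=
  !₂[u 1 * v 2 - u 2 * v 1, u 2 * v 0 - u 0 * v 2, u 0 * v 1 - u 1 * v 0]

lemma inner_cross (u v x : E3) : ⟪cross u v, x⟫ =
    (u 1 * v 2 - u 2 * v 1) * x 0 + (u 2 * v 0 - u 0 * v 2) * x 1 +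
      (u 0 * v 1 - u 1 * v 0) * x 2 := by
  simp [cross, PiLp.inner_apply, Fin.sum_univ_three]
  ring

lemma inner_cross_ne_zero {u v x : E3} (h : LinearIndependent ℝ ![u, v, x]) :
    ⟪cross u v, x⟫ ≠ 0 := by
  have h1 := h.map' (WithLp.linearEquiv 2 ℝ (Fin 3 → ℝ)).toLinearMap (LinearEquiv.ker _)
  have h2 : LinearIndependent ℝ (Matrix.of ![WithLp.ofLp u, WithLp.ofLp v, WithLp.ofLp x]).row := by
    have h3 : (Matrix.of ![WithLp.ofLp u, WithLp.ofLp v, WithLp.ofLp x]).row =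
        (WithLp.linearEquiv 2 ℝ (Fin 3 → ℝ)).toLinearMap ∘ ![u, v, x] := by
      ext i j
      fin_cases i <;> rfl
    rw [h3]
    exact h1
  rw [Matrix.linearIndependent_rows_iff_isUnit, Matrix.isUnit_iff_isUnit_det, isUnit_iff_ne_zero,
    Matrix.det_fin_three] at h2
  rw [inner_cross]
  intro h3
  apply h2
  simp
  linarith

lemma exists_mem_uIcc_sub_eq {f f' : ℝ → ℝ} (hf : ∀ x, HasDerivAt f (f' x) x) (x y : ℝ) :
    ∃ ξ ∈ uIcc x y, f y - f x = f' ξ * (y - x) := by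
  wlog hxy : x ≤ y generalizing x y
  · obtain ⟨ξ, h1, h2⟩ := this y x (le_of_not_ge hxy)
    exact ⟨ξ, uIcc_comm x y ▸ h1, by linarith⟩
  rcases hxy.eq_or_lt with rfl | hlt
  · exact ⟨x, left_mem_uIcc, by simp⟩
  obtain ⟨ξ, h1, h2⟩ := exists_hasDerivAt_eq_slope f f' hlt
    (fun z _ ↦ (hf z).continuousAt.continuousWithinAt) fun z _ ↦ hf z
  refine ⟨ξ, uIcc_of_le hxy ▸ Ioo_subset_Icc_self h1, ?_⟩
  rw [h2, div_mul_cancel₀ _ (sub_pos.2 hlt).ne']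

lemma QuadNondeg.mono {γ : ℝ → E3} {U V : Set ℝ} {c₁ c₂ : ℝ} (h : QuadNondeg γ V c₁ c₂)
    (hUV : U ⊆ V) : QuadNondeg γ U c₁ c₂ := fun θ₀ h₀ ↦ by
  obtain ⟨L, h1, h2, h3⟩ := h θ₀ (hUV h₀)
  exact ⟨L, h1, fun θ hθ ↦ h2 θ (hUV hθ),
    fun d hd θ₁ hθ₁ θ₂ hθ₂ ↦ h3 d hd θ₁ (hUV hθ₁) θ₂ (hUV hθ₂)⟩

/-- A curve with nonvanishing torsion determinant is locally quadratically nondegenerate. -/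
lemma exists_quadNondeg {γ : ℝ → E3} (hγ : ContDiff ℝ 2 γ) {p : ℝ}
    (hp : LinearIndependent ℝ ![γ p, deriv γ p, deriv (deriv γ) p]) :
    ∃ ε c₁ c₂ c₃ : ℝ, 0 < ε ∧ 0 < c₁ ∧ 0 < c₂ ∧ 0 < c₃ ∧ QuadNondeg γ (ball p ε) c₁ c₂ ∧
      ∀ θ ∈ ball p ε, ∀ θ' ∈ ball p ε, c₃ * |θ - θ'| ≤ ‖γ θ - γ θ'‖ := by
  have hγ1 : ContDiff ℝ 1 (deriv γ) := by
    have h11 : ContDiff ℝ (1 + 1) γ := hγ.of_le one_add_one_eq_two.le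
    exact (contDiff_succ_iff_deriv.1 h11).2.2
  have hd0 : ∀ θ, HasDerivAt γ (deriv γ θ) θ := fun θ ↦
    (hγ.differentiable (by norm_num) θ).hasDerivAt
  have hd1 : ∀ θ, HasDerivAt (deriv γ) (deriv (deriv γ) θ) θ := fun θ ↦
    (hγ1.differentiable (by norm_num) θ).hasDerivAt
  have hc0 : Continuous γ := hγ.continuous
  have hc1 : Continuous (deriv γ) := hγ1.continuous
  have hc2 : Continuous (deriv (deriv γ)) := hγ1.continuous_deriv le_rfl
  set n : ℝ → E3 := fun θ ↦ cross (γ θ) (deriv γ θ) with hn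
  have hnc : Continuous n := by
    unfold n cross
    fun_prop
  set H : ℝ × ℝ → ℝ := fun q ↦ ⟪n q.1, deriv (deriv γ) q.2⟫ with hH
  have hHc : Continuous H := by unfold H; fun_prop
  have hHp : 0 < |H (p, p)| := abs_pos.2 (inner_cross_ne_zero hp)
  have hp1 : 0 < ‖deriv γ p‖ := norm_pos_iff.2 (by simpa using hp.ne_zero 1)
  have e1 : ∀ᶠ q in nhds (p, p), |H (p, p)| / 2 < |H q| :=
    hHc.abs.continuousAt.eventually (lt_mem_nhds (by linarith))
  have e2 : ∀ᶠ q in nhds (p, p), |H q| < |H (p, p)| + 1 :=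
    hHc.abs.continuousAt.eventually (gt_mem_nhds (by linarith))
  have e3 : ∀ᶠ q in nhds p, ‖n q‖ < ‖n p‖ + 1 :=
    hnc.norm.continuousAt.eventually (gt_mem_nhds (by linarith))
  have e4 : ∀ᶠ q in nhds p, ‖deriv γ p‖ ^ 2 / 2 < ⟪deriv γ p, deriv γ q⟫ := by
    have : Continuous fun q ↦ ⟪deriv γ p, deriv γ q⟫ := by fun_prop
    refine this.continuousAt.eventually (lt_mem_nhds ?_)
    simp only [real_inner_self_eq_norm_sq]
    have := pow_pos hp1 2
    linarith
  obtain ⟨ε₁, hε₁, h12⟩ := Metric.eventually_nhds_iff.1 (e1.and e2)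
  obtain ⟨ε₂, hε₂, h34⟩ := Metric.eventually_nhds_iff.1 (e3.and e4)
  set ε := min ε₁ ε₂ with hε
  have hH1 : ∀ x ∈ ball p ε, ∀ y ∈ ball p ε, |H (p, p)| / 2 < |H (x, y)| ∧
      |H (x, y)| < |H (p, p)| + 1 := fun x hx y hy ↦ h12 (by
    rw [Prod.dist_eq, max_lt_iff]
    exact ⟨lt_of_lt_of_le hx (min_le_left _ _), lt_of_lt_of_le hy (min_le_left _ _)⟩)
  have h34' : ∀ x ∈ ball p ε, ‖n x‖ < ‖n p‖ + 1 ∧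
      ‖deriv γ p‖ ^ 2 / 2 < ⟪deriv γ p, deriv γ x⟫ := fun x hx ↦
    h34 (lt_of_lt_of_le hx (min_le_right _ _))
  have huI : ∀ x ∈ ball p ε, ∀ y ∈ ball p ε, uIcc x y ⊆ ball p ε := fun x hx y hy ↦ by
    rw [← segment_eq_uIcc]
    exact (convex_ball p ε).segment_subset hx hy
  have hn0 := norm_nonneg (n p)
  refine ⟨ε, |H (p, p)| / 2, |H (p, p)| + 1 + (‖n p‖ + 1), ‖deriv γ p‖ / 2, by positivity,
    by positivity, by positivity, by positivity, fun θ₀ hθ₀ ↦ ⟨innerSL ℝ (n θ₀), fun x ↦ ?_, ?_⟩, ?_⟩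
  · rw [innerSL_apply_apply]
    refine (abs_real_inner_le_norm _ _).trans (mul_le_mul_of_nonneg_right ?_ (norm_nonneg _))
    linarith [(h34' θ₀ hθ₀).1]
  · simp only [innerSL_apply_apply]
    have hD0 : ∀ θ, HasDerivAt (fun θ ↦ ⟪n θ₀, γ θ⟫) ⟪n θ₀, deriv γ θ⟫ θ := fun θ ↦ by
      simpa using (hasDerivAt_const θ (n θ₀)).inner ℝ (hd0 θ)
    have hD1 : ∀ θ, HasDerivAt (fun θ ↦ ⟪n θ₀, deriv γ θ⟫) (H (θ₀, θ)) θ := fun θ ↦ by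
      simpa using (hasDerivAt_const θ (n θ₀)).inner ℝ (hd1 θ)
    have hz0 : ⟪n θ₀, γ θ₀⟫ = 0 := by rw [hn, inner_cross]; ring
    have hz1 : ⟪n θ₀, deriv γ θ₀⟫ = 0 := by rw [hn, inner_cross]; ring
    have hf' : ∀ ξ ∈ ball p ε, |H (p, p)| / 2 * |ξ - θ₀| ≤ |⟪n θ₀, deriv γ ξ⟫| ∧
        |⟪n θ₀, deriv γ ξ⟫| ≤ (|H (p, p)| + 1) * |ξ - θ₀| := fun ξ hξ ↦ by
      obtain ⟨ζ, hζ, h⟩ := exists_mem_uIcc_sub_eq hD1 θ₀ ξ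
      rw [hz1, sub_zero] at h
      have := hH1 θ₀ hθ₀ ζ (huI _ hθ₀ _ hξ hζ)
      rw [h, abs_mul]
      exact ⟨mul_le_mul_of_nonneg_right this.1.le (abs_nonneg _),
        mul_le_mul_of_nonneg_right this.2.le (abs_nonneg _)⟩
    refine ⟨fun θ hθ ↦ ?_, fun d hd θ₁ hθ₁ θ₂ hθ₂ hsep ↦ ?_⟩
    · obtain ⟨ξ, hξ, h⟩ := exists_mem_uIcc_sub_eq hD0 θ₀ θ
      rw [hz0, sub_zero] at h
      rw [h, abs_mul, ← sq_abs, sq, ← mul_assoc]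
      refine mul_le_mul_of_nonneg_right ?_ (abs_nonneg _)
      refine (hf' ξ (huI _ hθ₀ _ hθ hξ)).2.trans (mul_le_mul (by linarith) ?_ (abs_nonneg _)
        (by positivity))
      exact abs_sub_left_of_mem_uIcc hξ
    · obtain ⟨ξ, hξ, h⟩ := exists_mem_uIcc_sub_eq hD0 θ₂ θ₁
      rw [h, abs_mul]
      refine mul_le_mul_of_nonneg_right ?_ (abs_nonneg _)
      refine le_trans (mul_le_mul_of_nonneg_left ?_ (by positivity))
        (hf' ξ (huI _ hθ₂ _ hθ₁ hξ)).1
      rw [mem_uIcc] at hξ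
      rw [le_abs]
      rcases hsep with h5 | h5
      · left
        rcases hξ with h6 | h6 <;> linarith
      · right
        rcases hξ with h6 | h6 <;> linarith
  · intro θ hθ θ' hθ'
    have hD : ∀ θ, HasDerivAt (fun θ ↦ ⟪deriv γ p, γ θ⟫) ⟪deriv γ p, deriv γ θ⟫ θ := fun θ ↦ by
      simpa using (hasDerivAt_const θ (deriv γ p)).inner ℝ (hd0 θ)
    obtain ⟨ξ, hξ, h⟩ := exists_mem_uIcc_sub_eq hD θ' θ
    have h7 := (h34' ξ (huI _ hθ' _ hθ hξ)).2
    have h8 := abs_real_inner_le_norm (deriv γ p) (γ θ - γ θ')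
    rw [inner_sub_right, h, abs_mul] at h8
    have h9 := h7.le.trans (le_abs_self _)
    have h10 : ‖deriv γ p‖ ^ 2 / 2 * |θ - θ'| ≤ ‖deriv γ p‖ * ‖γ θ - γ θ'‖ :=
      (mul_le_mul_of_nonneg_right h9 (abs_nonneg _)).trans h8
    refine le_of_mul_le_mul_left ?_ hp1
    linarith

/-! ### Density of finite measures with respect to Hausdorff measure -/

/-- The set where the upper `t`-density of `μ` is infinite. -/
def infiniteDensity (μ : Measure E3) (t : ℝ) : Set E3 :=
  {x | ∀ k : ℕ, ∃ r, 0 < r ∧ r ≤ 1 ∧ ENNReal.ofReal (k * r ^ t) < μ (closedBall x r)}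

lemma hausdorffMeasure_infiniteDensity (μ : Measure E3) [IsFiniteMeasure μ] {t : ℝ} (ht : 0 < t) :
    μH[t] (infiniteDensity μ t) = 0 := by
  set M := μ.real univ with hM
  have hM0 : 0 ≤ M := measureReal_nonneg
  have hcov : ∀ k : ℕ, ∃ (u : Set E3) (r : E3 → ℝ), u.Countable ∧
      (∀ x ∈ u, 0 < r x ∧ ENNReal.ofReal ((k + 1 : ℕ) * r x ^ t) < μ (closedBall x (r x))) ∧
      u.PairwiseDisjoint (fun x ↦ closedBall x (r x)) ∧
      infiniteDensity μ t ⊆ ⋃ x : u, closedBall x.1 (5 * r x) := by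
    intro k
    have h0 : ∀ x, ∃ r, x ∈ infiniteDensity μ t → 0 < r ∧ r ≤ 1 ∧
        ENNReal.ofReal ((k + 1 : ℕ) * r ^ t) < μ (closedBall x r) := fun x ↦ by
      by_cases hx : x ∈ infiniteDensity μ t
      · obtain ⟨r, hr⟩ := hx (k + 1)
        exact ⟨r, fun _ ↦ hr⟩
      · exact ⟨0, fun h ↦ absurd h hx⟩
    choose r hr using h0
    obtain ⟨u, hu, hdis, hc⟩ := Vitali.exists_disjoint_subfamily_covering_enlargement_closedBall
      (infiniteDensity μ t) id r 1 (fun x hx ↦ (hr x hx).2.1) 5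
      (by norm_num)
    refine ⟨u, r, ?_, fun x hx ↦ ⟨(hr x (hu hx)).1, (hr x (hu hx)).2.2⟩, hdis, fun x hx ↦ ?_⟩
    · have h1 := Measure.countable_meas_pos_of_disjoint_iUnion (μ := μ)
        (As := fun x : u ↦ closedBall x.1 (r x)) (fun x ↦ measurableSet_closedBall)
        fun x y hxy ↦ hdis x.2 y.2 fun h ↦ hxy (Subtype.ext h)
      have h2 : {x : u | 0 < μ (closedBall x.1 (r x))} = univ :=
        eq_univ_of_forall fun x ↦ bot_le.trans_lt (hr x.1 (hu x.2)).2.2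
      rw [h2, countable_univ_iff] at h1
      exact h1
    · obtain ⟨y, hy, hxy⟩ := hc x hx
      exact mem_iUnion.2 ⟨⟨y, hy⟩, hxy (mem_closedBall_self (hr x hx).1.le)⟩
  choose u r hcount hr hdis hsub using hcov
  have : ∀ k, Countable (u k) := fun k ↦ (hcount k).to_subtype
  have hfinite : ∀ S, μ S ≠ ∞ := fun S ↦ measure_ne_top _ _
  have hpt : ∀ k, ∀ x ∈ u k, r k x ^ t ≤ μ.real (closedBall x (r k x)) / (k + 1) := fun k x hx ↦ by
    rw [le_div_iff₀ (by positivity), mul_comm]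
    have := (ENNReal.ofReal_le_iff_le_toReal (hfinite _)).1 (hr k x hx).2.le
    push_cast at this
    exact this
  have hdiv : ∀ c : ℝ, Filter.Tendsto (fun k : ℕ ↦ c / ((k : ℝ) + 1)) .atTop (nhds 0) := fun c ↦ by
    have := (tendsto_one_div_add_atTop_nhds_zero_nat (𝕜 := ℝ)).const_mul c
    simpa [div_eq_mul_inv] using this
  have hdiam : ∀ k, ∀ x ∈ u k, ediam (closedBall x (5 * r k x)) ≤ ENNReal.ofReal (10 * r k x) :=
    fun k x hx ↦ by
      refine ediam_le_of_forall_dist_le fun y hy z hz ↦ ?_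
      have := dist_triangle_right y z x
      have h1 := mem_closedBall.1 hy
      have h2 := mem_closedBall.1 hz
      linarith
  have hmain := Measure.hausdorffMeasure_le_liminf_tsum t (infiniteDensity μ t) (l := .atTop)
    (fun k : ℕ ↦ ENNReal.ofReal (10 * (M / (k + 1)) ^ (1 / t))) ?_
    (fun k (x : u k) ↦ closedBall x.1 (5 * r k x)) (.of_forall fun k x ↦ ?_) (.of_forall hsub)
  · refine le_antisymm (hmain.trans ?_) bot_le
    have hle : ∀ k : ℕ, ∑' x : u k, ediam (closedBall x.1 (5 * r k x)) ^ t ≤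
        ENNReal.ofReal (10 ^ t / (k + 1)) * μ univ := by
      intro k
      calc ∑' x : u k, ediam (closedBall x.1 (5 * r k x)) ^ t
          ≤ ∑' x : u k, ENNReal.ofReal (10 ^ t / (k + 1)) * μ (closedBall x.1 (r k x)) := by
            refine ENNReal.tsum_le_tsum fun x ↦ ?_
            have hrx := (hr k x x.2).1
            refine (ENNReal.rpow_le_rpow (hdiam k x x.2) ht.le).trans ?_
            rw [ENNReal.ofReal_rpow_of_nonneg (by positivity) ht.le,
              ← ENNReal.ofReal_toReal (hfinite (closedBall x.1 (r k x))),
              ← ENNReal.ofReal_mul (by positivity)]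
            refine ENNReal.ofReal_le_ofReal ?_
            rw [Real.mul_rpow (by norm_num) hrx.le]
            have := mul_le_mul_of_nonneg_left (hpt k x x.2)
              (by positivity : (0 : ℝ) ≤ 10 ^ t)
            rwa [mul_div_assoc', mul_div_right_comm] at this
        _ ≤ _ := by
            rw [ENNReal.tsum_mul_left]
            gcongr
            exact (tsum_meas_le_meas_iUnion_of_disjoint μ
              (As := fun x : u k ↦ closedBall x.1 (r k x)) (fun x ↦ measurableSet_closedBall)
              fun x y hxy ↦ hdis k x.2 y.2 fun h ↦ hxy (Subtype.ext h)).trans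
                (measure_mono (subset_univ _))
    have h0 : Filter.Tendsto (fun k : ℕ ↦ ENNReal.ofReal (10 ^ t / ((k : ℝ) + 1)) * μ univ) .atTop
        (nhds 0) := by
      have := ENNReal.Tendsto.mul_const (ENNReal.tendsto_ofReal (hdiv (10 ^ t)))
        (.inr (hfinite univ))
      simpa using this
    exact (Filter.liminf_le_liminf (.of_forall hle)).trans_eq h0.liminf_eq
  · have h1 := ((hdiv M).rpow_const (p := 1 / t) (.inr (by positivity))).const_mul 10
    rw [Real.zero_rpow (by positivity), mul_zero] at h1
    simpa using ENNReal.tendsto_ofReal h1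
  · refine (hdiam k x x.2).trans (ENNReal.ofReal_le_ofReal ?_)
    have hrx := (hr k x x.2).1
    gcongr
    rw [one_div, Real.le_rpow_inv_iff_of_pos hrx.le (by positivity) ht]
    refine (hpt k x x.2).trans ?_
    gcongr
    exact measureReal_mono (subset_univ _)

/-- Points at which `μ` has `t`-density at most `k` at all scales up to one. -/
def boundedDensity (μ : Measure E3) (t : ℝ) (k : ℕ) : Set E3 :=
  {x | ∀ r, 0 < r → r ≤ 1 → μ (closedBall x r) ≤ ENNReal.ofReal (k * r ^ t)}

lemma monotone_boundedDensity (μ : Measure E3) (t : ℝ) : Monotone (boundedDensity μ t) :=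
  fun k l hkl x hx r hr hr1 ↦ (hx r hr hr1).trans (ENNReal.ofReal_le_ofReal (by gcongr))

/-- A bounded piece of `μ` of bounded density. -/
def densityPiece (μ : Measure E3) (t : ℝ) (k : ℕ) : Measure E3 :=
  μ.restrict (boundedDensity μ t k ∩ ball 0 k)

instance (μ : Measure E3) [IsFiniteMeasure μ] (t : ℝ) (k : ℕ) :
    IsFiniteMeasure (densityPiece μ t k) := by
  unfold densityPiece
  infer_instance

lemma densityPiece_compl_ball (μ : Measure E3) (t : ℝ) (k : ℕ) :
    densityPiece μ t k (ball 0 k)ᶜ = 0 := by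
  rw [densityPiece, Measure.restrict_apply measurableSet_ball.compl]
  convert measure_empty (μ := μ)
  ext x
  simp
  tauto

lemma densityPiece_closedBall_le (μ : Measure E3) [IsFiniteMeasure μ] {t : ℝ} (ht : 0 < t) (k : ℕ)
    (y : E3) {ρ : ℝ} (hρ : 0 < ρ) : densityPiece μ t k (closedBall y ρ) ≤
      ENNReal.ofReal ((k + μ.real univ + 1) * 2 ^ t * ρ ^ t) := by
  have hM : 0 ≤ μ.real univ := measureReal_nonneg
  rw [densityPiece, Measure.restrict_apply measurableSet_closedBall, mul_assoc,
    ← Real.mul_rpow (by norm_num) hρ.le]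
  by_cases hρ2 : 2 * ρ ≤ 1
  · rcases (closedBall y ρ ∩ (boundedDensity μ t k ∩ ball 0 k)).eq_empty_or_nonempty with h | ⟨x, hx⟩
    · simp [h]
    calc μ (closedBall y ρ ∩ (boundedDensity μ t k ∩ ball 0 k)) ≤ μ (closedBall x (2 * ρ)) := by
          refine measure_mono fun z hz ↦ ?_
          have h1 := mem_closedBall.1 hz.1
          have h2 := mem_closedBall.1 hx.1
          have := dist_triangle_right z x y
          exact mem_closedBall.2 (by linarith)
      _ ≤ ENNReal.ofReal (k * (2 * ρ) ^ t) := hx.2.1 _ (by positivity) hρ2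
      _ ≤ _ := by
          refine ENNReal.ofReal_le_ofReal (mul_le_mul_of_nonneg_right ?_ (by positivity))
          linarith
  · refine (measure_mono (subset_univ _)).trans ?_
    rw [← ENNReal.ofReal_toReal (measure_ne_top μ univ)]
    refine ENNReal.ofReal_le_ofReal ?_
    change μ.real univ ≤ _
    have h1 : 1 ≤ (2 * ρ) ^ t := Real.one_le_rpow (not_le.1 hρ2).le ht.le
    have hk : (0 : ℝ) ≤ k := by positivity
    nlinarith

lemma exists_densityPiece_pos {t : ℝ} (ht : 0 < t) {A B : Set E3} (hA : μH[t] A < ∞) (hBA : B ⊆ A)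
    (hB : 0 < μH[t] B) : ∃ k, 0 < densityPiece ((μH[t]).restrict A) t k B := by
  set μ := (μH[t] : Measure E3).restrict A with hμ
  have : IsFiniteMeasure μ := ⟨by simpa [hμ] using hA⟩
  by_contra! h
  refine hB.ne' (measure_mono_null (t := infiniteDensity μ t ∪
    ⋃ k, B ∩ (boundedDensity μ t k ∩ ball 0 k)) (fun x hx ↦ ?_) (measure_union_null
      (hausdorffMeasure_infiniteDensity μ ht) (measure_iUnion_null fun k ↦ ?_)))
  · by_cases hxi : x ∈ infiniteDensity μ t
    · exact .inl hxi
    right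
    simp only [infiniteDensity, mem_ofPred_eq] at hxi
    push Not at hxi
    obtain ⟨k, hk⟩ := hxi
    obtain ⟨n, hn⟩ := exists_nat_gt ‖x‖
    refine mem_iUnion.2 ⟨max k n, hx, monotone_boundedDensity μ t (le_max_left _ _) hk, ?_⟩
    rw [mem_ball_zero_iff]
    refine hn.trans_le ?_
    exact_mod_cast le_max_right k n
  · refine le_antisymm ?_ bot_le
    calc μH[t] (B ∩ (boundedDensity μ t k ∩ ball 0 k))
        = μ (B ∩ (boundedDensity μ t k ∩ ball 0 k)) :=
          (Measure.restrict_eq_self _ (inter_subset_left.trans hBA)).symm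
      _ ≤ densityPiece μ t k B := Measure.le_restrict_apply _ _
      _ ≤ 0 := h k

/-- Directions in which some bounded piece of `μ` has a singular projection. -/
def singularDirections (γ : ℝ → E3) (a b : ℝ) (μ : Measure E3) (t : ℝ) : Set ℝ :=
  ⋃ k, {θ ∈ Icc a b | ¬ (densityPiece μ t k).map (fun x ↦ ⟪x, γ θ⟫) ≪ volume}

lemma hausdorffMeasure_singularDirections {a b : ℝ} {γ : ℝ → E3} (hγ : ContDiff ℝ 2 γ)
    (hsphere : ∀ θ ∈ Icc a b, ‖γ θ‖ = 1)
    (hnondeg : ∀ θ ∈ Icc a b, LinearIndependent ℝ ![γ θ, deriv γ θ, deriv (deriv γ) θ])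
    (μ : Measure E3) [IsFiniteMeasure μ] {t σ : ℝ} (ht : 0 < t) (hσ : 0 < σ)
    (hσt : (3 - t) / 2 < σ) : μH[σ] (singularDirections γ a b μ t) = 0 := by
  refine measure_iUnion_null fun k ↦ measure_null_of_locally_null _ fun p hp ↦ ?_
  obtain ⟨ε, c₁, c₂, c₃, hε, hc₁, hc₂, hc₃, hQ, hlow⟩ := exists_quadNondeg hγ (hnondeg p hp.1)
  obtain ⟨m, hm, ⟨r, hr, hband⟩, hmR⟩ := exists_bandLimited (k + 1)
  have hsub : ball p ε ∩ Icc a b ⊆ ball p ε := inter_subset_left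
  have hM : 0 ≤ μ.real univ := measureReal_nonneg
  refine ⟨{θ ∈ ball p ε ∩ Icc a b | ¬ (densityPiece μ t k).map (fun x ↦ ⟪x, γ θ⟫) ≪ volume}, ?_,
    hband.hausdorffMeasure_not_absolutelyContinuous hr (hQ.mono hsub) hc₁ hc₂
      (fun θ hθ ↦ hsphere θ hθ.2) hc₃ (fun θ hθ θ' hθ' ↦ hlow θ hθ.1 θ' hθ'.1) _
      (by positivity : 0 < ((k : ℝ) + μ.real univ + 1) * 2 ^ t)
      (fun y ρ hρ _ ↦ densityPiece_closedBall_le μ ht k y hρ)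
      (densityPiece_compl_ball μ t k) hmR hσ hσt⟩
  filter_upwards [self_mem_nhdsWithin, mem_nhdsWithin_of_mem_nhds (ball_mem_nhds p hε)]
    with θ h1 h2
  exact ⟨⟨h2, h1.1⟩, h1.2⟩

lemma hausdorffMeasure_lineProj_image {γ : ℝ → E3} {θ : ℝ} (hθ : ‖γ θ‖ = 1) (B : Set E3) :
    μH[1] (lineProj γ θ '' B) = volume ((fun x ↦ ⟪x, γ θ⟫) '' B) := by
  have hiso : Isometry fun s : ℝ ↦ s • γ θ := Isometry.of_dist_eq fun s s' ↦ by
    rw [dist_eq_norm, ← sub_smul, norm_smul, hθ, mul_one, dist_eq_norm]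
  have himage : lineProj γ θ '' B = (fun s : ℝ ↦ s • γ θ) '' ((fun x ↦ ⟪x, γ θ⟫) '' B) := by
    rw [image_image]
    rfl
  rw [himage, hiso.hausdorffMeasure_image (.inl zero_le_one), hausdorffMeasure_real]

/-- A set which is null for all `σ`-dimensional measures with `σ > s` has a Borel hull of dimension
at most `s`. -/
lemma exists_measurableSet_dimH_le {X : Set ℝ} {s : ℝ}
    (hX : ∀ σ, 0 < σ → s < σ → μH[σ] X = 0) :
    ∃ E, MeasurableSet E ∧ X ⊆ E ∧ dimH E ≤ ENNReal.ofReal s := by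
  set σ : ℕ → ℝ := fun n ↦ max s 0 + 1 / (n + 1) with hσ
  have hσ0 : ∀ n, 0 < σ n := fun n ↦ by positivity
  have hσs : ∀ n, s < σ n := fun n ↦ by
    have h1 := le_max_left s 0
    have h2 : (0 : ℝ) < 1 / (n + 1) := by positivity
    rw [hσ]
    linarith
  refine ⟨⋂ n, toMeasurable μH[σ n] X, .iInter fun n ↦ measurableSet_toMeasurable _ _,
    subset_iInter fun n ↦ subset_toMeasurable _ _, ?_⟩
  have hle : ∀ n, dimH (⋂ n, toMeasurable μH[σ n] X) ≤ ENNReal.ofReal (σ n) := fun n ↦ by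
    refine (dimH_mono (iInter_subset _ n)).trans ?_
    refine dimH_le_of_hausdorffMeasure_ne_top ?_
    rw [Real.coe_toNNReal _ (hσ0 n).le, measure_toMeasurable, hX _ (hσ0 n) (hσs n)]
    exact ENNReal.zero_ne_top
  have hlim : Filter.Tendsto (fun n ↦ ENNReal.ofReal (σ n)) .atTop
      (nhds (ENNReal.ofReal (max s 0))) := by
    refine ENNReal.tendsto_ofReal ?_
    simpa [hσ] using (tendsto_one_div_add_atTop_nhds_zero_nat (𝕜 := ℝ)).const_add (max s 0)
  refine (ge_of_tendsto' hlim hle).trans_eq ?_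
  rw [ENNReal.ofReal_max, ENNReal.ofReal_zero, max_eq_left zero_le]

/-!
STATEMENT 6: if `t > 1` and `A ⊆ ℝ³` is `H^t`-measurable with `0 < H^t(A) < ∞`,
then there is a Borel set `E ⊆ I` with `dim E ≤ (3-t)/2` such that for every
`H^t`-measurable `B ⊆ A` with `H^t(B) > 0` and every `θ ∈ I \ E`, the
projection `ρ_θ(B)` has positive length; the same `E` works for all such `B`.
-/

theorem uniform_exceptional_set_for_positive_measure_subsets
    -- the compact interval `I = [a, b]`
    (a b : ℝ) (hab : a ≤ b)
    -- `γ : I → S²` is a `C²` curve with `det(γ, γ', γ'') ≠ 0` on `I`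
    (γ : ℝ → E3) (hγC2 : ContDiff ℝ 2 γ)
    (hsphere : ∀ θ ∈ Icc a b, ‖γ θ‖ = 1)
    (hnondeg : ∀ θ ∈ Icc a b,
      LinearIndependent ℝ ![γ θ, deriv γ θ, deriv (deriv γ) θ])
    (t : ℝ) (ht : 1 < t)
    (A : Set E3) (hAmeas : NullMeasurableSet A μH[t])
    (hA0 : 0 < μH[t] A) (hAfin : μH[t] A < ∞) :
    ∃ E : Set ℝ, MeasurableSet E ∧ E ⊆ Icc a b ∧
      dimH E ≤ ENNReal.ofReal ((3 - t) / 2) ∧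
      ∀ B : Set E3, B ⊆ A → NullMeasurableSet B μH[t] → 0 < μH[t] B →
        ∀ θ ∈ Icc a b \ E, 0 < μH[1] (lineProj γ θ '' B) := by
  have ht0 : 0 < t := zero_lt_one.trans ht
  set μ := (μH[t] : Measure E3).restrict A with hμ
  have : IsFiniteMeasure μ := ⟨by simpa [hμ] using hAfin⟩
  obtain ⟨E, hEm, hE, hdim⟩ := exists_measurableSet_dimH_le fun σ hσ hσt ↦
    hausdorffMeasure_singularDirections hγC2 hsphere hnondeg μ ht0 hσ hσt
  refine ⟨Icc a b ∩ E, measurableSet_Icc.inter hEm, inter_subset_left,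
    (dimH_mono inter_subset_right).trans hdim, fun B hBA _ hB θ hθ ↦ ?_⟩
  obtain ⟨k, hk⟩ := exists_densityPiece_pos ht0 hAfin hBA hB
  rw [hausdorffMeasure_lineProj_image (hsphere θ hθ.1), pos_iff_ne_zero]
  intro h0
  have hac : (densityPiece μ t k).map (fun x ↦ ⟪x, γ θ⟫) ≪ volume := by
    by_contra h
    exact hθ.2 ⟨hθ.1, hE (mem_iUnion.2 ⟨k, hθ.1, h⟩)⟩
  refine hk.ne' (le_antisymm ?_ bot_le)
  exact (Measure.le_map_apply_image (by fun_prop) B).trans_eq (hac h0)
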